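/- There exists an absolute constant C > 0 such that for all integers t, k ≥ 1, every graph with average degree at least C·(tk)² contains t pairwise vertex-disjoint, pairwise isomorphic balanced subdivisions of the complete graph K_k. In particular, average degree O(k²) forces two vertex-disjoint isomorphic K_k-subdivisions, confirming Verstraëte's conjecture. -/

import Mathlib

open scoped BigOperators

/-- The average degree of a graph `G`: `(1/|G|) * sum of degrees`. -/
noncomputable def avgDeg {V : Type*} (G : SimpleGraph V) : Real :=
  (finsum fun v : V => ((G.neighborSet v).ncard : Real)) / (Nat.card V : Real)

/-- `S` is the vertex set of a copy of `TK_t^(l)` in `G`: a balanced subdivision of the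
complete graph `K_t` in which each edge is replaced by a path with `l` internal vertices
(i.e. of length `l + 1`); the paths are pairwise internally vertex disjoint. -/
def IsTK {V : Type*} (G : SimpleGraph V) (t l : Nat) (S : Set V) : Prop :=
  ∃ b : Fin t → V, Function.Injective b ∧
    ∃ P : ∀ i j : Fin t, i < j → G.Walk (b i) (b j),
      (∀ i j (h : i < j), (P i j h).IsPath) ∧
      (∀ i j (h : i < j), (P i j h).length = l + 1) ∧
      (∀ i j (h : i < j), ∀ i' j' (h' : i' < j'), (i, j) ≠ (i', j') →
        ∀ v : V, v ∈ (P i j h).support → v ∈ (P i' j' h').support →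
          (v = b i ∨ v = b j) ∧ (v = b i' ∨ v = b j')) ∧
      S = {v : V | ∃ (i j : Fin t) (h : i < j), v ∈ (P i j h).support}

/-- `G` contains a copy of `TK_t^(l)`. -/
def HasTK {V : Type*} (G : SimpleGraph V) (t l : Nat) : Prop :=
  ∃ S : Set V, IsTK G t l S


set_option linter.unusedSectionVars false

namespace BS

open Finset

section
open Classical

variable {V : Type} [Fintype V]

/-- `H` with all vertices of `W` isolated. -/
def av (H : SimpleGraph V) (W : Finset V) : SimpleGraph V where
  Adj x y := H.Adj x y ∧ x ∉ W ∧ y ∉ W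
  symm := ⟨fun _ _ h => ⟨h.1.symm, h.2.2, h.2.1⟩⟩
  loopless := ⟨fun _ h => h.1.ne rfl⟩

/-- The ball of radius `t` around `X`. -/
noncomputable def Bl (A : SimpleGraph V) (X : Finset V) (t : ℕ) : Finset V :=
  univ.filter (fun y => ∃ x ∈ X, ∃ p : A.Walk x y, p.length ≤ t)

/-- The external neighbourhood of `X`. -/
noncomputable def nbr (H : SimpleGraph V) (X : Finset V) : Finset V :=
  univ.filter (fun y => y ∉ X ∧ ∃ x ∈ X, H.Adj x y)

lemma av_adj {H : SimpleGraph V} {W : Finset V} {x y : V} :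
    (av H W).Adj x y ↔ H.Adj x y ∧ x ∉ W ∧ y ∉ W := Iff.rfl

lemma av_le (H : SimpleGraph V) (W : Finset V) : av H W ≤ H := fun _ _ h => h.1

lemma av_mono {H : SimpleGraph V} {W W' : Finset V} (h : W ⊆ W') : av H W' ≤ av H W :=
  fun _ _ hh => ⟨hh.1, fun h1 => hh.2.1 (h h1), fun h1 => hh.2.2 (h h1)⟩

lemma av_empty (H : SimpleGraph V) : av H ∅ = H := by
  ext x y; simp [av_adj]

lemma mem_Bl {A : SimpleGraph V} {X : Finset V} {t : ℕ} {y : V} :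
    y ∈ Bl A X t ↔ ∃ x ∈ X, ∃ p : A.Walk x y, p.length ≤ t := by simp [Bl]

lemma mem_Bl_singleton {A : SimpleGraph V} {x : V} {t : ℕ} {y : V} :
    y ∈ Bl A {x} t ↔ ∃ p : A.Walk x y, p.length ≤ t := by simp [Bl]

lemma mem_nbr {H : SimpleGraph V} {X : Finset V} {y : V} :
    y ∈ nbr H X ↔ y ∉ X ∧ ∃ x ∈ X, H.Adj x y := by simp [nbr]

lemma subset_Bl (A : SimpleGraph V) (X : Finset V) (t : ℕ) : X ⊆ Bl A X t :=
  fun x hx => mem_Bl.2 ⟨x, hx, SimpleGraph.Walk.nil, by simp⟩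

lemma Bl_mono {A A' : SimpleGraph V} {X X' : Finset V} {t t' : ℕ} (hA : A ≤ A') (hX : X ⊆ X')
    (ht : t ≤ t') : Bl A X t ⊆ Bl A' X' t' := by
  intro y hy
  obtain ⟨x, hx, p, hp⟩ := mem_Bl.1 hy
  exact mem_Bl.2 ⟨x, hX hx, p.mapLe hA, by simpa using hp.trans ht⟩

lemma Bl_zero (A : SimpleGraph V) (X : Finset V) : Bl A X 0 = X := by
  apply Subset.antisymm _ (subset_Bl _ _ _)
  intro y hy
  obtain ⟨x, hx, p, hp⟩ := mem_Bl.1 hy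
  have := SimpleGraph.Walk.eq_of_length_eq_zero (Nat.le_zero.1 hp)
  exact this ▸ hx

lemma Bl_step {A : SimpleGraph V} {X : Finset V} {t : ℕ} {x y : V} (hx : x ∈ Bl A X t)
    (h : A.Adj x y) : y ∈ Bl A X (t + 1) := by
  obtain ⟨z, hz, p, hp⟩ := mem_Bl.1 hx
  exact mem_Bl.2 ⟨z, hz, p.concat h, by simpa using hp⟩

lemma Bl_trans {A : SimpleGraph V} {X : Finset V} {s t : ℕ} {x y : V} (hx : x ∈ Bl A X s)
    (hy : y ∈ Bl A {x} t) : y ∈ Bl A X (s + t) := by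
  obtain ⟨z, hz, p, hp⟩ := mem_Bl.1 hx
  obtain ⟨q, hq⟩ := mem_Bl_singleton.1 hy
  exact mem_Bl.2 ⟨z, hz, p.append q, by rw [SimpleGraph.Walk.length_append]; omega⟩

lemma Bl_symm {A : SimpleGraph V} {t : ℕ} {x y : V} (hx : x ∈ Bl A {y} t) :
    y ∈ Bl A {x} t := by
  obtain ⟨p, hp⟩ := mem_Bl_singleton.1 hx
  exact mem_Bl_singleton.2 ⟨p.reverse, by simpa using hp⟩

lemma walk_av {H : SimpleGraph V} {W : Finset V} {x y : V} (p : (av H W).Walk x y)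
    (hx : x ∉ W) : ∀ v ∈ p.support, v ∉ W := by
  induction p with
  | nil => simpa using hx
  | cons h p ih =>
    intro v hv
    rw [SimpleGraph.Walk.support_cons, List.mem_cons] at hv
    rcases hv with rfl | hv
    · exact hx
    · exact ih h.2.2 v hv

lemma Bl_disj {H : SimpleGraph V} {W X : Finset V} (t : ℕ) (h : Disjoint X W) :
    Disjoint (Bl (av H W) X t) W := by
  rw [Finset.disjoint_left] at h ⊢
  intro y hy
  obtain ⟨x, hx, p, hp⟩ := mem_Bl.1 hy
  exact walk_av p (h hx) y p.end_mem_support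

lemma nbr_Bl_subset {H : SimpleGraph V} {W X : Finset V} (t : ℕ) (h : Disjoint X W) :
    Bl (av H W) X t ∪ nbr H (Bl (av H W) X t) ⊆ Bl (av H W) X (t + 1) ∪ W := by
  intro y hy
  rcases mem_union.1 hy with hy | hy
  · exact mem_union_left _ (Bl_mono le_rfl subset_rfl (Nat.le_succ t) hy)
  · obtain ⟨hy1, x, hx, hxy⟩ := mem_nbr.1 hy
    by_cases hw : y ∈ W
    · exact mem_union_right _ hw
    · refine mem_union_left _ (Bl_step hx ⟨hxy, ?_, hw⟩)
      exact Finset.disjoint_left.1 (Bl_disj t h) hx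

lemma nbr_disj (H : SimpleGraph V) (X : Finset V) : Disjoint X (nbr H X) := by
  rw [Finset.disjoint_left]; intro x hx h; exact (mem_nbr.1 h).1 hx

lemma Bl_geod {A : SimpleGraph V} {t : ℕ} {x y : V} (h : y ∈ Bl A {x} t) :
    ∃ p : A.Walk x y, p.IsPath ∧ p.length = A.dist x y ∧ p.length ≤ t := by
  obtain ⟨q, hq⟩ := mem_Bl_singleton.1 h
  obtain ⟨p, hp, hl⟩ := q.reachable.exists_path_of_dist
  exact ⟨p, hp, hl, hl.trans_le ((SimpleGraph.dist_le q).trans hq)⟩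

/-- There is a path of length `n` inside `I`. -/
def PathIn (G : SimpleGraph V) (u v : V) (n : ℕ) (I : Finset V) : Prop :=
  ∃ p : G.Walk u v, p.IsPath ∧ p.length = n ∧ ∀ x ∈ p.support, x ∈ I

lemma PathIn.mono {G G' : SimpleGraph V} {u v : V} {n : ℕ} {I J : Finset V}
    (h : PathIn G u v n I) (hG : G ≤ G') (hIJ : I ⊆ J) : PathIn G' u v n J := by
  obtain ⟨p, hp, hl, hs⟩ := h
  refine ⟨p.mapLe hG, (SimpleGraph.Walk.isPath_mapLe hG).2 hp, by simpa using hl, ?_⟩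
  intro x hx
  exact hIJ (hs x (by simpa using hx))

lemma PathIn.symm {G : SimpleGraph V} {u v : V} {n : ℕ} {I : Finset V}
    (h : PathIn G u v n I) : PathIn G v u n I := by
  obtain ⟨p, hp, hl, hs⟩ := h
  exact ⟨p.reverse, hp.reverse, by simpa using hl, by simpa using hs⟩

lemma PathIn.left {G : SimpleGraph V} {u v : V} {n : ℕ} {I : Finset V}
    (h : PathIn G u v n I) : u ∈ I := by
  obtain ⟨p, hp, hl, hs⟩ := h
  exact hs _ p.start_mem_support

lemma PathIn.right {G : SimpleGraph V} {u v : V} {n : ℕ} {I : Finset V}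
    (h : PathIn G u v n I) : v ∈ I := h.symm.left

lemma PathIn.trans {G : SimpleGraph V} {u v w : V} {n m : ℕ} {I J : Finset V}
    (h : PathIn G u v n I) (h' : PathIn G v w m J) (hIJ : ∀ x ∈ I, x ∈ J → x = v) :
    PathIn G u w (n + m) (I ∪ J) := by
  obtain ⟨p, hp, hl, hs⟩ := h
  obtain ⟨q, hq, hl', hs'⟩ := h'
  refine ⟨p.append q, ?_, by simp [hl, hl'], ?_⟩
  · rw [SimpleGraph.Walk.isPath_def, SimpleGraph.Walk.support_append, List.nodup_append']
    refine ⟨hp.support_nodup, hq.support_nodup.tail, ?_⟩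
    intro x hx hx'
    have h1 := hIJ x (hs x hx) (hs' x (List.mem_of_mem_tail hx'))
    subst h1
    have := hq.support_nodup
    rw [← SimpleGraph.Walk.cons_tail_support, List.nodup_cons] at this
    exact this.1 hx'
  · intro x hx
    rw [SimpleGraph.Walk.mem_support_append_iff] at hx
    rcases hx with hx | hx
    · exact mem_union_left _ (hs x hx)
    · exact mem_union_right _ (hs' x hx)

/-- Conversion lemma. -/
lemma hasTK_of {G : SimpleGraph V} {k l : ℕ} (b : Fin k → V) (hb : Function.Injective b)
    (I : Fin k × Fin k → Finset V)
    (hI : ∀ i j, i < j → ∀ m, b m ∉ I (i, j))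
    (hd : ∀ i j, i < j → ∀ i' j', i' < j' → (i, j) ≠ (i', j') → Disjoint (I (i, j)) (I (i', j')))
    (hp : ∀ i j, i < j → PathIn G (b i) (b j) (l + 1) (insert (b i) (insert (b j) (I (i, j))))) :
    HasTK G k l := by
  choose P hP1 hP2 hP3 using hp
  refine ⟨_, b, hb, P, hP1, hP2, ?_, rfl⟩
  intro i j h i' j' h' hne v hv hv'
  have h1 := hP3 i j h v hv
  have h2 := hP3 i' j' h' v hv'
  simp only [mem_insert] at h1 h2
  have h3 := Finset.disjoint_left.1 (hd i j h i' j' h' hne)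
  constructor
  · by_contra hcon
    push Not at hcon
    have h4 : v ∈ I (i, j) := by tauto
    rcases h2 with rfl | rfl | h2
    · exact hI i j h _ h4
    · exact hI i j h _ h4
    · exact h3 h4 h2
  · by_contra hcon
    push Not at hcon
    have h4 : v ∈ I (i', j') := by tauto
    rcases h1 with rfl | rfl | h1
    · exact hI i' j' h' _ h4
    · exact hI i' j' h' _ h4
    · exact h3 h1 h4

lemma greedy {G : SimpleGraph V} {k l : ℕ} (b : Fin k → V) (hb : Function.Injective b)
    (Inv : Finset (Fin k × Fin k) → Finset V → Prop) (h0 : Inv ∅ ∅)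
    (hstep : ∀ Q U, Inv Q U → ∀ i j : Fin k, i < j → (i, j) ∉ Q →
      ∃ J : Finset V, Disjoint J U ∧ (∀ m, b m ∉ J) ∧
        PathIn G (b i) (b j) (l + 1) (insert (b i) (insert (b j) J)) ∧
        Inv (insert (i, j) Q) (U ∪ J)) : HasTK G k l := by
  have key : ∀ Q : Finset (Fin k × Fin k), (∀ p ∈ Q, p.1 < p.2) →
      ∃ I : Fin k × Fin k → Finset V, Inv Q (Q.biUnion I) ∧
        (∀ p ∈ Q, ∀ m, b m ∉ I p) ∧
        (∀ p ∈ Q, ∀ p' ∈ Q, p ≠ p' → Disjoint (I p) (I p')) ∧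
        (∀ p ∈ Q, PathIn G (b p.1) (b p.2) (l + 1)
          (insert (b p.1) (insert (b p.2) (I p)))) := by
    intro Q
    induction Q using Finset.induction_on with
    | empty => intro _; exact ⟨fun _ => ∅, by simpa using h0, by simp, by simp, by simp⟩
    | insert p Q hpQ ih =>
      intro hQ
      obtain ⟨I, h1, h2, h3, h4⟩ := ih (fun q hq => hQ q (mem_insert_of_mem hq))
      obtain ⟨i, j⟩ := p
      obtain ⟨J, hJ1, hJ2, hJ3, hJ4⟩ := hstep Q _ h1 i j (hQ _ (mem_insert_self _ _)) hpQ
      have hne : ∀ q ∈ Q, q ≠ (i, j) := fun q hq h => hpQ (h ▸ hq)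
      have hsame : ∀ q ∈ Q, Function.update I (i, j) J q = I q := fun q hq =>
        Function.update_of_ne (hne q hq) _ _
      have hdis : ∀ q ∈ Q, Disjoint J (I q) := fun q hq =>
        hJ1.mono_right (Finset.subset_biUnion_of_mem I hq)
      refine ⟨Function.update I (i, j) J, ?_, ?_, ?_, ?_⟩
      · rw [Finset.biUnion_insert, Function.update_self,
          Finset.biUnion_congr rfl hsame, Finset.union_comm]
        exact hJ4
      · intro q hq m
        rcases mem_insert.1 hq with rfl | hq
        · rw [Function.update_self]; exact hJ2 m
        · rw [hsame q hq]; exact h2 q hq m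
      · intro q hq q' hq' hqq
        rcases mem_insert.1 hq with rfl | hq <;> rcases mem_insert.1 hq' with rfl | hq'
        · exact absurd rfl hqq
        · rw [Function.update_self, hsame q' hq']; exact hdis q' hq'
        · rw [Function.update_self, hsame q hq]; exact (hdis q hq).symm
        · rw [hsame q hq, hsame q' hq']; exact h3 q hq q' hq' hqq
      · intro q hq
        rcases mem_insert.1 hq with rfl | hq
        · rw [Function.update_self]; exact hJ3
        · rw [hsame q hq]; exact h4 q hq
  obtain ⟨I, h1, h2, h3, h4⟩ := key (univ.filter (fun p => p.1 < p.2)) (by simp)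
  refine hasTK_of b hb I ?_ ?_ ?_
  · intro i j hij; exact h2 (i, j) (by simpa using hij)
  · intro i j hij i' j' hij' hne
    exact h3 (i, j) (by simpa using hij) (i', j') (by simpa using hij') hne
  · intro i j hij; exact h4 (i, j) (by simpa using hij)

end
end BS

set_option linter.unusedSectionVars false
namespace BS
open Finset
section
open Classical
variable {V : Type} [Fintype V]

lemma growth_num (a : ℕ → ℕ) (M L ρ D n : ℕ) (hM : 1 ≤ M) (hρ : 2 * M * L ≤ ρ)
    (hn : n ≤ D * 2 ^ L) (hn0 : 0 < n) (hmono : Monotone a) (ha0 : D ≤ a 0)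
    (hstep : ∀ t, 2 * n ≤ 3 * a (t + 1) ∨ (2 * M + 1) * a t ≤ 2 * M * a (t + 1)) :
    2 * n ≤ 3 * a ρ := by
  by_contra hcon
  push Not at hcon
  have h1 : ∀ t, t < ρ → (2 * M + 1) * a t ≤ 2 * M * a (t + 1) := by
    intro t ht
    rcases hstep t with h | h
    · have := hmono (show t + 1 ≤ ρ by omega); omega
    · exact h
  have hMr : (1 : ℝ) ≤ M := by exact_mod_cast hM
  have h2 : ∀ t, t ≤ ρ → (1 + 1 / (2 * (M : ℝ))) ^ t * a 0 ≤ a t := by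
    intro t
    induction t with
    | zero => intro _; simp
    | succ t ih =>
      intro ht
      have h3 := ih (by omega)
      have h4 : ((2 * M + 1) * a t : ℝ) ≤ 2 * M * a (t + 1) := by exact_mod_cast h1 t (by omega)
      have h5 : (1 + 1 / (2 * (M : ℝ))) * a t ≤ a (t + 1) := by
        rw [show (1 + 1 / (2 * (M : ℝ))) = (2 * M + 1) / (2 * M) by field_simp, div_mul_eq_mul_div,
          div_le_iff₀ (by positivity)]
        linarith
      calc (1 + 1 / (2 * (M : ℝ))) ^ (t + 1) * a 0
          = (1 + 1 / (2 * (M : ℝ))) * ((1 + 1 / (2 * (M : ℝ))) ^ t * a 0) := by ring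
        _ ≤ (1 + 1 / (2 * (M : ℝ))) * a t := by gcongr
        _ ≤ _ := h5
  have h6 : (2 : ℝ) ≤ (1 + 1 / (2 * (M : ℝ))) ^ (2 * M) := by
    have := one_add_mul_le_pow (a := 1 / (2 * (M : ℝ)))
      (by have : (0:ℝ) ≤ 1 / (2 * (M : ℝ)) := by positivity
          linarith) (2 * M)
    refine le_trans (le_of_eq ?_) this
    push_cast; field_simp; norm_num
  have h7 : (2 : ℝ) ^ L ≤ (1 + 1 / (2 * (M : ℝ))) ^ (2 * M * L) := by
    rw [pow_mul]; gcongr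
  have h8 := h2 (2 * M * L) hρ
  have h9 : (D : ℝ) * 2 ^ L ≤ a (2 * M * L) := by
    calc (D : ℝ) * 2 ^ L ≤ a 0 * (1 + 1 / (2 * (M : ℝ))) ^ (2 * M * L) := by
          gcongr
      _ ≤ _ := by linarith
  have h10 : D * 2 ^ L ≤ a (2 * M * L) := by exact_mod_cast h9
  have := hmono hρ
  omega

/-- Expansion hypothesis. -/
structure Exp (H : SimpleGraph V) (D L M ρ : ℕ) : Prop where
  M_pos : 1 ≤ M
  hρ : 2 * M * L ≤ ρ
  hn : Fintype.card V ≤ D * 2 ^ L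
  n_pos : 0 < Fintype.card V
  ce : ∀ X : Finset V, 4 * (X ∪ nbr H X).card ≤ 3 * Fintype.card V → X.card ≤ M * (nbr H X).card

lemma union_growth {H : SimpleGraph V} {D L M ρ : ℕ} (hE : Exp H D L M ρ) {ι : Type}
    (J : Finset ι) (E O : ι → Finset V) (W : Finset V) (w : ℕ)
    (hdisj : ∀ j ∈ J, Disjoint (E j) (W ∪ O j))
    (hw : (W ∪ J.biUnion O).card ≤ w) (h1 : 2 * M * w ≤ (J.biUnion E).card)
    (h2 : D ≤ (J.biUnion E).card) (h3 : 12 * w ≤ Fintype.card V) :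
    2 * Fintype.card V ≤ 3 * (J.biUnion (fun j => Bl (av H (W ∪ O j)) (E j) ρ)).card := by
  set B : ℕ → Finset V := fun t => J.biUnion (fun j => Bl (av H (W ∪ O j)) (E j) t) with hB
  have hB0 : B 0 = J.biUnion E := by
    simp only [hB, Bl_zero]
  have hmono : Monotone (fun t => (B t).card) := by
    intro s t hst
    apply Finset.card_le_card
    apply Finset.biUnion_mono
    intro j _
    exact Bl_mono le_rfl subset_rfl hst
  refine growth_num (fun t => (B t).card) M L ρ D (Fintype.card V) hE.M_pos hE.hρ hE.hn hE.n_pos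
    hmono (by rw [hB0]; exact h2) ?_
  intro t
  have hsub : B t ∪ nbr H (B t) ⊆ B (t + 1) ∪ (W ∪ J.biUnion O) := by
    intro y hy
    have : ∃ j ∈ J, y ∈ Bl (av H (W ∪ O j)) (E j) t ∪ nbr H (Bl (av H (W ∪ O j)) (E j) t) := by
      rcases mem_union.1 hy with hy | hy
      · obtain ⟨j, hj, hy⟩ := mem_biUnion.1 hy
        exact ⟨j, hj, mem_union_left _ hy⟩
      · obtain ⟨hy1, x, hx, hxy⟩ := mem_nbr.1 hy
        obtain ⟨j, hj, hx⟩ := mem_biUnion.1 hx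
        refine ⟨j, hj, mem_union_right _ (mem_nbr.2 ⟨?_, x, hx, hxy⟩)⟩
        intro h
        exact hy1 (mem_biUnion.2 ⟨j, hj, h⟩)
    obtain ⟨j, hj, hy⟩ := this
    have := nbr_Bl_subset t (hdisj j hj) hy
    simp only [mem_union, mem_biUnion, hB] at this ⊢
    rcases this with h | h | h
    · exact Or.inl ⟨j, hj, h⟩
    · exact Or.inr (Or.inl h)
    · exact Or.inr (Or.inr ⟨j, hj, h⟩)
  have hc := (Finset.card_le_card hsub).trans (Finset.card_union_le _ _)
  have hc2 := Finset.card_union_of_disjoint (nbr_disj H (B t))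
  by_cases h4 : 4 * (B t ∪ nbr H (B t)).card ≤ 3 * Fintype.card V
  · right
    have h5 := hE.ce (B t) h4
    have h6 : 2 * M * w ≤ (B t).card := by
      rw [← hB0] at h1
      exact h1.trans (hmono (Nat.zero_le t))
    have h7 : (B t).card + (nbr H (B t)).card ≤ (B (t + 1)).card + w := by omega
    show (2 * M + 1) * (B t).card ≤ 2 * M * (B (t + 1)).card
    nlinarith
  · left
    show 2 * Fintype.card V ≤ 3 * (B (t + 1)).card
    omega

lemma growth_C1 {H : SimpleGraph V} {D L M ρ : ℕ} (hE : Exp H D L M ρ) {ι : Type}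
    (J : Finset ι) (E O : ι → Finset V) (W : Finset V) (w : ℕ)
    (hdisj : ∀ j ∈ J, Disjoint (E j) (W ∪ O j))
    (hw : (W ∪ J.biUnion O).card ≤ w) (h1 : 2 * M * w ≤ (J.biUnion E).card)
    (h2 : D ≤ (J.biUnion E).card) (h3 : 12 * w ≤ Fintype.card V) :
    ∃ j ∈ J, 2 * Fintype.card V ≤ 3 * J.card * (Bl (av H (W ∪ O j)) (E j) ρ).card := by
  have h := union_growth hE J E O W w hdisj hw h1 h2 h3
  by_contra hcon
  push Not at hcon
  have hJ : J.Nonempty := by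
    by_contra hne
    rw [Finset.not_nonempty_iff_eq_empty] at hne
    subst hne
    have := hE.n_pos
    simp at h
    omega
  have h5 : ∑ j ∈ J, 3 * J.card * (Bl (av H (W ∪ O j)) (E j) ρ).card
      < ∑ j ∈ J, 2 * Fintype.card V := Finset.sum_lt_sum_of_nonempty hJ hcon
  rw [← Finset.mul_sum, Finset.sum_const, smul_eq_mul] at h5
  have h6 := Finset.card_biUnion_le (s := J) (t := fun j => Bl (av H (W ∪ O j)) (E j) ρ)
  have hJ' := hJ.card_pos
  have : J.card * (2 * Fintype.card V) ≤
    J.card * (3 * (∑ j ∈ J, (Bl (av H (W ∪ O j)) (E j) ρ).card)) := by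
    apply Nat.mul_le_mul_left; omega
  nlinarith

lemma growth_C2 {H : SimpleGraph V} {D L M ρ : ℕ} (hE : Exp H D L M ρ)
    (E W : Finset V) (w : ℕ) (hdisj : Disjoint E W) (hw : W.card ≤ w) (h1 : 2 * M * w ≤ E.card)
    (h2 : D ≤ E.card) (h3 : 12 * w ≤ Fintype.card V) :
    2 * Fintype.card V ≤ 3 * (Bl (av H W) E ρ).card := by
  have := union_growth hE ({()} : Finset Unit) (fun _ => E) (fun _ => ∅) W w
    (by simpa using hdisj) (by simpa using hw) (by simpa using h1) (by simpa using h2) h3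
  simpa using this

lemma growth_C3 {H : SimpleGraph V} {D L M ρ : ℕ} (hE : Exp H D L M ρ)
    (E E' W : Finset V) (w : ℕ) (hw : W.card ≤ w) (h3 : 12 * w ≤ Fintype.card V)
    (hdisj : Disjoint E W) (h1 : 2 * M * w ≤ E.card) (h2 : D ≤ E.card)
    (hdisj' : Disjoint E' W) (h1' : 2 * M * w ≤ E'.card) (h2' : D ≤ E'.card) :
    ∃ x ∈ E, ∃ y ∈ E', y ∈ Bl (av H W) {x} (2 * ρ) := by
  have a1 := growth_C2 hE E W w hdisj hw h1 h2 h3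
  have a2 := growth_C2 hE E' W w hdisj' hw h1' h2' h3
  have hpos := hE.n_pos
  have : ¬ Disjoint (Bl (av H W) E ρ) (Bl (av H W) E' ρ) := by
    intro hd
    have := Finset.card_union_of_disjoint hd
    have h4 := Finset.card_le_univ (Bl (av H W) E ρ ∪ Bl (av H W) E' ρ)
    omega
  rw [Finset.not_disjoint_iff] at this
  obtain ⟨z, hz1, hz2⟩ := this
  obtain ⟨x, hx, p, hp⟩ := mem_Bl.1 hz1
  obtain ⟨y, hy, q, hq⟩ := mem_Bl.1 hz2
  refine ⟨x, hx, y, hy, mem_Bl_singleton.2 ⟨p.append q.reverse, ?_⟩⟩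
  rw [SimpleGraph.Walk.length_append, SimpleGraph.Walk.length_reverse]; omega

/-- `b` has a big ball avoiding `W`. -/
def Good (H : SimpleGraph V) (β R : ℕ) (b : V) (W : Finset V) : Prop :=
  b ∉ W ∧ β ≤ (Bl (av H W) {b} R).card

lemma Good.anti {H : SimpleGraph V} {β R : ℕ} {b : V} {W W' : Finset V} (h : Good H β R b W)
    (hW : W' ⊆ W) : Good H β R b W' :=
  ⟨fun h' => h.1 (hW h'), h.2.trans (Finset.card_le_card (Bl_mono (av_mono hW) subset_rfl le_rfl))⟩

lemma Good.disj {H : SimpleGraph V} {β R : ℕ} {b : V} {W : Finset V} (h : Good H β R b W) (t : ℕ) :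
    Disjoint (Bl (av H W) {b} t) W :=
  Bl_disj t (by simpa using h.1)

/-- Few vertices are unreached from a good vertex. -/
lemma growth_C4 {H : SimpleGraph V} {D L M ρ : ℕ} (hE : Exp H D L M ρ) {β R w : ℕ}
    (hβ : 2 * M * w ≤ β) (hβ' : D ≤ β) (h3 : 12 * w ≤ Fintype.card V)
    {b : V} {W : Finset V} (hb : Good H β R b W) (hw : W.card ≤ w) :
    (univ.filter (fun v => v ∉ W ∧ v ∉ Bl (av H W) {b} (R + 2 * ρ))).card < β := by
  by_contra hcon
  push Not at hcon
  set E' := univ.filter (fun v => v ∉ W ∧ v ∉ Bl (av H W) {b} (R + 2 * ρ)) with hE'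
  obtain ⟨x, hx, y, hy, hxy⟩ := growth_C3 hE (Bl (av H W) {b} R) E' W w hw h3
    (hb.disj R) (hβ.trans hb.2) (hβ'.trans hb.2)
    (by rw [Finset.disjoint_left]; intro v hv; rw [hE', mem_filter] at hv; exact hv.2.1)
    (hβ.trans hcon) (hβ'.trans hcon)
  rw [hE', mem_filter] at hy
  exact hy.2.2 (Bl_trans hx hxy)

/-- A connection of two good vertices. -/
lemma growth_conn {H : SimpleGraph V} {D L M ρ : ℕ} (hE : Exp H D L M ρ) {β R w : ℕ}
    (hβ : 2 * M * w ≤ β) (hβ' : D ≤ β) (h3 : 12 * w ≤ Fintype.card V)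
    {b b' : V} {W : Finset V} (hb : Good H β R b W) (hb' : Good H β R b' W) (hw : W.card ≤ w) :
    b' ∈ Bl (av H W) {b} (R + 2 * ρ + R) := by
  obtain ⟨x, hx, y, hy, hxy⟩ := growth_C3 hE (Bl (av H W) {b} R) (Bl (av H W) {b'} R) W w hw h3
    (hb.disj R) (hβ.trans hb.2) (hβ'.trans hb.2) (hb'.disj R) (hβ.trans hb'.2) (hβ'.trans hb'.2)
  exact Bl_trans (Bl_trans hx hxy) (Bl_symm hy)

end
end BS

set_option linter.unusedSectionVars false
namespace BS
open Finset
section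
open Classical
variable {V : Type} [Fintype V]

lemma geod_getVert {A : SimpleGraph V} {u v x : V} (p : A.Walk u v) (hp : p.length = A.dist u v)
    (hx : x ∈ p.support) : A.dist u x ≤ p.length ∧ x = p.getVert (A.dist u x) := by
  obtain ⟨m, hm, hml⟩ := SimpleGraph.Walk.mem_support_iff_exists_getVert.1 hx
  have h1 : A.dist u x ≤ m := by
    have h := SimpleGraph.dist_le ((p.take m).copy rfl hm)
    rw [SimpleGraph.Walk.length_copy, SimpleGraph.Walk.take_length] at h
    omega
  have h2 : A.dist x v ≤ p.length - m := by
    have h := SimpleGraph.dist_le ((p.drop m).copy hm rfl)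
    rwa [SimpleGraph.Walk.length_copy, SimpleGraph.Walk.drop_length] at h
  have h3 : A.Reachable u x := ((p.take m).copy rfl hm).reachable
  have h4 := h3.dist_triangle_left v
  have h5 : A.dist u x = m := by omega
  rw [h5]
  exact ⟨hml, hm.symm⟩

/-- Two-colouring (bipartite) hypothesis. -/
def TwoCol (A : SimpleGraph V) (χ : V → Bool) : Prop := ∀ x y, A.Adj x y → χ x ≠ χ y

lemma TwoCol.mono {A A' : SimpleGraph V} {χ : V → Bool} (h : TwoCol A χ) (h' : A' ≤ A) :
    TwoCol A' χ := fun x y hxy => h x y (h' hxy)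

lemma TwoCol.walk {A : SimpleGraph V} {χ : V → Bool} (h : TwoCol A χ) {u v : V} (p : A.Walk u v) :
    (χ u = χ v ↔ Even p.length) := by
  induction p with
  | nil => simp
  | @cons a b c hab p ih =>
    have := h _ _ hab
    rw [SimpleGraph.Walk.length_cons, Nat.even_add_one, ← ih]
    cases h1 : χ a <;> cases h2 : χ b <;> cases h3 : χ c <;> simp_all

lemma TwoCol.parent {A : SimpleGraph V} {χ : V → Bool} (h : TwoCol A χ) {b y z : V}
    (hz : A.Reachable b z) (hzy : A.Adj z y) (hle : A.dist b y ≤ A.dist b z) :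
    A.dist b y + 1 = A.dist b z := by
  obtain ⟨p, hp⟩ := hz.exists_walk_length_eq_dist
  obtain ⟨q, hq⟩ := (hz.trans hzy.reachable).exists_walk_length_eq_dist
  have h1 : A.dist b z ≤ A.dist b y + 1 := by
    have := SimpleGraph.dist_le (q.concat hzy.symm)
    rw [SimpleGraph.Walk.length_concat] at this
    omega
  have h2 : A.dist b y ≠ A.dist b z := by
    intro h3
    have a := h.walk p
    have c := h.walk q
    rw [hp] at a
    rw [hq, h3] at c
    have h6 := h _ _ hzy
    have h7 : (χ b = χ z ↔ χ b = χ y) := a.trans c.symm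
    revert h6 h7
    cases χ b <;> cases χ y <;> cases χ z <;> simp
  omega

/-- Output of a step towards `y0`. -/
structure StepOut (A : SimpleGraph V) (b y0 : V) (O : Finset V) (p : A.Walk b y0) : Prop where
  path : p.IsPath
  geod : p.length = A.dist b y0
  pos : 1 ≤ p.length
  supp : ∀ x ∈ p.support, x ∈ insert y0 O
  second : PathIn A b y0 (p.length + 2) (insert y0 O)
  b_mem : b ∈ O
  y_nmem : y0 ∉ O
  reach : ∀ x ∈ O, A.Reachable b x
  dist_le : ∀ x ∈ O, A.dist b x ≤ p.length + 1
  level : ∀ d, (O.filter (fun x => A.dist b x = d)).card ≤ 2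

lemma StepOut.card {A : SimpleGraph V} {b y0 : V} {O : Finset V} {p : A.Walk b y0}
    (h : StepOut A b y0 O p) : O.card ≤ 2 * p.length + 4 := by
  have := Finset.card_le_mul_card_image_of_maps_to (s := O) (t := Finset.range (p.length + 2))
    (f := fun x => A.dist b x) (fun x hx => by
      have := h.dist_le x hx; simp; omega) 2 (fun d _ => h.level d)
  rw [Finset.card_range] at this
  omega

lemma step_pair {A : SimpleGraph V} {b y0 x2 z : V} (hne : y0 ≠ x2) (hy : A.Adj z y0)
    (hx : A.Adj z x2) (hr : A.Reachable b z) (hdy : A.dist b y0 + 1 = A.dist b z)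
    (hdx : A.dist b x2 + 1 = A.dist b z) (hpos : 1 ≤ A.dist b y0) :
    ∃ (O : Finset V) (p : A.Walk b y0), StepOut A b y0 O p := by
  obtain ⟨p, hp, hpl⟩ := (hr.trans hy.reachable).exists_path_of_dist
  obtain ⟨q, hq, hql⟩ := (hr.trans hx.reachable).exists_path_of_dist
  set O : Finset V := (insert z (p.support.toFinset ∪ q.support.toFinset)).erase y0 with hO
  have hyq : y0 ∉ q.support := by
    intro h
    have h1 := (geod_getVert q hql h).2
    have h2 : A.dist b y0 = q.length := by omega
    rw [h2, SimpleGraph.Walk.getVert_length] at h1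
    exact hne h1
  have hzq : z ∉ q.support := by
    intro h
    have h1 := (geod_getVert q hql h).1
    omega
  have hzy : z ≠ y0 := hy.ne
  have hmem : ∀ x ∈ O, x = z ∨ x ∈ p.support ∨ x ∈ q.support := by
    intro x hx
    simp only [hO, mem_erase, mem_insert, mem_union, List.mem_toFinset] at hx
    tauto
  have hby : b ≠ y0 := by
    intro h; rw [h, SimpleGraph.dist_self] at hpos; omega
  refine ⟨O, p, hp, hpl, by omega, ?_, ?_, ?_, by simp [hO], ?_, ?_, ?_⟩
  · intro x hx
    by_cases h : x = y0
    · simp [h]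
    · simp [hO, h, hx]
  · refine ⟨(q.concat hx.symm).concat hy, ?_, ?_, ?_⟩
    · refine SimpleGraph.Walk.IsPath.concat (hq.concat hzq hx.symm) ?_ hy
      rw [SimpleGraph.Walk.support_concat, List.mem_append]
      simp [hyq, hzy.symm]
    · simp only [SimpleGraph.Walk.length_concat]; omega
    · intro x hx
      simp only [SimpleGraph.Walk.support_concat, List.mem_append,
        List.mem_singleton] at hx
      by_cases h : x = y0
      · simp [h]
      · simp only [hO, mem_insert, mem_erase, mem_union, List.mem_toFinset]
        tauto
  · simp [hO, hby]
  · intro x hx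
    rcases hmem x hx with rfl | h | h
    · exact hr
    · exact (p.takeUntil x h).reachable
    · exact (q.takeUntil x h).reachable
  · intro x hx
    rcases hmem x hx with rfl | h | h
    · omega
    · have := (geod_getVert p hpl h).1; omega
    · have := (geod_getVert q hql h).1; omega
  · intro d
    have hsub : O.filter (fun x => A.dist b x = d) ⊆
        {p.getVert d, if d = A.dist b z then z else q.getVert d} := by
      intro x hx
      rw [mem_filter] at hx
      obtain ⟨hx, rfl⟩ := hx
      rw [mem_insert, mem_singleton]
      rcases hmem x hx with rfl | h | h
      · simp
      · exact Or.inl (geod_getVert p hpl h).2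
      · have := geod_getVert q hql h
        right
        rw [if_neg (by omega)]
        exact this.2
    exact (Finset.card_le_card hsub).trans Finset.card_le_two

lemma step_pick {A : SimpleGraph V} {χ : V → Bool} (hχ : TwoCol A χ) {b : V} {S : Finset V}
    (hS : S.Nonempty) (hb : b ∉ S) {T : ℕ} (hT : S ⊆ Bl A {b} T)
    (hdeg : ∀ v ∈ S, 2 ≤ (S.filter (fun y => A.Adj v y)).card) :
    ∃ y0 ∈ S, ∃ (O : Finset V) (p : A.Walk b y0), StepOut A b y0 O p ∧ p.length + 1 ≤ T := by
  obtain ⟨z, hz, hmax⟩ := Finset.exists_max_image S (fun v => A.dist b v) hS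
  have hreach : ∀ v ∈ S, A.Reachable b v ∧ A.dist b v ≤ T := by
    intro v hv
    obtain ⟨p, hp⟩ := mem_Bl_singleton.1 (hT hv)
    exact ⟨p.reachable, (SimpleGraph.dist_le p).trans hp⟩
  obtain ⟨y0, hy0, x2, hx2, hne⟩ := Finset.one_lt_card.1 (hdeg z hz)
  rw [mem_filter] at hy0 hx2
  have hdy := hχ.parent (hreach z hz).1 hy0.2 (hmax _ hy0.1)
  have hdx := hχ.parent (hreach z hz).1 hx2.2 (hmax _ hx2.1)
  have hpos : 1 ≤ A.dist b y0 := by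
    have h1 : b ≠ y0 := fun h => hb (h ▸ hy0.1)
    exact (hreach y0 hy0.1).1.pos_dist_of_ne h1
  obtain ⟨O, p, hp⟩ := step_pair hne hy0.2 hx2.2 (hreach z hz).1 hdy hdx hpos
  refine ⟨y0, hy0.1, O, p, hp, ?_⟩
  have := hp.geod
  have := (hreach z hz).2
  omega

/-- Thinness of the obstacle as seen from `y0`. -/
lemma StepOut.thin {H : SimpleGraph V} {W W' : Finset V} {b y0 : V} {O : Finset V}
    {p : (av H W).Walk b y0} (h : StepOut (av H W) b y0 O p) (hO : Disjoint O W)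
    (hW' : W ∪ O ⊆ W') (hy : y0 ∉ W') (t : ℕ) :
    (O ∩ nbr H (Bl (av H W') {y0} t)).card ≤ 2 * (t + 3) := by
  have := Finset.card_le_mul_card_image_of_maps_to (s := O ∩ nbr H (Bl (av H W') {y0} t))
    (t := Finset.Ico (p.length - (t + 1)) (p.length + 2))
    (f := fun x => (av H W).dist b x) (fun x hx => by
      rw [mem_inter, mem_nbr] at hx
      obtain ⟨hxO, hx1, v, hv, hvx⟩ := hx
      have h1 := h.dist_le x hxO
      have hv' := Finset.disjoint_left.1 (Bl_disj (H := H) (X := {y0}) t (by simpa using hy)) hv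
      obtain ⟨q, hq⟩ := mem_Bl_singleton.1 hv
      have hadj : (av H W).Adj v x :=
        ⟨hvx, fun hh => hv' (hW' (mem_union_left _ hh)), Finset.disjoint_left.1 hO hxO⟩
      have h2 := SimpleGraph.dist_le ((q.mapLe (av_mono (subset_union_left.trans hW'))).concat hadj)
      rw [SimpleGraph.Walk.length_concat] at h2
      have h2' : (av H W).dist y0 x ≤ t + 1 := by
        simp at h2; omega
      have h3 := (h.reach x hxO).dist_triangle_left y0
      rw [SimpleGraph.dist_comm (u := x)] at h3
      have := h.geod
      rw [mem_Ico]; omega) 2 (fun d _ => by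
      refine (Finset.card_le_card ?_).trans (h.level d)
      intro x hx
      simp only [mem_filter, mem_inter] at hx ⊢
      exact ⟨hx.1.1, hx.2⟩)
  rw [Nat.card_Ico] at this
  omega

lemma StepOut.disj {H : SimpleGraph V} {W : Finset V} {b y0 : V} {O : Finset V}
    {p : (av H W).Walk b y0} (h : StepOut (av H W) b y0 O p) (hb : b ∉ W) : Disjoint O W := by
  rw [Finset.disjoint_left]
  intro x hx
  obtain ⟨q⟩ := h.reach x hx
  exact walk_av q hb x q.end_mem_support

/-- The step property. -/
def StepP (H : SimpleGraph V) (w A β R : ℕ) : Prop :=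
  ∀ (b : V) (W F : Finset V), (W ∪ F).card ≤ w → Good H β R b W →
    ∃ (y0 : V) (O : Finset V) (p : (av H W).Walk b y0), StepOut (av H W) b y0 O p ∧
      Disjoint O W ∧ O.card ≤ A ∧ p.length ≤ A ∧ Good H β R y0 (W ∪ F ∪ O)

/-- Robust minimum degree. -/
def Rob (H : SimpleGraph V) (d ω : ℕ) : Prop :=
  ∀ W : Finset V, W.card ≤ ω → ∃ S : Finset V, S.Nonempty ∧ Disjoint S W ∧
    ∀ v ∈ S, d ≤ (S.filter (fun y => H.Adj v y)).card

end
end BS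

set_option linter.unusedSectionVars false
namespace BS
open Finset
section
open Classical
variable {V : Type} [Fintype V]

lemma pathIn_nil (H : SimpleGraph V) (v : V) : PathIn H v v 0 {v} :=
  ⟨SimpleGraph.Walk.nil, by simp, by simp, by simp⟩

lemma chain {H : SimpleGraph V} {w A β R : ℕ} (hS : StepP H w A β R) {v : V} {W : Finset V}
    (hv : Good H β R v W) (s : ℕ) (hw : W.card + s * A ≤ w) :
    ∃ (b : V) (U : Finset V) (lam r : ℕ), Good H β R b (W ∪ U) ∧ Disjoint U W ∧ U.card ≤ s * A ∧
      s ≤ lam ∧ lam ≤ s + A ∧ lam ≤ A * r ∧ (1 ≤ lam → v ∈ U) ∧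
      ∀ i ≤ r, PathIn H v b (lam + 2 * i) (insert b U) := by
  induction s with
  | zero =>
    refine ⟨v, ∅, 0, 0, by simpa using hv, by simp, by simp, by simp, by simp, by simp, by simp, ?_⟩
    intro i hi
    have : i = 0 := by omega
    subst this
    exact pathIn_nil H v
  | succ s ih =>
    have hexp : (s + 1) * A = s * A + A := by ring
    obtain ⟨b, U, lam, r, h1, h2, h3, h4, h5, h6, h7, h8⟩ := ih (by omega)
    by_cases hlam : s + 1 ≤ lam
    · exact ⟨b, U, lam, r, h1, h2, by omega, hlam, by omega, h6, h7, h8⟩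
    · have hls : lam = s := by omega
      have hcard : (W ∪ U ∪ ∅).card ≤ w := by
        rw [union_empty]
        have := Finset.card_union_le W U
        omega
      obtain ⟨y0, O, p, hp, hOd, hOc, hpl, hg⟩ := hS b (W ∪ U) ∅ hcard h1
      rw [union_empty] at hg
      have hOW : Disjoint O W := hOd.mono_right subset_union_left
      have hOU : Disjoint O U := hOd.mono_right subset_union_right
      have hy0U : y0 ∉ U := fun h => hg.1 (by simp [h])
      have hbU : b ∉ U := fun h => h1.1 (by simp [h])
      have hby : b ≠ y0 := fun h => hp.y_nmem (h ▸ hp.b_mem)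
      have hinter : ∀ x ∈ insert b U, x ∈ insert y0 O → x = b := by
        intro x hx hx'
        rw [mem_insert] at hx hx'
        rcases hx with rfl | hx
        · rfl
        · rcases hx' with rfl | hx'
          · exact absurd hx hy0U
          · exact absurd hx (Finset.disjoint_left.1 hOU hx')
      have hsub : insert b U ∪ insert y0 O ⊆ insert y0 (U ∪ O) := by
        intro x hx
        simp only [mem_union, mem_insert] at hx ⊢
        rcases hx with (rfl | hx) | (rfl | hx)
        · exact Or.inr (Or.inr hp.b_mem)
        · exact Or.inr (Or.inl hx)
        · exact Or.inl rfl
        · exact Or.inr (Or.inr hx)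
      refine ⟨y0, U ∪ O, lam + p.length, r + 1, by rwa [← union_assoc], ?_, ?_, ?_, ?_, ?_, ?_, ?_⟩
      · rw [Finset.disjoint_union_left]; exact ⟨h2, hOW⟩
      · have := Finset.card_union_le U O
        omega
      · have := hp.pos; omega
      · omega
      · have : A * (r + 1) = A * r + A := by ring
        omega
      · intro _
        have := (h8 0 (Nat.zero_le r)).left
        rw [mem_insert] at this
        rcases this with h | h
        · rw [mem_union]; right; rw [h]; exact hp.b_mem
        · exact mem_union_left _ h
      · intro i hi
        have hp1 : PathIn H b y0 p.length (insert y0 O) :=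
          PathIn.mono ⟨p, hp.path, rfl, hp.supp⟩ (av_le _ _) subset_rfl
        have hp2 : PathIn H b y0 (p.length + 2) (insert y0 O) :=
          hp.second.mono (av_le _ _) subset_rfl
        by_cases hir : i ≤ r
        · have := ((h8 i hir).trans hp1 hinter).mono le_rfl hsub
          rwa [show lam + p.length + 2 * i = lam + 2 * i + p.length by ring]
        · have hir' : i = r + 1 := by omega
          have := ((h8 r le_rfl).trans hp2 hinter).mono le_rfl hsub
          rwa [hir', show lam + p.length + 2 * (r + 1) = lam + 2 * r + (p.length + 2) by ring]

/-- The ports: `k` branch vertices together with protected cores. -/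
structure Ports (H : SimpleGraph V) (χ : V → Bool) (k w1 w A β R : ℕ) where
  u : Fin k → V
  Core : Fin k → Finset V
  P : Fin k → ℕ → Finset V → Prop
  mem : ∀ m, u m ∈ Core m
  disj : ∀ m m', m ≠ m' → Disjoint (Core m) (Core m')
  col : ∀ m, χ (u m) = true
  tot : (univ.biUnion Core).card + w1 ≤ w
  P0 : ∀ m, P m 0 ∅
  P1 : ∀ m q S W, P m q S → q ≤ 2 * k → u m ∉ W → W ∩ Core m = S →
    (W \ univ.biUnion Core).card ≤ w1 → Good H β R (u m) W
  P2 : ∀ m q S W x (g : (av H W).Walk (u m) x), P m q S → u m ∉ W → W ∩ Core m = S →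
    g.IsPath → g.length = (av H W).dist (u m) x → g.length ≤ A →
    P m (q + 1) (S ∪ (g.support.toFinset ∩ Core m).erase (u m))

lemma support_card_le {A : SimpleGraph V} {x y : V} (p : A.Walk x y) :
    p.support.toFinset.card ≤ p.length + 1 := by
  have := List.toFinset_card_le p.support
  rwa [SimpleGraph.Walk.length_support] at this

lemma cnt_le {k : ℕ} (Q : Finset (Fin k × Fin k)) (m : Fin k) :
    (Q.filter (fun p => p.1 = m ∨ p.2 = m)).card ≤ 2 * k := by
  have hsub : Q.filter (fun p => p.1 = m ∨ p.2 = m) ⊆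
      univ.image (fun i : Fin k => (m, i)) ∪ univ.image (fun i : Fin k => (i, m)) := by
    rintro ⟨a, b⟩ hx
    rw [mem_filter] at hx
    rcases hx.2 with h | h
    · simp only at h; subst h; simp
    · simp only at h; subst h; simp
  refine (Finset.card_le_card hsub).trans ((Finset.card_union_le _ _).trans ?_)
  have h1 := Finset.card_image_le (s := (univ : Finset (Fin k))) (f := fun i : Fin k => (m, i))
  have h2 := Finset.card_image_le (s := (univ : Finset (Fin k))) (f := fun i : Fin k => (i, m))
  rw [Finset.card_univ, Fintype.card_fin] at h1 h2
  omega

lemma cnt_insert {k : ℕ} (Q : Finset (Fin k × Fin k)) (m i j : Fin k) (h : (i, j) ∉ Q) :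
    ((insert (i, j) Q).filter (fun p => p.1 = m ∨ p.2 = m)).card =
      (Q.filter (fun p => p.1 = m ∨ p.2 = m)).card + (if i = m ∨ j = m then 1 else 0) := by
  rw [Finset.filter_insert]
  split_ifs with h1
  · rw [Finset.card_insert_of_notMem (fun hh => h (mem_filter.1 hh).1)]
  · simp

set_option maxHeartbeats 1000000 in
/-- The assembly of the subdivision. -/
theorem assembly {H : SimpleGraph V} {χ : V → Bool} (hχ : TwoCol H χ) {k w1 w A β R D L M ρ : ℕ}
    (hE : Exp H D L M ρ) (hβ : 2 * M * w ≤ β) (hβ' : D ≤ β) (h12 : 12 * w ≤ Fintype.card V)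
    (hA : R + 2 * ρ + R ≤ A) (hAe : Even A) (hA2 : 2 ≤ A) (hS : StepP H w A β R)
    (Po : Ports H χ k w1 w A β R) (hw1 : (k * k + 2) * ((2 * A * A + 3 * A) * A) ≤ w1) :
    HasTK H k (2 * A * A + 3 * A - 1) := by
  set ell := 2 * A * A + 3 * A with hell
  have hAA : 2 * A ≤ A * A := by nlinarith
  have hellA : 2 * A * A * A + 4 * A ≤ ell * A := by
    rw [hell]; nlinarith
  have hinj : Function.Injective Po.u := by
    intro m m' h
    by_contra hne
    exact Finset.disjoint_left.1 (Po.disj m m' hne) (Po.mem m) (h ▸ Po.mem m')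
  have hcross : ∀ m m', m ≠ m' → Po.u m ∉ Po.Core m' := fun m m' hne h =>
    Finset.disjoint_left.1 (Po.disj m m' hne) (Po.mem m) h
  set cnt : Finset (Fin k × Fin k) → Fin k → ℕ :=
    fun Q m => (Q.filter (fun p => p.1 = m ∨ p.2 = m)).card with hcnt
  refine greedy Po.u hinj (fun Q U => (∀ m, Po.P m (cnt Q m) (U ∩ Po.Core m)) ∧
    (∀ m, Po.u m ∉ U) ∧ U.card ≤ Q.card * (ell * A)) ?_ ?_
  · refine ⟨?_, by simp, by simp⟩
    intro m; simpa [hcnt] using Po.P0 m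
  rintro Q Used ⟨hP, hun, hUc⟩ i j hij hQ
  have hne : i ≠ j := hij.ne
  have hQk : Q.card ≤ k * k := by
    have := Finset.card_le_univ Q
    simpa using this
  have hUsed : Used.card ≤ k * k * (ell * A) :=
    hUc.trans (Nat.mul_le_mul_right _ hQk)
  have hw1' : Used.card + 2 * (ell * A) ≤ w1 := by
    have : (k * k + 2) * (ell * A) = k * k * (ell * A) + 2 * (ell * A) := by ring
    omega
  set Cr := fun i : Fin k => (univ.erase i).biUnion Po.Core with hCr
  have hCrsub : ∀ i, Cr i ⊆ univ.biUnion Po.Core := fun i =>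
    Finset.biUnion_subset_biUnion_of_subset_left _ (Finset.subset_univ _)
  have hCrmem : ∀ i m, m ≠ i → Po.Core m ⊆ Cr i := by
    intro i m hm
    exact Finset.subset_biUnion_of_mem Po.Core (by simp [hm])
  have hCrdis : ∀ i, Disjoint (Cr i) (Po.Core i) := by
    intro i
    rw [hCr, Finset.disjoint_biUnion_left]
    intro m hm
    exact Po.disj m i (by simpa using hm)
  have hCru : ∀ i, Po.u i ∉ Cr i := fun i h => Finset.disjoint_left.1 (hCrdis i) h (Po.mem i)
  have htot := Po.tot
  -- first stage
  set Wa := Used ∪ Cr j with hWa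
  have hWaj : Wa ∩ Po.Core j = Used ∩ Po.Core j := by
    rw [hWa, Finset.union_inter_distrib_right, Finset.disjoint_iff_inter_eq_empty.1 (hCrdis j),
      union_empty]
  have hujWa : Po.u j ∉ Wa := by
    rw [hWa, mem_union]; push Not; exact ⟨hun j, hCru j⟩
  have hG1 : Good H β R (Po.u j) Wa := by
    refine Po.P1 j _ _ Wa (hP j) (cnt_le Q j) hujWa hWaj ?_
    have : Wa \ univ.biUnion Po.Core ⊆ Used := by
      intro x hx
      rw [mem_sdiff, hWa, mem_union] at hx
      rcases hx.1 with h | h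
      · exact h
      · exact absurd (hCrsub j h) hx.2
    have := Finset.card_le_card this
    omega
  have hWaF : Wa ∪ Po.Core j ⊆ Used ∪ univ.biUnion Po.Core := by
    intro x hx
    simp only [hWa, mem_union] at hx ⊢
    rcases hx with (h | h) | h
    · exact Or.inl h
    · exact Or.inr (hCrsub j h)
    · exact Or.inr (Finset.subset_biUnion_of_mem Po.Core (mem_univ j) h)
  have hWaFc : (Wa ∪ Po.Core j).card ≤ Used.card + (univ.biUnion Po.Core).card :=
    (Finset.card_le_card hWaF).trans (Finset.card_union_le _ _)
  obtain ⟨y0, O, p, hp, hOd, hOc, hpl, hg⟩ := hS (Po.u j) Wa (Po.Core j) (by omega) hG1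
  -- chain
  set Wb := Wa ∪ Po.Core j ∪ O with hWb
  have hWbc : Wb.card ≤ Used.card + (univ.biUnion Po.Core).card + A :=
    (Finset.card_union_le _ _).trans (by omega)
  set s := 2 * A * A with hs
  obtain ⟨b, U, lam, r, c1, c2, c3, c4, c5, c6, c7, c8⟩ := chain hS hg s (by
    omega)
  have hs1 : 1 ≤ s := by rw [hs]; nlinarith
  have hy0U : y0 ∈ U := c7 (by omega)
  have hCoreWb : ∀ m, Po.Core m ⊆ Wb := by
    intro m x hx
    rw [hWb, mem_union, mem_union, hWa, mem_union]
    by_cases hm : m = j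
    · subst hm; exact Or.inl (Or.inr hx)
    · exact Or.inl (Or.inl (Or.inr (hCrmem j m hm hx)))
  have hbWb : b ∉ Wb := fun h => c1.1 (mem_union_left _ h)
  have hbU : b ∉ U := fun h => c1.1 (mem_union_right _ h)
  have hUWb : ∀ x ∈ U, x ∉ Wb := fun x hx => Finset.disjoint_left.1 c2 hx
  have hOCi : ∀ m, m ≠ j → ∀ x ∈ O, x ∉ Po.Core m := by
    intro m hm x hx h
    exact Finset.disjoint_left.1 hOd hx (mem_union_right _ (hCrmem j m hm h))
  have hOWb : O ⊆ Wb := subset_union_right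
  have hOUsed : ∀ x ∈ O, x ∉ Used := fun x hx h =>
    Finset.disjoint_left.1 hOd hx (mem_union_left _ h)
  have hUsedWb : Used ⊆ Wb := fun x hx => by
    rw [hWb, mem_union, mem_union, hWa, mem_union]; exact Or.inl (Or.inl (Or.inl hx))
  -- connection
  set Wc := Used ∪ Cr i ∪ O ∪ U with hWc
  have hWci : Wc ∩ Po.Core i = Used ∩ Po.Core i := by
    ext x
    simp only [hWc, mem_inter, mem_union]
    constructor
    · rintro ⟨((h | h) | h) | h, hx⟩
      · exact ⟨h, hx⟩
      · exact absurd hx (Finset.disjoint_left.1 (hCrdis i) h)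
      · exact absurd hx (hOCi i hne x h)
      · exact absurd (hCoreWb i hx) (hUWb x h)
    · rintro ⟨h, hx⟩
      exact ⟨Or.inl (Or.inl (Or.inl h)), hx⟩
  have huiWc : Po.u i ∉ Wc := by
    intro h
    have : Po.u i ∈ Wc ∩ Po.Core i := mem_inter.2 ⟨h, Po.mem i⟩
    rw [hWci] at this
    exact hun i (mem_inter.1 this).1
  have hcub : s * A + A ≤ ell * A := by omega
  have hG2 : Good H β R (Po.u i) Wc := by
    refine Po.P1 i _ _ Wc (hP i) (cnt_le Q i) huiWc hWci ?_
    have : Wc \ univ.biUnion Po.Core ⊆ Used ∪ (O ∪ U) := by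
      intro x hx
      simp only [mem_sdiff, hWc, mem_union] at hx ⊢
      rcases hx.1 with ((h | h) | h) | h
      · exact Or.inl h
      · exact absurd (hCrsub i h) hx.2
      · exact Or.inr (Or.inl h)
      · exact Or.inr (Or.inr h)
    have h1 := Finset.card_le_card this
    have h2 := Finset.card_union_le Used (O ∪ U)
    have h3 := Finset.card_union_le O U
    omega
  have hWcsub : Wc ⊆ Wb ∪ U := by
    intro x hx
    simp only [hWc, mem_union] at hx
    rw [mem_union]
    rcases hx with ((h | h) | h) | h
    · exact Or.inl (hUsedWb h)
    · left
      obtain ⟨m, _, hm⟩ := mem_biUnion.1 h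
      exact hCoreWb m hm
    · exact Or.inl (hOWb h)
    · exact Or.inr h
  have hG3 : Good H β R b Wc := c1.anti hWcsub
  have hWcc : Wc.card ≤ w := by
    have h1 := Finset.card_le_card hWcsub
    have h2 := Finset.card_union_le Wb U
    omega
  obtain ⟨g, hg1, hg2, hg3⟩ := Bl_geod (growth_conn hE hβ hβ' h12 hG2 hG3 hWcc)
  have hgW : ∀ x ∈ g.support, x ∉ Wc := walk_av g huiWc
  -- lengths
  have hpath0 := c8 0 (Nat.zero_le r)
  obtain ⟨q0, hq01, hq02, hq03⟩ := hpath0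
  have hpar : Even (g.length + lam + p.length) := by
    have := hχ.walk (((g.mapLe (av_le _ _)).append q0.reverse).append (p.mapLe (av_le _ _)).reverse)
    rw [Po.col i, Po.col j] at this
    simp only [SimpleGraph.Walk.length_append, SimpleGraph.Walk.length_reverse, hq02] at this
    have h2 := this.1 trivial
    simpa using h2
  have hgA : g.length ≤ A := by omega
  have hsum : g.length + lam + p.length ≤ ell := by omega
  have helle : Even ell := by
    obtain ⟨a, ha⟩ := hAe
    exact ⟨A * A + 3 * a, by rw [hell, hs, ha]; ring⟩
  obtain ⟨c, hc⟩ : ∃ c, ell = g.length + lam + p.length + 2 * c := by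
    obtain ⟨x, hx⟩ := hpar
    obtain ⟨y, hy⟩ := helle
    exact ⟨y - x, by omega⟩
  have hrA : 2 * A ≤ r := by
    by_contra hcon
    push Not at hcon
    have : A * r < A * (2 * A) := by
      apply Nat.mul_lt_mul_of_pos_left hcon; omega
    have : A * (2 * A) = s := by rw [hs]; ring
    omega
  have hcr : c ≤ r := by omega
  -- the path
  set Sg := g.support.toFinset with hSg
  set Sp := p.support.toFinset with hSp
  have hSpm : ∀ x ∈ Sp, x = y0 ∨ x ∈ O := by
    intro x hx
    have := hp.supp x (by simpa [hSp] using hx)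
    simpa using this
  have hSgm : ∀ x ∈ Sg, x ∉ Wc := fun x hx => hgW x (by simpa [hSg] using hx)
  have hUWc : U ⊆ Wc := subset_union_right
  have hOWc : O ⊆ Wc := by rw [hWc]; exact subset_union_right.trans subset_union_left
  have hP1 : PathIn H (Po.u i) b g.length Sg :=
    PathIn.mono ⟨g, hg1, rfl, by simp [hSg]⟩ (av_le _ _) subset_rfl
  have hP2 : PathIn H b y0 (lam + 2 * c) (insert b U) := (c8 c hcr).symm
  have hP3 : PathIn H y0 (Po.u j) p.length Sp :=
    (PathIn.mono ⟨p, hp.path, rfl, by simp [hSp]⟩ (av_le _ _) subset_rfl).symm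
  have hP12 := hP1.trans hP2 (by
    intro x hx hx'
    rcases mem_insert.1 hx' with h | h
    · exact h
    · exact absurd (hUWc h) (hSgm x hx))
  have hP123 := hP12.trans hP3 (by
    intro x hx hx'
    rcases hSpm x hx' with h | h
    · exact h
    · exfalso
      rw [mem_union, mem_insert] at hx
      rcases hx with hx | rfl | hx
      · exact hSgm x hx (hOWc h)
      · exact hbWb (hOWb h)
      · exact hUWb x hx (hOWb h))
  set T := Sg ∪ insert b U ∪ Sp with hT
  have hTcore : ∀ m, m ≠ i → m ≠ j → ∀ x ∈ T, x ∉ Po.Core m := by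
    intro m hmi hmj x hx hxm
    simp only [hT, mem_union, mem_insert] at hx
    rcases hx with (hx | rfl | hx) | hx
    · apply hSgm x hx
      rw [hWc, mem_union, mem_union, mem_union]
      exact Or.inl (Or.inl (Or.inr (hCrmem i m hmi hxm)))
    · exact hbWb (hCoreWb m hxm)
    · exact hUWb x hx (hCoreWb m hxm)
    · rcases hSpm x hx with rfl | hx
      · exact hUWb x hy0U (hCoreWb m hxm)
      · exact hOCi m hmj x hx hxm
  have hTi : ∀ x ∈ T, x ∈ Po.Core i → x ∈ Sg := by
    intro x hx hxm
    simp only [hT, mem_union, mem_insert] at hx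
    rcases hx with (hx | rfl | hx) | hx
    · exact hx
    · exact absurd (hCoreWb i hxm) hbWb
    · exact absurd (hCoreWb i hxm) (hUWb x hx)
    · rcases hSpm x hx with rfl | hx
      · exact absurd (hCoreWb i hxm) (hUWb x hy0U)
      · exact absurd hxm (hOCi i hne x hx)
  have hTj : ∀ x ∈ T, x ∈ Po.Core j → x ∈ Sp := by
    intro x hx hxm
    simp only [hT, mem_union, mem_insert] at hx
    rcases hx with (hx | rfl | hx) | hx
    · exfalso
      apply hSgm x hx
      rw [hWc, mem_union, mem_union, mem_union]
      exact Or.inl (Or.inl (Or.inr (hCrmem i j hne.symm hxm)))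
    · exact absurd (hCoreWb j hxm) hbWb
    · exact absurd (hCoreWb j hxm) (hUWb x hx)
    · exact hx
  have hTUsed : ∀ x ∈ T, x ∉ Used := by
    intro x hx hxm
    simp only [hT, mem_union, mem_insert] at hx
    rcases hx with (hx | rfl | hx) | hx
    · apply hSgm x hx
      rw [hWc, mem_union, mem_union, mem_union]
      exact Or.inl (Or.inl (Or.inl hxm))
    · exact hbWb (hUsedWb hxm)
    · exact hUWb x hx (hUsedWb hxm)
    · rcases hSpm x hx with rfl | hx
      · exact hUWb x hy0U (hUsedWb hxm)
      · exact hOUsed x hx hxm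
  set J := (T.erase (Po.u i)).erase (Po.u j) with hJ
  have hJT : J ⊆ T := (Finset.erase_subset _ _).trans (Finset.erase_subset _ _)
  have hui_Sp : Po.u i ∉ Sp := by
    intro h
    rcases hSpm _ h with h | h
    · exact hUWb y0 hy0U (hCoreWb i (h ▸ Po.mem i))
    · exact hOCi i hne _ h (Po.mem i)
  have huj_Sg : Po.u j ∉ Sg := by
    intro h
    apply hSgm _ h
    rw [hWc, mem_union, mem_union, mem_union]
    exact Or.inl (Or.inl (Or.inr (hCrmem i j hne.symm (Po.mem j))))
  refine ⟨J, ?_, ?_, ?_, ?_, ?_, ?_⟩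
  · rw [Finset.disjoint_left]
    intro x hx
    exact hTUsed x (hJT hx)
  · intro m hm
    by_cases hmi : m = i
    · subst hmi; simp [hJ] at hm
    by_cases hmj : m = j
    · subst hmj; simp [hJ] at hm
    exact hTcore m hmi hmj _ (hJT hm) (Po.mem m)
  · have hlen : g.length + (lam + 2 * c) + p.length = ell - 1 + 1 := by
      have : 1 ≤ ell := by omega
      omega
    rw [hlen] at hP123
    refine hP123.mono le_rfl ?_
    intro x hx
    simp only [hJ, mem_insert, mem_erase]
    by_cases h1 : x = Po.u i
    · exact Or.inl h1
    by_cases h2 : x = Po.u j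
    · exact Or.inr (Or.inl h2)
    exact Or.inr (Or.inr ⟨h2, h1, hx⟩)
  · intro m
    have hc1 : cnt (insert (i, j) Q) m = cnt Q m + (if i = m ∨ j = m then 1 else 0) :=
      cnt_insert Q m i j hQ
    rw [hc1, Finset.union_inter_distrib_right]
    by_cases hmi : m = i
    · rw [if_pos (Or.inl hmi.symm)]
      subst hmi
      have := Po.P2 m _ _ Wc b g (hP m) huiWc hWci hg1 hg2 hgA
      convert this using 2
      ext x
      simp only [hJ, mem_inter, mem_erase]
      constructor
      · rintro ⟨⟨h1, h2, h3⟩, h4⟩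
        exact ⟨h2, hTi x h3 h4, h4⟩
      · rintro ⟨h1, h2, h3⟩
        refine ⟨⟨?_, h1, ?_⟩, h3⟩
        · rintro rfl; exact huj_Sg h2
        · rw [hT, mem_union, mem_union]; exact Or.inl (Or.inl h2)
    by_cases hmj : m = j
    · rw [if_pos (Or.inr hmj.symm)]
      subst hmj
      have := Po.P2 m _ _ Wa y0 p (hP m) hujWa hWaj hp.path hp.geod hpl
      convert this using 2
      ext x
      simp only [hJ, mem_inter, mem_erase]
      constructor
      · rintro ⟨⟨h1, h2, h3⟩, h4⟩
        exact ⟨h1, hTj x h3 h4, h4⟩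
      · rintro ⟨h1, h2, h3⟩
        refine ⟨⟨h1, ?_, ?_⟩, h3⟩
        · rintro rfl; exact hui_Sp h2
        · rw [hT, mem_union]; exact Or.inr h2
    · rw [if_neg (fun h => h.elim (fun h => hmi h.symm) (fun h => hmj h.symm))]
      have : J ∩ Po.Core m = ∅ := by
        rw [← Finset.disjoint_iff_inter_eq_empty, Finset.disjoint_left]
        intro x hx
        exact hTcore m hmi hmj x (hJT hx)
      rw [this, union_empty]
      exact hP m
  · intro m hm
    rcases mem_union.1 hm with h | h
    · exact hun m h
    · by_cases hmi : m = i
      · subst hmi; simp [hJ] at h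
      by_cases hmj : m = j
      · subst hmj; simp [hJ] at h
      exact hTcore m hmi hmj _ (hJT h) (Po.mem m)
  · have h1 := Finset.card_union_le Used J
    have h2 := Finset.card_le_card hJT
    have h3 : T.card ≤ Sg.card + (U.card + 1) + Sp.card := by
      rw [hT]
      refine (Finset.card_union_le _ _).trans ?_
      have := Finset.card_union_le Sg (insert b U)
      have := Finset.card_insert_le b U
      omega
    have h4 := support_card_le g
    have h5 := support_card_le p
    rw [← hSg] at h4
    rw [← hSp] at h5
    rw [Finset.card_insert_of_notMem hQ]
    have h6 : (Q.card + 1) * (ell * A) = Q.card * (ell * A) + ell * A := by ring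
    omega

end
end BS

set_option linter.unusedSectionVars false
namespace BS
open Finset
section
open Classical
variable {V : Type} [Fintype V]

lemma extract {α : Type} [Nonempty α] (Pr : α → Prop) (E : α → Finset V) (c N : ℕ)
    (hE : ∀ a, Pr a → (E a).card ≤ c)
    (h : ∀ B : Finset V, B.card ≤ N * c → ∃ a, Pr a ∧ Disjoint (E a) B) :
    ∃ f : ℕ → α, (∀ j < N, Pr (f j)) ∧
      ∀ i < N, ∀ j < N, i ≠ j → Disjoint (E (f i)) (E (f j)) := by
  have key : ∀ m ≤ N, ∃ f : ℕ → α, (∀ j < m, Pr (f j)) ∧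
      ∀ i < m, ∀ j < m, i ≠ j → Disjoint (E (f i)) (E (f j)) := by
    intro m
    induction m with
    | zero => intro _; exact ⟨fun _ => Classical.arbitrary α, by simp, by simp⟩
    | succ m ih =>
      intro hm
      obtain ⟨f, h1, h2⟩ := ih (by omega)
      obtain ⟨a, ha, hd⟩ := h ((Finset.range m).biUnion (fun j => E (f j))) (by
        refine (Finset.card_biUnion_le_card_mul _ _ c (fun j hj => ?_)).trans ?_
        · exact hE _ (h1 j (by simpa using hj))
        · rw [Finset.card_range]
          exact Nat.mul_le_mul_right _ (by omega))
      have hd' : ∀ j < m, Disjoint (E a) (E (f j)) := fun j hj =>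
        hd.mono_right (Finset.subset_biUnion_of_mem (fun j => E (f j)) (by simpa using hj))
      have hf : ∀ j < m, Function.update f m a j = f j := fun j hj =>
        Function.update_of_ne (by omega) _ _
      refine ⟨Function.update f m a, ?_, ?_⟩
      · intro j hj
        by_cases hjm : j = m
        · subst hjm; rw [Function.update_self]; exact ha
        · rw [hf j (by omega)]; exact h1 j (by omega)
      · intro i hi j hj hij
        by_cases him : i = m
        · subst him
          rw [Function.update_self, hf j (by omega)]
          exact hd' j (by omega)
        · by_cases hjm : j = m
          · subst hjm
            rw [Function.update_self, hf i (by omega)]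
            exact (hd' i (by omega)).symm
          · rw [hf i (by omega), hf j (by omega)]
            exact h2 i (by omega) j (by omega) hij
  exact key N le_rfl

lemma deg_av {H : SimpleGraph V} {S W : Finset V} (h : Disjoint S W) {v : V} (hv : v ∈ S) :
    S.filter (fun y => (av H W).Adj v y) = S.filter (fun y => H.Adj v y) := by
  apply Finset.filter_congr
  intro y hy
  exact ⟨fun hh => hh.1, fun hh =>
    ⟨hh, Finset.disjoint_left.1 h hv, Finset.disjoint_left.1 h hy⟩⟩

/-- Choosing one step avoiding a bad set. -/
lemma step_rob {H : SimpleGraph V} {χ : V → Bool} (hχ : TwoCol H χ) {D L M ρ : ℕ}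
    (hE : Exp H D L M ρ) {w A β R d ω : ℕ} (hrob : Rob H d ω) (hd2 : 2 ≤ d)
    (hβ : 2 * M * w ≤ β) (hβ' : D ≤ β) (h12 : 12 * w ≤ Fintype.card V)
    (hA : 2 * (R + 2 * ρ) + 2 ≤ A) {b : V} {W : Finset V} (hb : Good H β R b W) (hW : W.card ≤ w)
    (B : Finset V) (hWB : W ⊆ B) (hB : B.card + 1 + β ≤ ω) :
    ∃ S : Finset V, Disjoint S B ∧ (∀ v ∈ S, d ≤ (S.filter (fun y => H.Adj v y)).card) ∧
      ∃ y0 ∈ S, ∃ (O : Finset V) (p : (av H W).Walk b y0), StepOut (av H W) b y0 O p ∧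
        Disjoint O W ∧ O.card ≤ A ∧ p.length ≤ A := by
  set Un := univ.filter (fun v => v ∉ W ∧ v ∉ Bl (av H W) {b} (R + 2 * ρ)) with hUn
  have hUnc : Un.card < β := growth_C4 hE hβ hβ' h12 hb hW
  obtain ⟨S, hS1, hS2, hS3⟩ := hrob (insert b (B ∪ Un)) (by
    have h1 := Finset.card_insert_le b (B ∪ Un)
    have h2 := Finset.card_union_le B Un
    omega)
  have hSB : Disjoint S B := hS2.mono_right (subset_union_left.trans (Finset.subset_insert _ _))
  have hSW : Disjoint S W := hSB.mono_right hWB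
  have hSb : b ∉ S := fun h => Finset.disjoint_left.1 hS2 h (by simp)
  have hSr : S ⊆ Bl (av H W) {b} (R + 2 * ρ) := by
    intro v hv
    by_contra hcon
    apply Finset.disjoint_left.1 hS2 hv
    rw [mem_insert, mem_union]
    right; right
    rw [hUn, mem_filter]
    exact ⟨mem_univ _, Finset.disjoint_left.1 hSW hv, hcon⟩
  obtain ⟨y0, hy0, O, p, hp, hpl⟩ := step_pick (hχ.mono (av_le H W)) hS1 hSb hSr (by
    intro v hv
    rw [deg_av hSW hv]
    exact hd2.trans (hS3 v hv))
  refine ⟨S, hSB, hS3, y0, hy0, O, p, hp, hp.disj hb.1, ?_, by omega⟩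
  have := hp.card
  omega

lemma dense_step {H : SimpleGraph V} {χ : V → Bool} (hχ : TwoCol H χ) {D L M ρ : ℕ}
    (hE : Exp H D L M ρ) {w A β R d e ω N : ℕ} (hrob : Rob H d ω) (hd2 : 2 ≤ d)
    (hβ : 2 * M * w ≤ β) (hβ' : D ≤ β) (h12 : 12 * (w + N * A) ≤ Fintype.card V)
    (hA : 2 * (R + 2 * ρ) + 2 ≤ A) (hR : ρ + 1 ≤ R) (he : e + A ≤ d)
    (hω : w + N * e + 1 + β ≤ ω) (h2M : 2 * M * (w + N * A) ≤ N * e) (hDN : D ≤ N * e)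
    (hN : 3 * N * β ≤ 2 * Fintype.card V) (hNe : 1 ≤ N) : StepP H w A β R := by
  intro b W F hWF hb
  have hWc : W.card ≤ w := (Finset.card_le_card subset_union_left).trans hWF
  have : Nonempty V := ⟨b⟩
  obtain ⟨f, hf1, hf2⟩ := extract (V := V) (α := V × Finset V × Finset V)
    (fun a => (∃ p : (av H W).Walk b a.1, StepOut (av H W) b a.1 a.2.1 p ∧ p.length ≤ A) ∧
      Disjoint a.2.1 W ∧ a.2.1.card ≤ A ∧ a.1 ∉ W ∪ F ∧ Disjoint a.2.2 (W ∪ F ∪ a.2.1) ∧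
      a.2.2.card = e ∧ ∀ x ∈ a.2.2, H.Adj a.1 x) (fun a => a.2.2) e N
    (fun a ha => ha.2.2.2.2.2.1.le) (by
      intro B hB
      obtain ⟨S, hS1, hS2, y0, hy0, O, p, hp, hO1, hO2, hpl⟩ := step_rob hχ hE hrob hd2 hβ hβ'
        (by omega) hA hb hWc (W ∪ F ∪ B) (subset_union_left.trans subset_union_left) (by
          have := Finset.card_union_le (W ∪ F) B
          omega)
      have hc : e ≤ ((S.filter (fun y => H.Adj y0 y)) \ O).card := by
        have h1 := Finset.le_card_sdiff O (S.filter (fun y => H.Adj y0 y))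
        have h2 := hS2 y0 hy0
        omega
      obtain ⟨E, hE1, hE2⟩ := Finset.exists_subset_card_eq hc
      have hES : E ⊆ S := hE1.trans (Finset.sdiff_subset.trans (Finset.filter_subset _ _))
      refine ⟨(y0, O, E), ⟨⟨p, hp, hpl⟩, hO1, hO2, ?_, ?_, hE2, ?_⟩, ?_⟩
      · intro h
        exact Finset.disjoint_left.1 hS1 hy0 (mem_union_left _ h)
      · show Disjoint E (W ∪ F ∪ O)
        rw [Finset.disjoint_union_right]
        refine ⟨hS1.mono hES subset_union_left, ?_⟩
        exact Finset.disjoint_of_subset_left hE1 Finset.sdiff_disjoint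
      · intro x hx
        have := hE1 hx
        rw [mem_sdiff, mem_filter] at this
        exact this.1.2
      · exact hS1.mono hES subset_union_right)
  have hcardE : ((Finset.range N).biUnion (fun j => (f j).2.2)).card = N * e := by
    rw [Finset.card_biUnion]
    · rw [Finset.sum_congr rfl (fun j hj => (hf1 j (by simpa using hj)).2.2.2.2.2.1)]
      simp
    · intro i hi j hj hij
      exact hf2 i (by simpa using hi) j (by simpa using hj) hij
  obtain ⟨j, hj, hj2⟩ := growth_C1 hE (Finset.range N) (fun j => (f j).2.2) (fun j => (f j).2.1)
    (W ∪ F) (w + N * A) (fun j hj => (hf1 j (by simpa using hj)).2.2.2.2.1)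
    (by
      refine (Finset.card_union_le _ _).trans (Nat.add_le_add hWF ?_)
      refine (Finset.card_biUnion_le_card_mul _ _ A (fun j hj => ?_)).trans (by simp)
      exact (hf1 j (by simpa using hj)).2.2.1)
    (by rw [hcardE]; exact h2M) (by rw [hcardE]; exact hDN) h12
  obtain ⟨⟨p, hp, hpl⟩, a1, a2, a3, a4, a5, a6⟩ := hf1 j (by simpa using hj)
  refine ⟨(f j).1, (f j).2.1, p, hp, a1, a2, hpl, ?_, ?_⟩
  · rw [mem_union]
    push Not
    exact ⟨a3, hp.y_nmem⟩
  · have hyn : (f j).1 ∉ W ∪ F ∪ (f j).2.1 := by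
      rw [mem_union]
      push Not
      exact ⟨a3, hp.y_nmem⟩
    have hsub : Bl (av H (W ∪ F ∪ (f j).2.1)) (f j).2.2 ρ ⊆
        Bl (av H (W ∪ F ∪ (f j).2.1)) {(f j).1} R := by
      intro x hx
      obtain ⟨y, hy, q, hq⟩ := mem_Bl.1 hx
      have hadj : (av H (W ∪ F ∪ (f j).2.1)).Adj (f j).1 y :=
        ⟨a6 y hy, hyn, Finset.disjoint_left.1 a4 hy⟩
      exact mem_Bl_singleton.2 ⟨SimpleGraph.Walk.cons hadj q, by
        rw [SimpleGraph.Walk.length_cons]; omega⟩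
    refine le_trans ?_ (Finset.card_le_card hsub)
    rw [Finset.card_range] at hj2
    have : 3 * N * β ≤ 3 * N * (Bl (av H (W ∪ F ∪ (f j).2.1)) (f j).2.2 ρ).card := hN.trans hj2
    exact Nat.le_of_mul_le_mul_left this (by omega)

end
end BS

set_option linter.unusedSectionVars false
namespace BS
open Finset
section
open Classical
variable {V : Type} [Fintype V]

lemma stars {H : SimpleGraph V} {χ : V → Bool} (hχ : TwoCol H χ) {d ω e N : ℕ} (hrob : Rob H d ω)
    (hd : 1 ≤ d) (he : e ≤ d) (W0 : Finset V) (hω : W0.card + N * (e + 1) ≤ ω) :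
    ∃ (c : ℕ → V) (Lf : ℕ → Finset V), (∀ j < N, χ (c j) = true ∧ (Lf j).card = e ∧
      (∀ x ∈ Lf j, H.Adj (c j) x) ∧ Disjoint (insert (c j) (Lf j)) W0) ∧
      ∀ i < N, ∀ j < N, i ≠ j → Disjoint (insert (c i) (Lf i)) (insert (c j) (Lf j)) := by
  have hne : Nonempty V := by
    obtain ⟨S, ⟨v, hv⟩, _⟩ := hrob ∅ (by simp)
    exact ⟨v⟩
  obtain ⟨f, hf1, hf2⟩ := extract (V := V) (α := V × Finset V)
    (fun a => χ a.1 = true ∧ a.2.card = e ∧ (∀ x ∈ a.2, H.Adj a.1 x) ∧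
      Disjoint (insert a.1 a.2) W0) (fun a => insert a.1 a.2) (e + 1) N
    (fun a ha => (Finset.card_insert_le _ _).trans (by have := ha.2.1; omega)) (by
      intro B hB
      obtain ⟨S, ⟨v, hv⟩, hS1, hS2⟩ := hrob (W0 ∪ B) (by
        have := Finset.card_union_le W0 B; omega)
      obtain ⟨c, hc, hcc⟩ : ∃ c ∈ S, χ c = true := by
        by_cases h : χ v = true
        · exact ⟨v, hv, h⟩
        · have h1 := hS2 v hv
          obtain ⟨y, hy⟩ := Finset.card_pos.1 (show 0 < (S.filter (fun y => H.Adj v y)).card by omega)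
          rw [mem_filter] at hy
          refine ⟨y, hy.1, ?_⟩
          have h2 := hχ v y hy.2
          revert h h2
          cases χ v <;> cases χ y <;> simp
      obtain ⟨E, hE1, hE2⟩ := Finset.exists_subset_card_eq (he.trans (hS2 c hc))
      have hES : insert c E ⊆ S := by
        rw [Finset.insert_subset_iff]
        exact ⟨hc, hE1.trans (Finset.filter_subset _ _)⟩
      refine ⟨(c, E), ⟨hcc, hE2, ?_, hS1.mono hES subset_union_left⟩,
        hS1.mono hES subset_union_right⟩
      intro x hx
      exact (mem_filter.1 (hE1 hx)).2)
  exact ⟨fun j => (f j).1, fun j => (f j).2, hf1, hf2⟩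

/-- A valid leg `(source, target, interior)`. -/
def LegOK (H : SimpleGraph V) (ρ : ℕ) (cs ct : ℕ → V) (m0 N : ℕ) (X : Finset V)
    (a : ℕ × ℕ × Finset V) : Prop :=
  a.1 < m0 ∧ a.2.1 < N ∧ Disjoint a.2.2 X ∧ a.2.2.card ≤ 2 * ρ + 1 ∧
    ∃ p : H.Walk (cs a.1) (ct a.2.1), p.length ≤ 2 * ρ + 2 ∧
      ∀ x ∈ p.support, x = cs a.1 ∨ x = ct a.2.1 ∨ x ∈ a.2.2

lemma web {H : SimpleGraph V} {D L M ρ : ℕ} (hE : Exp H D L M ρ) (W0 : Finset V)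
    (m0 N es z pm w : ℕ) (cs ct : ℕ → V) (Ls Lt : ℕ → Finset V) (X : Finset V)
    (hX : X = W0 ∪ (Finset.range m0).image cs ∪ (Finset.range N).image ct)
    (hs : ∀ j < m0, (Ls j).card = es ∧ (∀ x ∈ Ls j, H.Adj (cs j) x) ∧ Disjoint (Ls j) X)
    (hs' : ∀ i < m0, ∀ j < m0, i ≠ j → Disjoint (Ls i) (Ls j))
    (ht : ∀ j < N, (Lt j).card = z ∧ (∀ x ∈ Lt j, H.Adj (ct j) x) ∧ Disjoint (Lt j) X)
    (ht' : ∀ i < N, ∀ j < N, i ≠ j → Disjoint (Lt i) (Lt j))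
    (hct : ∀ i < N, ∀ j < N, ct i = ct j → i = j)
    (hw : X.card + pm * (2 * ρ + 1) ≤ w) (h12 : 12 * w ≤ Fintype.card V)
    (hpN : 2 * pm ≤ N) (hDw : D ≤ w)
    (h1 : 2 * M * w + pm * (2 * ρ + 1) ≤ m0 * es)
    (h2 : 2 * (2 * M * w + pm * (2 * ρ + 1)) ≤ N * z) :
    ∃ Λ : Finset (ℕ × ℕ × Finset V), Λ.card = pm ∧ (∀ a ∈ Λ, LegOK H ρ cs ct m0 N X a) ∧
      (∀ a ∈ Λ, ∀ a' ∈ Λ, a ≠ a' →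
        Disjoint (insert (ct a.2.1) a.2.2) (insert (ct a'.2.1) a'.2.2)) := by
  have hM := hE.M_pos
  have hwM : w ≤ 2 * M * w := by nlinarith
  have key : ∀ p ≤ pm, ∃ Λ : Finset (ℕ × ℕ × Finset V), Λ.card = p ∧
      (∀ a ∈ Λ, LegOK H ρ cs ct m0 N X a) ∧
      (∀ a ∈ Λ, ∀ a' ∈ Λ, a ≠ a' →
        Disjoint (insert (ct a.2.1) a.2.2) (insert (ct a'.2.1) a'.2.2)) := by
    intro p
    induction p with
    | zero => intro _; exact ⟨∅, by simp, by simp, by simp⟩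
    | succ p ih =>
      intro hp
      obtain ⟨Λ, hc, hok, hdis⟩ := ih (by omega)
      set Us := Λ.biUnion (fun a => a.2.2) with hUs
      have hUsc : Us.card ≤ pm * (2 * ρ + 1) := by
        refine (Finset.card_biUnion_le_card_mul _ _ (2 * ρ + 1)
          (fun a ha => (hok a ha).2.2.2.1)).trans ?_
        exact Nat.mul_le_mul_right _ (by omega)
      set un := (Finset.range N) \ Λ.image (fun a => a.2.1) with hun
      have hunc : N ≤ 2 * un.card := by
        have a1 := Finset.le_card_sdiff (Λ.image (fun a => a.2.1)) (Finset.range N)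
        have a2 := Finset.card_image_le (s := Λ) (f := fun a => a.2.1)
        rw [Finset.card_range, ← hun] at a1
        omega
      have hunN : ∀ τ ∈ un, τ < N := by
        intro τ hτ
        rw [hun, mem_sdiff, mem_range] at hτ
        exact hτ.1
      set E := (Finset.range m0).biUnion Ls \ Us with hEd
      set E' := un.biUnion Lt \ Us with hEd'
      have hEc : 2 * M * w ≤ E.card := by
        have a1 := Finset.le_card_sdiff Us ((Finset.range m0).biUnion Ls)
        rw [← hEd] at a1
        have a2 : ((Finset.range m0).biUnion Ls).card = m0 * es := by
          rw [Finset.card_biUnion]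
          · rw [Finset.sum_congr rfl (fun j hj => (hs j (by simpa using hj)).1)]
            simp
          · intro i hi j hj hij
            exact hs' i (by simpa using hi) j (by simpa using hj) hij
        omega
      have hEc' : 2 * M * w ≤ E'.card := by
        have a1 := Finset.le_card_sdiff Us (un.biUnion Lt)
        rw [← hEd'] at a1
        have a2 : (un.biUnion Lt).card = un.card * z := by
          rw [Finset.card_biUnion]
          · rw [Finset.sum_congr rfl (fun j hj => (ht j (hunN j hj)).1)]
            simp
          · intro i hi j hj hij
            exact ht' i (hunN i hi) j (hunN j hj) hij
        have a3 : N * z ≤ 2 * (un.card * z) := by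
          calc N * z ≤ (2 * un.card) * z := Nat.mul_le_mul_right _ hunc
            _ = _ := by ring
        omega
      have hEX : Disjoint E (X ∪ Us) := by
        rw [Finset.disjoint_union_right]
        refine ⟨?_, Finset.sdiff_disjoint⟩
        refine Finset.disjoint_of_subset_left Finset.sdiff_subset ?_
        rw [Finset.disjoint_biUnion_left]
        intro j hj
        exact (hs j (by simpa using hj)).2.2
      have hEX' : Disjoint E' (X ∪ Us) := by
        rw [Finset.disjoint_union_right]
        refine ⟨?_, Finset.sdiff_disjoint⟩
        refine Finset.disjoint_of_subset_left Finset.sdiff_subset ?_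
        rw [Finset.disjoint_biUnion_left]
        intro j hj
        exact (ht j (hunN j hj)).2.2
      obtain ⟨x, hx, y, hy, hxy⟩ := growth_C3 hE E E' (X ∪ Us) w
        ((Finset.card_union_le _ _).trans (by omega)) h12 hEX hEc (by omega) hEX' hEc' (by omega)
      obtain ⟨q, hq⟩ := mem_Bl_singleton.1 hxy
      have hqW := walk_av q (Finset.disjoint_left.1 hEX hx)
      obtain ⟨s, hsm, hxs⟩ := mem_biUnion.1 (mem_sdiff.1 hx).1
      obtain ⟨τ, hτu, hyτ⟩ := mem_biUnion.1 (mem_sdiff.1 hy).1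
      have hsm' : s < m0 := by simpa using hsm
      have hτN := hunN τ hτu
      have hτX : ct τ ∈ X := by
        rw [hX, mem_union]; right
        exact Finset.mem_image_of_mem _ (by simpa using hτN)
      have hτne : ∀ a ∈ Λ, a.2.1 ≠ τ := by
        intro a ha h
        rw [hun, mem_sdiff] at hτu
        exact hτu.2 (h ▸ Finset.mem_image_of_mem (fun a : ℕ × ℕ × Finset V => a.2.1) ha)
      have hnew : ∀ a ∈ Λ, Disjoint (insert (ct a.2.1) a.2.2)
          (insert (ct τ) q.support.toFinset) := by
        intro a ha
        have hoka := hok a ha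
        rw [Finset.disjoint_left]
        intro v hv hv'
        rw [mem_insert] at hv hv'
        have haX : ct a.2.1 ∈ X := by
          rw [hX, mem_union]; right
          exact Finset.mem_image_of_mem _ (by simpa using hoka.2.1)
        rcases hv with rfl | hv
        · rcases hv' with h | h
          · exact hτne a ha (hct _ hoka.2.1 _ hτN h)
          · exact hqW _ (by simpa using h) (mem_union_left _ haX)
        · rcases hv' with rfl | h
          · exact Finset.disjoint_left.1 hoka.2.2.1 hv hτX
          · refine hqW v (by simpa using h) (mem_union_right _ ?_)
            exact mem_biUnion.2 ⟨a, ha, hv⟩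
      refine ⟨insert (s, τ, q.support.toFinset) Λ, ?_, ?_, ?_⟩
      · rw [Finset.card_insert_of_notMem, hc]
        intro h
        exact hτne _ h rfl
      · intro a ha
        rcases mem_insert.1 ha with rfl | ha
        · refine ⟨hsm', hτN, ?_, ?_, ?_⟩
          · rw [Finset.disjoint_left]
            intro v hv hv'
            exact hqW v (by simpa using hv) (mem_union_left _ hv')
          · have := support_card_le q
            show q.support.toFinset.card ≤ 2 * ρ + 1
            omega
          · refine ⟨SimpleGraph.Walk.cons ((hs s hsm').2.1 x hxs)
              ((q.mapLe (av_le _ _)).concat ((ht τ hτN).2.1 y hyτ).symm), ?_, ?_⟩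
            · simp only [SimpleGraph.Walk.length_cons, SimpleGraph.Walk.length_concat,
                SimpleGraph.Walk.length_map, SimpleGraph.Walk.mapLe]
              omega
            · intro v hv
              simp only [SimpleGraph.Walk.support_cons, SimpleGraph.Walk.support_concat,
                List.mem_cons, List.mem_append, SimpleGraph.Walk.support_mapLe_eq_support,
                List.mem_nil_iff, or_false] at hv
              simp only [List.mem_toFinset]
              tauto
        · exact hok a ha
      · intro a ha a' ha' hne
        rcases mem_insert.1 ha with h | ha <;> rcases mem_insert.1 ha' with h' | ha'
        · exact absurd (h.trans h'.symm) hne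
        · rw [h]; exact (hnew a' ha').symm
        · rw [h']; exact hnew a ha
        · exact hdis a ha a' ha' hne
  exact key pm le_rfl

/-- From `q` legs at a common source we get a good unit. -/
lemma unit_good {H : SimpleGraph V} {ρ : ℕ} {cs ct : ℕ → V} {m0 N : ℕ} {X : Finset V}
    {Lt : ℕ → Finset V} {z q s0 w β R : ℕ}
    (ht : ∀ j < N, (Lt j).card = z ∧ (∀ x ∈ Lt j, H.Adj (ct j) x))
    (ht' : ∀ i < N, ∀ j < N, i ≠ j → Disjoint (Lt i) (Lt j))
    (s : ℕ) (Λ : Finset (ℕ × ℕ × Finset V)) (hΛ : Λ.card = q) (hsrc : ∀ a ∈ Λ, a.1 = s)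
    (hok : ∀ a ∈ Λ, LegOK H ρ cs ct m0 N X a)
    (hdis : ∀ a ∈ Λ, ∀ a' ∈ Λ, a ≠ a' →
        Disjoint (insert (ct a.2.1) a.2.2) (insert (ct a'.2.1) a'.2.2))
    (hs0 : 4 * s0 ≤ q) (hwz : 8 * w ≤ q * z) (hβ : 4 * β ≤ q * z) (hR : 2 * ρ + 3 ≤ R) (hz : 1 ≤ z)
    (W : Finset V) (hu : cs s ∉ W)
    (hWC : (W ∩ Λ.biUnion (fun a => insert (ct a.2.1) a.2.2)).card ≤ s0) (hW : W.card ≤ w) :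
    Good H β R (cs s) W := by
  refine ⟨hu, ?_⟩
  have htau : ∀ a ∈ Λ, ∀ a' ∈ Λ, a ≠ a' → a.2.1 ≠ a'.2.1 := by
    intro a ha a' ha' hne h
    refine Finset.disjoint_left.1 (hdis a ha a' ha' hne) (mem_insert_self _ _) ?_
    rw [h]; exact mem_insert_self _ _
  set Λ1 := Λ.filter (fun a => ¬ Disjoint (insert (ct a.2.1) a.2.2) W) with hΛ1
  set Λ2 := Λ.filter (fun a => z < 2 * (Lt a.2.1 ∩ W).card) with hΛ2
  have c1 : Λ1.card ≤ s0 := by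
    refine le_trans ?_ hWC
    have : (Λ1.biUnion (fun a => insert (ct a.2.1) a.2.2 ∩ W)).card ≤
        (W ∩ Λ.biUnion (fun a => insert (ct a.2.1) a.2.2)).card := by
      apply Finset.card_le_card
      intro x hx
      obtain ⟨a, ha, hx⟩ := mem_biUnion.1 hx
      rw [mem_inter] at hx ⊢
      exact ⟨hx.2, mem_biUnion.2 ⟨a, (mem_filter.1 ha).1, hx.1⟩⟩
    refine le_trans ?_ this
    rw [Finset.card_biUnion]
    · have := Finset.card_nsmul_le_sum Λ1 (fun a => (insert (ct a.2.1) a.2.2 ∩ W).card) 1 (by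
        intro a ha
        have h := (mem_filter.1 ha).2
        rw [Finset.not_disjoint_iff_nonempty_inter] at h
        exact h.card_pos)
      simpa using this
    · intro a ha a' ha' hne
      exact (hdis a (mem_filter.1 ha).1 a' (mem_filter.1 ha').1 hne).mono
        Finset.inter_subset_left Finset.inter_subset_left
  have c2 : Λ2.card * z ≤ 2 * w := by
    have h1 : (Λ2.biUnion (fun a => Lt a.2.1 ∩ W)).card ≤ W.card := by
      apply Finset.card_le_card
      intro x hx
      obtain ⟨a, ha, hx⟩ := mem_biUnion.1 hx
      exact (mem_inter.1 hx).2
    rw [Finset.card_biUnion] at h1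
    · have h2 := Finset.card_nsmul_le_sum Λ2 (fun a => 2 * (Lt a.2.1 ∩ W).card) z (by
        intro a ha
        exact (mem_filter.1 ha).2.le)
      rw [← Finset.mul_sum] at h2
      rw [smul_eq_mul] at h2
      omega
    · intro a ha a' ha' hne
      exact (ht' _ (hok a (mem_filter.1 ha).1).2.1 _ (hok a' (mem_filter.1 ha').1).2.1
        (htau a (mem_filter.1 ha).1 a' (mem_filter.1 ha').1 hne)).mono
        Finset.inter_subset_left Finset.inter_subset_left
  have c2' : 4 * Λ2.card ≤ q := by
    have : (4 * Λ2.card) * z ≤ q * z := by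
      have : (4 * Λ2.card) * z = 4 * (Λ2.card * z) := by ring
      omega
    exact Nat.le_of_mul_le_mul_right this hz
  set Λ3 := Λ \ (Λ1 ∪ Λ2) with hΛ3
  have c3 : q ≤ 2 * Λ3.card := by
    have h1 := Finset.le_card_sdiff (Λ1 ∪ Λ2) Λ
    have h2 := Finset.card_union_le Λ1 Λ2
    rw [hΛ, ← hΛ3] at h1
    omega
  have hsub : Λ3.biUnion (fun a => Lt a.2.1 \ W) ⊆ Bl (av H W) {cs s} R := by
    intro x hx
    obtain ⟨a, ha, hx⟩ := mem_biUnion.1 hx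
    rw [hΛ3, mem_sdiff, mem_union] at ha
    obtain ⟨haΛ, ha⟩ := ha
    have hdW : Disjoint (insert (ct a.2.1) a.2.2) W := by
      by_contra h
      exact ha (Or.inl (mem_filter.2 ⟨haΛ, h⟩))
    obtain ⟨_, hN, _, _, p, hpl, hps⟩ := hok a haΛ
    have hsa := hsrc a haΛ
    rw [mem_sdiff] at hx
    have hav : ∀ v ∈ p.support, v ∉ W := by
      intro v hv
      rcases hps v hv with h | h | h
      · rw [h, hsa]; exact hu
      · rw [h]; exact Finset.disjoint_left.1 hdW (mem_insert_self _ _)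
      · exact Finset.disjoint_left.1 hdW (mem_insert_of_mem h)
    have hedge : ∀ e ∈ p.edges, e ∈ (av H W).edgeSet := by
      intro e he
      induction e using Sym2.ind with
      | _ v v' =>
        rw [SimpleGraph.mem_edgeSet]
        exact ⟨p.adj_of_mem_edges he, hav _ (p.fst_mem_support_of_mem_edges he),
          hav _ (p.snd_mem_support_of_mem_edges he)⟩
    have hadj : (av H W).Adj (ct a.2.1) x :=
      ⟨(ht _ hN).2 x hx.1, Finset.disjoint_left.1 hdW (mem_insert_self _ _), hx.2⟩
    rw [← hsa]
    refine mem_Bl_singleton.2 ⟨(p.transfer _ hedge).concat hadj, ?_⟩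
    rw [SimpleGraph.Walk.length_concat, SimpleGraph.Walk.length_transfer]
    omega
  refine le_trans ?_ (Finset.card_le_card hsub)
  rw [Finset.card_biUnion]
  · have h2 := Finset.card_nsmul_le_sum Λ3 (fun a => 2 * (Lt a.2.1 \ W).card) z (by
      intro a ha
      rw [hΛ3, mem_sdiff, mem_union] at ha
      have h3 : ¬ z < 2 * (Lt a.2.1 ∩ W).card := fun h => ha.2 (Or.inr (mem_filter.2 ⟨ha.1, h⟩))
      have h4 := Finset.card_sdiff_add_card_inter (Lt a.2.1) W
      rw [(ht _ (hok a ha.1).2.1).1] at h4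
      omega)
    rw [← Finset.mul_sum, smul_eq_mul] at h2
    have h5 : q * z ≤ 2 * (Λ3.card * z) := by
      calc q * z ≤ (2 * Λ3.card) * z := Nat.mul_le_mul_right _ c3
        _ = _ := by ring
    omega
  · intro a ha a' ha' hne
    have h1 := (mem_sdiff.1 ha).1
    have h2 := (mem_sdiff.1 ha').1
    exact (ht' _ (hok a h1).2.1 _ (hok a' h2).2.1 (htau a h1 a' h2 hne)).mono
        Finset.sdiff_subset Finset.sdiff_subset

end
end BS

set_option linter.unusedSectionVars false
namespace BS
open Finset
section
open Classical
variable {V : Type} [Fintype V]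


lemma unit_exists {H : SimpleGraph V} {χ : V → Bool} (hχ : TwoCol H χ) {D L M ρ d ω : ℕ}
    (hE : Exp H D L M ρ) (hrob : Rob H d ω) (hd : 1 ≤ d)
    (m0 q es z ww s0 w β R c0 : ℕ) (hm0 : 1 ≤ m0) (hes : es ≤ d) (hzd : z ≤ d) (hz : 1 ≤ z)
    (hω : c0 + m0 * (es + 1) + (2 * (m0 * q)) * (z + 1) ≤ ω)
    (hww : c0 + m0 + 2 * (m0 * q) + (m0 * q) * (2 * ρ + 1) ≤ ww)
    (h12 : 12 * ww ≤ Fintype.card V) (hDw : D ≤ ww)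
    (h1 : 2 * M * ww + (m0 * q) * (2 * ρ + 1) ≤ m0 * es)
    (h2 : 2 * (2 * M * ww + (m0 * q) * (2 * ρ + 1)) ≤ (2 * (m0 * q)) * z)
    (hs0 : 4 * s0 ≤ q) (hwz : 8 * w ≤ q * z) (hβ : 4 * β ≤ q * z) (hR : 2 * ρ + 3 ≤ R)
    (W0 : Finset V) (hW0 : W0.card ≤ c0) :
    ∃ (u : V) (C : Finset V), χ u = true ∧ u ∈ C ∧ C.card ≤ 1 + q * (2 * ρ + 2) ∧ Disjoint C W0 ∧
      ∀ W : Finset V, u ∉ W → (W ∩ C).card ≤ s0 → W.card ≤ w → Good H β R u W := by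
  obtain ⟨cs, Ls, hs1, hs2⟩ := stars hχ (e := es) (N := m0) hrob hd hes W0 (by omega)
  set Y := W0 ∪ (Finset.range m0).biUnion (fun j => insert (cs j) (Ls j)) with hY
  have hYc : Y.card ≤ c0 + m0 * (es + 1) := by
    refine (Finset.card_union_le _ _).trans (Nat.add_le_add hW0 ?_)
    refine (Finset.card_biUnion_le_card_mul _ _ (es + 1) ?_).trans (by simp)
    intro j hj
    have := (hs1 j (by simpa using hj)).2.1
    have := Finset.card_insert_le (cs j) (Ls j)
    omega
  set N := 2 * (m0 * q) with hN
  obtain ⟨ct, Lt, ht1, ht2⟩ := stars hχ (e := z) (N := N) hrob hd hzd Y (by omega)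
  have hWY : W0 ⊆ Y := subset_union_left
  have hsY : ∀ j < m0, insert (cs j) (Ls j) ⊆ Y := by
    intro j hj x hx
    rw [hY, mem_union]; right
    exact mem_biUnion.2 ⟨j, by simpa using hj, hx⟩
  have hirr : ∀ (c : V) (E : Finset V), (∀ x ∈ E, H.Adj c x) → c ∉ E := by
    intro c E h hc
    exact (h c hc).ne rfl
  set X := W0 ∪ (Finset.range m0).image cs ∪ (Finset.range N).image ct with hX
  have hXc : X.card ≤ c0 + m0 + N := by
    refine (Finset.card_union_le _ _).trans (Nat.add_le_add ((Finset.card_union_le _ _).trans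
      (Nat.add_le_add hW0 ?_)) ?_)
    · exact Finset.card_image_le.trans (by simp)
    · exact Finset.card_image_le.trans (by simp)
  have hLsX : ∀ j < m0, Disjoint (Ls j) X := by
    intro j hj
    rw [hX, Finset.disjoint_union_right, Finset.disjoint_union_right]
    refine ⟨⟨(hs1 j hj).2.2.2.mono_left (Finset.subset_insert _ _), ?_⟩, ?_⟩
    · rw [Finset.disjoint_right]
      intro x hx hx'
      obtain ⟨i, hi, rfl⟩ := mem_image.1 hx
      have hi' : i < m0 := by simpa using hi
      by_cases hij : i = j
      · subst hij; exact hirr _ _ (hs1 i hj).2.2.1 hx'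
      · exact Finset.disjoint_left.1 (hs2 i hi' j hj hij) (mem_insert_self _ _)
          (mem_insert_of_mem hx')
    · rw [Finset.disjoint_right]
      intro x hx hx'
      obtain ⟨i, hi, rfl⟩ := mem_image.1 hx
      have hi' : i < N := by simpa using hi
      exact Finset.disjoint_left.1 (ht1 i hi').2.2.2 (mem_insert_self _ _)
        (hsY j hj (mem_insert_of_mem hx'))
  have hLtX : ∀ j < N, Disjoint (Lt j) X := by
    intro j hj
    have hYj := (ht1 j hj).2.2.2.mono_left (Finset.subset_insert (ct j) (Lt j))
    rw [hX, Finset.disjoint_union_right, Finset.disjoint_union_right]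
    refine ⟨⟨hYj.mono_right hWY, ?_⟩, ?_⟩
    · rw [Finset.disjoint_right]
      intro x hx hx'
      obtain ⟨i, hi, rfl⟩ := mem_image.1 hx
      have hi' : i < m0 := by simpa using hi
      exact Finset.disjoint_left.1 hYj hx' (hsY i hi' (mem_insert_self _ _))
    · rw [Finset.disjoint_right]
      intro x hx hx'
      obtain ⟨i, hi, rfl⟩ := mem_image.1 hx
      have hi' : i < N := by simpa using hi
      by_cases hij : i = j
      · subst hij; exact hirr _ _ (ht1 i hj).2.2.1 hx'
      · exact Finset.disjoint_left.1 (ht2 i hi' j hj hij) (mem_insert_self _ _)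
          (mem_insert_of_mem hx')
  have hLt2 : ∀ i < N, ∀ j < N, i ≠ j → Disjoint (Lt i) (Lt j) := fun i hi j hj hij =>
      (ht2 i hi j hj hij).mono (Finset.subset_insert _ _) (Finset.subset_insert _ _)
  obtain ⟨Λ, hΛc, hok, hdis⟩ := web hE W0 m0 N es z (m0 * q) ww cs ct Ls Lt X hX
    (fun j hj => ⟨(hs1 j hj).2.1, (hs1 j hj).2.2.1, hLsX j hj⟩)
    (fun i hi j hj hij => (hs2 i hi j hj hij).mono (Finset.subset_insert _ _)
      (Finset.subset_insert _ _))
    (fun j hj => ⟨(ht1 j hj).2.1, (ht1 j hj).2.2.1, hLtX j hj⟩) hLt2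
    (by
      intro i hi j hj h
      by_contra hij
      refine Finset.disjoint_left.1 (ht2 i hi j hj hij) (mem_insert_self _ _) ?_
      rw [h]; exact mem_insert_self _ _)
    (by omega) h12 (by omega) hDw h1 h2
  obtain ⟨s, hs, hsq⟩ := Finset.exists_le_card_fiber_of_mul_le_card_of_maps_to
    (s := Λ) (t := Finset.range m0) (f := fun a => a.1) (n := q)
    (fun a ha => by simpa using (hok a ha).1) ⟨0, by simp; omega⟩ (by simp [hΛc])
  have hs' : s < m0 := by simpa using hs
  obtain ⟨Λ', hΛ', hΛ'c⟩ := Finset.exists_subset_card_eq hsq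
  have hΛs : ∀ a ∈ Λ', a ∈ Λ ∧ a.1 = s := by
    intro a ha
    have := hΛ' ha
    rwa [mem_filter] at this
  refine ⟨cs s, insert (cs s) (Λ'.biUnion (fun a => insert (ct a.2.1) a.2.2)), (hs1 s hs').1,
    mem_insert_self _ _, ?_, ?_, ?_⟩
  · refine (Finset.card_insert_le _ _).trans ?_
    have := Finset.card_biUnion_le_card_mul Λ' (fun a => insert (ct a.2.1) a.2.2) (2 * ρ + 2) (by
      intro a ha
      refine (Finset.card_insert_le _ _).trans ?_
      have := (hok a (hΛs a ha).1).2.2.2.1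
      omega)
    rw [hΛ'c] at this
    omega
  · rw [Finset.disjoint_insert_left]
    refine ⟨Finset.disjoint_left.1 (hs1 s hs').2.2.2 (mem_insert_self _ _), ?_⟩
    rw [Finset.disjoint_biUnion_left]
    intro a ha
    have hoka := hok a (hΛs a ha).1
    rw [Finset.disjoint_insert_left]
    refine ⟨fun h => Finset.disjoint_left.1 (ht1 _ hoka.2.1).2.2.2 (mem_insert_self _ _) (hWY h), ?_⟩
    refine hoka.2.2.1.mono_right ?_
    intro x hx
    rw [hX, mem_union, mem_union]; exact Or.inl (Or.inl hx)
  · intro W hu hWC hW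
    refine unit_good (m0 := m0) (N := N) (X := X) (Lt := Lt) (z := z) (q := q) (s0 := s0) (w := w)
      (ρ := ρ) (ct := ct)
      (fun j hj => ⟨(ht1 j hj).2.1, (ht1 j hj).2.2.1⟩) hLt2 s Λ' hΛ'c (fun a ha => (hΛs a ha).2)
      (fun a ha => hok a (hΛs a ha).1)
      (fun a ha a' ha' => hdis a (hΛs a ha).1 a' (hΛs a' ha').1) hs0 hwz hβ hR hz W hu ?_ hW
    refine le_trans (Finset.card_le_card ?_) hWC
    exact Finset.inter_subset_inter_left (Finset.subset_insert _ _)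

lemma dense_ports {H : SimpleGraph V} {χ : V → Bool} (hχ : TwoCol H χ) {D L M ρ d ω : ℕ}
    (hE : Exp H D L M ρ) (hrob : Rob H d ω) (hd : 1 ≤ d)
    (k m0 q es z ww w1 w β R A : ℕ) (hm0 : 1 ≤ m0) (hes : es ≤ d) (hzd : z ≤ d) (hz : 1 ≤ z)
    (hω : k * (1 + q * (2 * ρ + 2)) + m0 * (es + 1) + (2 * (m0 * q)) * (z + 1) ≤ ω)
    (hww : k * (1 + q * (2 * ρ + 2)) + m0 + 2 * (m0 * q) + (m0 * q) * (2 * ρ + 1) ≤ ww)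
    (h12 : 12 * ww ≤ Fintype.card V) (hDw : D ≤ ww)
    (h1 : 2 * M * ww + (m0 * q) * (2 * ρ + 1) ≤ m0 * es)
    (h2 : 2 * (2 * M * ww + (m0 * q) * (2 * ρ + 1)) ≤ (2 * (m0 * q)) * z)
    (hs0 : 4 * (2 * k * (A + 1)) ≤ q) (hwz : 8 * w ≤ q * z) (hβ : 4 * β ≤ q * z)
    (hR : 2 * ρ + 3 ≤ R) (htot : k * (1 + q * (2 * ρ + 2)) + w1 ≤ w) :
    Nonempty (Ports H χ k w1 w A β R) := by
  have hne : Nonempty V := by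
    obtain ⟨S, ⟨v, hv⟩, _⟩ := hrob ∅ (by simp)
    exact ⟨v⟩
  obtain ⟨f, hf1, hf2⟩ := extract (V := V) (α := V × Finset V)
    (fun a => χ a.1 = true ∧ a.1 ∈ a.2 ∧ a.2.card ≤ 1 + q * (2 * ρ + 2) ∧
      ∀ W : Finset V, a.1 ∉ W → (W ∩ a.2).card ≤ 2 * k * (A + 1) → W.card ≤ w → Good H β R a.1 W)
    (fun a => a.2) (1 + q * (2 * ρ + 2)) k (fun a ha => ha.2.2.1) (by
      intro B hB
      obtain ⟨u, C, a1, a2, a3, a4, a5⟩ := unit_exists hχ hE hrob hd m0 q es z ww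
        (2 * k * (A + 1)) w β R _ hm0 hes hzd hz hω hww h12 hDw h1 h2 hs0 hwz hβ hR B hB
      exact ⟨(u, C), ⟨a1, a2, a3, a5⟩, a4⟩)
  have htotc : ((univ : Finset (Fin k)).biUnion (fun m => (f m).2)).card ≤
      k * (1 + q * (2 * ρ + 2)) := by
    have := Finset.card_biUnion_le_card_mul (univ : Finset (Fin k)) (fun m => (f m).2)
      (1 + q * (2 * ρ + 2)) (fun m _ => (hf1 m m.2).2.2.1)
    simpa using this
  refine ⟨{ u := fun m => (f m).1, Core := fun m => (f m).2,
            P := fun _ q S => S.card ≤ q * (A + 1),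
            mem := fun m => (hf1 m m.2).2.1,
            disj := fun m m' h => hf2 m m.2 m' m'.2 (fun h' => h (Fin.ext h')),
            col := fun m => (hf1 m m.2).1,
            tot := by omega,
            P0 := by simp,
            P1 := ?_, P2 := ?_ }⟩
  · intro m q' S W hS hq hu hWC hW
    refine (hf1 m m.2).2.2.2 W hu ?_ ?_
    · rw [hWC]
      exact hS.trans (Nat.mul_le_mul_right _ hq)
    · have a1 : W ⊆ (W \ univ.biUnion (fun m : Fin k => (f m).2)) ∪
          univ.biUnion (fun m : Fin k => (f m).2) := by
        intro x hx; by_cases h : x ∈ univ.biUnion (fun m : Fin k => (f m).2) <;> simp_all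
      have a2 := (Finset.card_le_card a1).trans (Finset.card_union_le _ _)
      omega
  · intro m q' S W x g hS hu hWC hg hgd hgA
    refine (Finset.card_union_le _ _).trans ?_
    have a1 := Finset.card_le_card ((Finset.erase_subset (f m).1 (g.support.toFinset ∩ (f m).2)).trans
      Finset.inter_subset_left)
    have a2 := support_card_le g
    have a3 : (q' + 1) * (A + 1) = q' * (A + 1) + (A + 1) := by ring
    omega

end
end BS

set_option linter.unusedSectionVars false
namespace BS
open Finset
section
open Classical
variable {V : Type} [Fintype V]


/-- degree of `v` into `S` -/
noncomputable def dg (H : SimpleGraph V) (S : Finset V) (v : V) : ℕ :=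
  (S.filter (fun y => H.Adj v y)).card

/-- twice the number of edges inside `S` -/
noncomputable def es (H : SimpleGraph V) (S : Finset V) : ℕ := ∑ v ∈ S, dg H S v

lemma dg_union {H : SimpleGraph V} {S T : Finset V} (h : Disjoint S T) (v : V) :
    dg H (S ∪ T) v = dg H S v + dg H T v := by
  unfold dg
  rw [Finset.filter_union, Finset.card_union_of_disjoint]
  exact Finset.disjoint_filter_filter h

lemma dg_mono {H : SimpleGraph V} {S T : Finset V} (h : S ⊆ T) (v : V) : dg H S v ≤ dg H T v :=
  Finset.card_le_card (Finset.filter_subset_filter _ h)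

lemma dg_comm {H : SimpleGraph V} (S T : Finset V) :
    ∑ v ∈ S, dg H T v = ∑ v ∈ T, dg H S v := by
  have := Finset.sum_card_bipartiteAbove_eq_sum_card_bipartiteBelow (s := S) (t := T)
    (fun a b => H.Adj a b)
  unfold dg
  unfold Finset.bipartiteAbove Finset.bipartiteBelow at this
  rw [this]
  simp only [SimpleGraph.adj_comm]

lemma es_union {H : SimpleGraph V} {S T : Finset V} (h : Disjoint S T) :
    es H (S ∪ T) = es H S + es H T + 2 * ∑ v ∈ S, dg H T v := by
  unfold es
  rw [Finset.sum_union h]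
  simp only [dg_union h, Finset.sum_add_distrib]
  rw [dg_comm T S]
  ring

lemma es_mono {H : SimpleGraph V} {S T : Finset V} (h : S ⊆ T) : es H S ≤ es H T := by
  unfold es
  calc ∑ v ∈ S, dg H S v ≤ ∑ v ∈ S, dg H T v := Finset.sum_le_sum (fun v _ => dg_mono h v)
    _ ≤ _ := Finset.sum_le_sum_of_subset h

lemma dg_self {H : SimpleGraph V} (v : V) : dg H {v} v = 0 := by
  unfold dg
  rw [Finset.card_eq_zero, Finset.filter_eq_empty_iff]
  intro y hy h
  rw [mem_singleton] at hy
  exact h.ne hy.symm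

lemma es_erase {H : SimpleGraph V} {S : Finset V} {v : V} (hv : v ∈ S) :
    es H S = es H (S.erase v) + 2 * dg H S v := by
  have h1 : S = {v} ∪ S.erase v := by
    rw [← Finset.insert_eq, Finset.insert_erase hv]
  have hd : Disjoint {v} (S.erase v) := by simp
  have h2 := es_union (H := H) hd
  have h3 := dg_union (H := H) hd v
  rw [← h1] at h2 h3
  rw [h2, h3]
  simp [es, dg_self]

lemma exists_min_core {H : SimpleGraph V} {D : ℕ} (hD : 1 ≤ D) {S0 : Finset V} (hne : S0.Nonempty)
    (h : D * S0.card ≤ es H S0) :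
    ∃ S : Finset V, S.Nonempty ∧ S ⊆ S0 ∧ ∀ v ∈ S, D / 2 ≤ dg H S v := by
  obtain ⟨S, hS, hmin⟩ := Finset.exists_min_image
    (S0.powerset.filter (fun S => S.Nonempty ∧ D * S.card ≤ es H S)) Finset.card
    ⟨S0, by simp [hne, h]⟩
  rw [mem_filter, mem_powerset] at hS
  obtain ⟨hSS, hSne, hSe⟩ := hS
  refine ⟨S, hSne, hSS, ?_⟩
  intro v hv
  by_contra hcon
  have h1 := es_erase (H := H) hv
  have h2 := Finset.card_erase_add_one hv
  have h3 : D * S.card = D * (S.erase v).card + D := by rw [← h2]; ring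
  have h4 : D * (S.erase v).card ≤ es H (S.erase v) := by omega
  have h5 : (S.erase v).Nonempty := by
    by_contra he
    rw [Finset.not_nonempty_iff_eq_empty] at he
    rw [he] at h1 h3
    have : dg H S v = 0 := by
      have h6 : S ⊆ {v} := by
        intro x hx
        by_contra hx'
        have : x ∈ S.erase v := mem_erase.2 ⟨by simpa using hx', hx⟩
        rw [he] at this
        simp at this
      have := dg_mono (H := H) h6 v
      rw [dg_self] at this
      omega
    have h7 : es H (∅ : Finset V) = 0 := by simp [es]
    rw [h7] at h1
    rw [Finset.card_empty, Nat.mul_zero] at h3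
    omega
  have h6 := hmin (S.erase v) (by
    rw [mem_filter, mem_powerset]
    exact ⟨(Finset.erase_subset _ _).trans hSS, h5, h4⟩)
  omega

lemma rob_of {H : SimpleGraph V} {D : ℕ} (hD : 1 ≤ D)
    (hsum : 2 * D * Fintype.card V ≤ es H univ)
    (W : Finset V) (hW : 2 * ∑ v ∈ W, dg H univ v < D * Fintype.card V) :
    ∃ S : Finset V, S.Nonempty ∧ Disjoint S W ∧ ∀ v ∈ S, D / 2 ≤ dg H S v := by
  have hd : Disjoint W (univ \ W) := Finset.disjoint_sdiff
  have h1 := es_union (H := H) hd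
  rw [Finset.union_sdiff_of_subset (Finset.subset_univ _)] at h1
  have h2 : es H W + ∑ v ∈ W, dg H (univ \ W) v = ∑ v ∈ W, dg H univ v := by
    unfold es
    rw [← Finset.sum_add_distrib]
    refine Finset.sum_congr rfl (fun v _ => ?_)
    rw [← dg_union hd, Finset.union_sdiff_of_subset (Finset.subset_univ _)]
  have h3 : D * (univ \ W).card ≤ D * Fintype.card V :=
    Nat.mul_le_mul_left _ (Finset.card_le_univ _)
  have h4 : D * Fintype.card V < es H (univ \ W) := by
    have : 2 * D * Fintype.card V = 2 * (D * Fintype.card V) := by ring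
    omega
  have hne : (univ \ W : Finset V).Nonempty := by
    by_contra he
    rw [Finset.not_nonempty_iff_eq_empty] at he
    rw [he] at h4
    simp [es] at h4
  obtain ⟨S, a, b, c⟩ := exists_min_core hD hne (h3.trans h4.le)
  exact ⟨S, a, (hd.mono_right b).symm, c⟩

lemma heavy_tk {G : SimpleGraph V} {k : ℕ} (T : Finset V) (hk : k ≤ T.card)
    (hT : ∀ x ∈ T, ∀ y ∈ T, x ≠ y →
      2 * k * k ≤ (univ.filter (fun z => G.Adj x z ∧ G.Adj y z)).card) : HasTK G k 1 := by
  obtain ⟨T', hT', hc⟩ := Finset.exists_subset_card_eq hk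
  let e := T'.equivFinOfCardEq hc
  set b : Fin k → V := fun i => (e.symm i : V) with hb
  have hinj : Function.Injective b := fun i j h => e.symm.injective (Subtype.ext h)
  have hbT : ∀ i, b i ∈ T := fun i => hT' (e.symm i).2
  refine greedy b hinj (fun Q U => U.card ≤ Q.card) (by simp) ?_
  intro Q U hU i j hij hQ
  have hQc : Q.card < k * k := by
    have h1 : (insert (i, j) Q).card ≤ Fintype.card (Fin k × Fin k) := Finset.card_le_univ _
    rw [Finset.card_insert_of_notMem hQ, Fintype.card_prod, Fintype.card_fin] at h1
    omega
  have hk1 : k ≤ k * k := Nat.le_mul_self k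
  have h2 := hT (b i) (hbT i) (b j) (hbT j) (fun h => hij.ne (hinj h))
  set N := univ.filter (fun z => G.Adj (b i) z ∧ G.Adj (b j) z) with hN
  have hUb : (U ∪ univ.image b).card < N.card := by
    have h3 := Finset.card_union_le U (univ.image b)
    have h4 := Finset.card_image_le (s := (univ : Finset (Fin k))) (f := b)
    rw [Finset.card_univ, Fintype.card_fin] at h4
    have : 2 * k * k = k * k + k * k := by ring
    omega
  obtain ⟨z, hz, hz'⟩ := Finset.exists_mem_notMem_of_card_lt_card hUb
  rw [hN, mem_filter] at hz
  rw [mem_union, not_or] at hz'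
  have hbz : ∀ m, b m ≠ z := fun m h => hz'.2 (mem_image.2 ⟨m, mem_univ _, h⟩)
  refine ⟨{z}, by simpa using hz'.1, fun m h => hbz m (by simpa using h), ?_, ?_⟩
  · refine ⟨SimpleGraph.Walk.cons hz.2.1 (SimpleGraph.Walk.cons hz.2.2.symm SimpleGraph.Walk.nil),
      ?_, by simp, ?_⟩
    · simp only [SimpleGraph.Walk.cons_isPath_iff, SimpleGraph.Walk.support_cons,
        SimpleGraph.Walk.support_nil, SimpleGraph.Walk.IsPath.nil, List.mem_cons, List.mem_nil_iff,
        or_false, not_or, true_and]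
      exact ⟨(hbz j).symm, hbz i, fun h => hij.ne (hinj h)⟩
    · intro x hx
      simp only [SimpleGraph.Walk.support_cons, SimpleGraph.Walk.support_nil, List.mem_cons,
        List.mem_nil_iff, or_false] at hx
      simp only [mem_insert, mem_singleton]
      tauto
  · show (U ∪ {z}).card ≤ (insert (i, j) Q).card
    rw [Finset.card_insert_of_notMem hQ]
    have := Finset.card_union_le U {z}
    rw [Finset.card_singleton] at this
    omega

lemma card_tuples (N : Finset V) (t : ℕ) :
    (univ.filter (fun σ : Fin t → V => ∀ i, σ i ∈ N)).card = N.card ^ t := by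
  have : univ.filter (fun σ : Fin t → V => ∀ i, σ i ∈ N) = Fintype.piFinset (fun _ => N) := by
    ext σ; simp
  rw [this, Fintype.card_piFinset]
  simp

lemma drc_core {G : SimpleGraph V} {k : ℕ} (W : Finset V) (t : ℕ) (hn : 1 ≤ Fintype.card V)
    (h : k * Fintype.card V ^ t + W.card ^ 2 * (2 * k * k) ^ t ≤ ∑ w ∈ W, dg G univ w ^ t) :
    HasTK G k 1 := by
  let cod : V → V → Finset V := fun x y => univ.filter (fun z => G.Adj x z ∧ G.Adj y z)
  let LP : Finset (V × V) := (W ×ˢ W).filter (fun p => (cod p.1 p.2).card < 2 * k * k)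
  let Sσ : (Fin t → V) → Finset V := fun σ => W.filter (fun w => ∀ i, G.Adj w (σ i))
  let Lσ : (Fin t → V) → Finset (V × V) := fun σ =>
    LP.filter (fun p => ∀ i, G.Adj p.1 (σ i) ∧ G.Adj p.2 (σ i))
  have s1 : ∑ σ, (Sσ σ).card = ∑ w ∈ W, dg G univ w ^ t := by
    have := Finset.sum_card_bipartiteAbove_eq_sum_card_bipartiteBelow
      (s := (univ : Finset (Fin t → V))) (t := W) (fun σ w => ∀ i, G.Adj w (σ i))
    unfold Finset.bipartiteAbove Finset.bipartiteBelow at this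
    rw [show ∑ σ, (Sσ σ).card = _ from this]
    refine Finset.sum_congr rfl (fun w _ => ?_)
    have h1 := card_tuples (univ.filter (fun y => G.Adj w y)) t
    rw [show dg G univ w ^ t = _ from h1.symm]
    congr 1
    ext σ; simp
  have s2 : ∑ σ, (Lσ σ).card ≤ W.card ^ 2 * (2 * k * k) ^ t := by
    have := Finset.sum_card_bipartiteAbove_eq_sum_card_bipartiteBelow
      (s := (univ : Finset (Fin t → V))) (t := LP)
      (fun σ p => ∀ i, G.Adj p.1 (σ i) ∧ G.Adj p.2 (σ i))
    unfold Finset.bipartiteAbove Finset.bipartiteBelow at this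
    rw [show ∑ σ, (Lσ σ).card = _ from this]
    have h3 : ∀ p ∈ LP, (univ.filter (fun σ : Fin t → V =>
        ∀ i, G.Adj p.1 (σ i) ∧ G.Adj p.2 (σ i))).card ≤ (2 * k * k) ^ t := by
      intro p hp
      have h1 := card_tuples (cod p.1 p.2) t
      have h2 : univ.filter (fun σ : Fin t → V => ∀ i, G.Adj p.1 (σ i) ∧ G.Adj p.2 (σ i)) =
          univ.filter (fun σ : Fin t → V => ∀ i, σ i ∈ cod p.1 p.2) := by
        ext σ; simp [cod]
      rw [h2, h1]
      exact Nat.pow_le_pow_left (mem_filter.1 hp).2.le t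
    refine (Finset.sum_le_card_nsmul _ _ _ h3).trans ?_
    rw [smul_eq_mul]
    refine Nat.mul_le_mul_right _ ?_
    refine (Finset.card_filter_le _ _).trans ?_
    rw [Finset.card_product, sq]
  have ex : ∃ σ, k + (Lσ σ).card ≤ (Sσ σ).card := by
    by_contra hcon
    push Not at hcon
    have hne : Nonempty V := Fintype.card_pos_iff.1 hn
    have h4 : ∑ σ, (Sσ σ).card < ∑ σ : Fin t → V, (k + (Lσ σ).card) :=
      Finset.sum_lt_sum_of_nonempty univ_nonempty (fun σ _ => hcon σ)
    rw [Finset.sum_add_distrib, Finset.sum_const, Finset.card_univ, Fintype.card_fun,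
      Fintype.card_fin, smul_eq_mul, mul_comm] at h4
    omega
  obtain ⟨σ, hσ⟩ := ex
  refine heavy_tk (Sσ σ \ (Lσ σ |>.filter (fun p => p.1 ≠ p.2)).image Prod.fst) ?_ ?_
  · have h1 := Finset.le_card_sdiff ((Lσ σ |>.filter (fun p => p.1 ≠ p.2)).image Prod.fst) (Sσ σ)
    have h2 := (Finset.card_image_le (s := (Lσ σ).filter (fun p => p.1 ≠ p.2))
      (f := Prod.fst)).trans (Finset.card_filter_le _ _)
    omega
  · intro x hx y hy hxy
    by_contra hlt
    push Not at hlt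
    rw [mem_sdiff] at hx hy
    apply hx.2
    rw [mem_image]
    refine ⟨(x, y), ?_, rfl⟩
    have hxs := mem_filter.1 hx.1
    have hys := mem_filter.1 hy.1
    rw [mem_filter]
    refine ⟨mem_filter.2 ⟨mem_filter.2 ⟨mem_product.2 ⟨hxs.1, hys.1⟩, hlt⟩, ?_⟩, hxy⟩
    exact fun i => ⟨hxs.2 i, hys.2 i⟩

lemma jensen_nat (W : Finset V) (f : V → ℕ) (t : ℕ) :
    (∑ w ∈ W, f w) ^ (t + 1) ≤ W.card ^ t * ∑ w ∈ W, f w ^ (t + 1) := by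
  have h := pow_sum_div_card_le_sum_pow (s := W) (f := fun w => (f w : ℝ))
    (fun _ _ => Nat.cast_nonneg _) t
  by_cases hW : W.card = 0
  · rw [Finset.card_eq_zero] at hW; subst hW; simp
  · have hp : (0 : ℝ) < (W.card : ℝ) ^ t := by positivity
    rw [div_le_iff₀ hp] at h
    have h' : ((∑ w ∈ W, f w : ℕ) : ℝ) ^ (t + 1) ≤
        ((W.card ^ t * ∑ w ∈ W, f w ^ (t + 1) : ℕ) : ℝ) := by
      push_cast
      linarith
    exact_mod_cast h'

lemma drc {G : SimpleGraph V} {k P : ℕ} (hk : 1 ≤ k) (hP : 2 ≤ P) (W : Finset V) (hW : 1 ≤ W.card)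
    (h1 : W.card * Fintype.card V ≤ P * ∑ w ∈ W, dg G univ w)
    (h2 : 2 * k * k * P ^ 9 ≤ Fintype.card V)
    (h3 : 2 * (2 * k * P) ^ 8 ≤ W.card ^ 7) : HasTK G k 1 := by
  set a := W.card with ha
  set n := Fintype.card V with hn
  set B := P ^ 8 with hB
  have hB2 : 2 ≤ B := by
    calc 2 ≤ P := hP
      _ ≤ P ^ 8 := Nat.le_self_pow (by norm_num) P
  have hex : ∃ t, 2 * a ≤ B ^ t := by
    refine ⟨2 * a, ?_⟩
    exact (Nat.lt_pow_self (by omega)).le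
  obtain ⟨t, ht, htmin⟩ : ∃ t, 2 * a ≤ B ^ (t + 1) ∧ B ^ t < 2 * a := by
    have h4 := Nat.find_spec hex
    have h5 : Nat.find hex ≠ 0 := by
      intro h0; rw [h0] at h4; simp at h4; omega
    obtain ⟨t, ht⟩ := Nat.exists_eq_succ_of_ne_zero h5
    refine ⟨t, by rw [ht] at h4; exact h4, ?_⟩
    have := Nat.find_min hex (m := t) (by omega)
    omega
  have hJ := jensen_nat W (fun w => dg G univ w) t
  -- P^(t+1) Σ deg^(t+1) >= a n^(t+1)
  have hJ2 : a * n ^ (t + 1) ≤ P ^ (t + 1) * ∑ w ∈ W, dg G univ w ^ (t + 1) := by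
    have h5 := Nat.pow_le_pow_left h1 (t + 1)
    rw [mul_pow, mul_pow] at h5
    have h6 : a ^ t * (a * n ^ (t + 1)) ≤ a ^ t * (P ^ (t + 1) * ∑ w ∈ W, dg G univ w ^ (t + 1)) := by
      calc a ^ t * (a * n ^ (t + 1)) = a ^ (t + 1) * n ^ (t + 1) := by ring
        _ ≤ _ := h5
        _ ≤ P ^ (t + 1) * (a ^ t * ∑ w ∈ W, dg G univ w ^ (t + 1)) := Nat.mul_le_mul_left _ hJ
        _ = _ := by ring
    exact Nat.le_of_mul_le_mul_left h6 (by positivity)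
  have hkP : 2 * (k * P ^ (t + 1)) ≤ a := by
    have h7 : (2 * (k * P ^ (t + 1))) ^ 8 ≤ a ^ 8 := by
      calc (2 * (k * P ^ (t + 1))) ^ 8 = (2 * k * P) ^ 8 * (B ^ t) := by rw [hB]; ring
        _ ≤ (2 * k * P) ^ 8 * (2 * a) := Nat.mul_le_mul_left _ htmin.le
        _ = (2 * (2 * k * P) ^ 8) * a := by ring
        _ ≤ a ^ 7 * a := Nat.mul_le_mul_right _ h3
        _ = a ^ 8 := by ring
    exact le_of_pow_le_pow_left₀ (by norm_num) (Nat.zero_le _) h7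
  have hB3 : 2 * a * (2 * k * k * P) ^ (t + 1) ≤ n ^ (t + 1) := by
    calc 2 * a * (2 * k * k * P) ^ (t + 1) ≤ B ^ (t + 1) * (2 * k * k * P) ^ (t + 1) :=
          Nat.mul_le_mul_right _ ht
      _ = (2 * k * k * P ^ 9) ^ (t + 1) := by rw [← mul_pow, hB]; ring
      _ ≤ _ := Nat.pow_le_pow_left h2 _
  refine drc_core W (t + 1) ?_ ?_
  · have : 0 < 2 * k * k * P ^ 9 := by positivity
    omega
  · have h8 : P ^ (t + 1) * (k * n ^ (t + 1) + a ^ 2 * (2 * k * k) ^ (t + 1)) ≤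
        P ^ (t + 1) * ∑ w ∈ W, dg G univ w ^ (t + 1) := by
      refine le_trans ?_ hJ2
      have e1 : 2 * (P ^ (t + 1) * (k * n ^ (t + 1) + a ^ 2 * (2 * k * k) ^ (t + 1))) =
        2 * (k * P ^ (t + 1)) * n ^ (t + 1) + a * (2 * a * (2 * k * k * P) ^ (t + 1)) := by
        rw [mul_pow (2 * k * k) P]; ring
      have e2 := Nat.mul_le_mul_right (n ^ (t + 1)) hkP
      have e3 := Nat.mul_le_mul_left a hB3
      omega
    exact Nat.le_of_mul_le_mul_left h8 (by positivity)

end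
end BS

set_option linter.unusedSectionVars false
namespace BS
open Finset
section
open Classical
variable {V : Type} [Fintype V]


lemma pw {L a b : ℕ} (hL : 10 ^ 6 ≤ L) (h : a < b) : 10 ^ 6 * L ^ a ≤ L ^ b := by
  calc 10 ^ 6 * L ^ a ≤ L * L ^ a := Nat.mul_le_mul_right _ hL
    _ = L ^ (a + 1) := by ring
    _ ≤ L ^ b := Nat.pow_le_pow_right (by omega) h

set_option exponentiation.threshold 1000 in
lemma dense_rob {H : SimpleGraph V} {D L k : ℕ} (hk1 : 1 ≤ k) (hkD : k * k ≤ D)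
    (hL : 10 ^ 6 ≤ L) (hL2 : L ^ 600 ≤ 2 ^ L) (hDL : L ^ 250 ≤ D)
    (hn : D * 2 ^ L ≤ 2 * Fintype.card V) (hes : 2 * D * Fintype.card V ≤ es H univ)
    (hno : ¬ HasTK H k 1) : Rob H (D / 2) (D * L ^ 60) := by
  intro W hW
  have hD1 : 1 ≤ D := le_trans (Nat.one_le_pow _ _ (by omega)) hDL
  by_cases hc : 2 * ∑ v ∈ W, dg H univ v < D * Fintype.card V
  · exact rob_of hD1 hes W hc
  · exfalso
    push Not at hc
    apply hno
    set n := Fintype.card V with hnn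
    have hn1 : 1 ≤ n := by
      have : 1 ≤ D * 2 ^ L := Nat.one_le_iff_ne_zero.2 (by positivity)
      omega
    have hsum : ∑ v ∈ W, dg H univ v ≤ W.card * n := by
      refine (Finset.sum_le_card_nsmul _ _ n ?_).trans (by simp)
      intro v _
      exact Finset.card_le_univ _
    have ha : D ≤ 2 * W.card := by
      have : D * n ≤ (2 * W.card) * n := by
        calc D * n ≤ _ := hc
          _ ≤ 2 * (W.card * n) := by omega
          _ = _ := by ring
      exact Nat.le_of_mul_le_mul_right this hn1
    refine drc (P := 2 * L ^ 60) hk1 ?_ W (by omega) ?_ ?_ ?_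
    · have : 1 ≤ L ^ 60 := Nat.one_le_pow _ _ (by omega)
      omega
    · calc W.card * n ≤ (D * L ^ 60) * n := Nat.mul_le_mul_right _ hW
        _ = L ^ 60 * (D * n) := by ring
        _ ≤ L ^ 60 * (2 * ∑ v ∈ W, dg H univ v) := Nat.mul_le_mul_left _ hc
        _ = _ := by ring
    · have h1 := pw hL (show 540 < 600 by norm_num)
      have h2 : 2 * (2 * k * k * (2 * L ^ 60) ^ 9) ≤ 2 * n := by
        refine le_trans ?_ hn
        calc 2 * (2 * k * k * (2 * L ^ 60) ^ 9) = (k * k) * (2048 * L ^ 540) := by ring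
          _ ≤ D * 2 ^ L := Nat.mul_le_mul hkD (by omega)
      omega
    · have h1 : (2 * k * (2 * L ^ 60)) ^ 8 ≤ 4 ^ 8 * (D ^ 4 * L ^ 480) := by
        calc (2 * k * (2 * L ^ 60)) ^ 8 = 4 ^ 8 * ((k * k) ^ 4 * L ^ 480) := by ring
          _ ≤ _ := by gcongr
      have h2 : D ^ 7 ≤ 128 * W.card ^ 7 := by
        calc D ^ 7 ≤ (2 * W.card) ^ 7 := Nat.pow_le_pow_left ha 7
          _ = _ := by ring
      have h3 : D ^ 4 * (10 ^ 6 * (10 ^ 6 * L ^ 480)) ≤ D ^ 7 := by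
        calc D ^ 4 * (10 ^ 6 * (10 ^ 6 * L ^ 480)) ≤ D ^ 4 * (10 ^ 6 * L ^ 481) := by
              gcongr; exact pw hL (by norm_num)
          _ ≤ D ^ 4 * L ^ 750 := by gcongr; exact pw hL (by norm_num)
          _ = D ^ 4 * (L ^ 250) ^ 3 := by ring
          _ ≤ D ^ 4 * D ^ 3 := by gcongr
          _ = D ^ 7 := by ring
      have h4 : D ^ 4 * (10 ^ 6 * (10 ^ 6 * L ^ 480)) = 10 ^ 12 * (D ^ 4 * L ^ 480) := by ring
      omega

set_option exponentiation.threshold 1000 in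
set_option maxHeartbeats 1000000 in
lemma dense_main {H : SimpleGraph V} {χ : V → Bool} (hχ : TwoCol H χ) {D L k : ℕ} (hk1 : 1 ≤ k)
    (hkD : k * k ≤ D) (hL : 10 ^ 6 ≤ L) (hL2 : L ^ 600 ≤ 2 ^ L) (hDL : L ^ 250 ≤ D)
    (hn : D * 2 ^ L ≤ 2 * Fintype.card V) (hE : Exp H D L (L ^ 3) (L ^ 5))
    (hes : 2 * D * Fintype.card V ≤ es H univ) : ∃ l, HasTK H k l := by
  by_cases hno : HasTK H k 1
  · exact ⟨1, hno⟩
  have hrob := dense_rob hk1 hkD hL hL2 hDL hn hes hno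
  have hL1 : 1 ≤ L := by omega
  have hp : ∀ i, 1 ≤ L ^ i := fun i => Nat.one_le_pow _ _ hL1
  have hD1 : 10 ^ 6 * L ^ 240 ≤ D := (pw hL (by norm_num)).trans hDL
  set s := Nat.sqrt D with hs
  have hsD : s * s ≤ D := Nat.sqrt_le D
  have hks : k ≤ s := Nat.le_sqrt.2 hkD
  have hsL : L ^ 125 ≤ s := Nat.le_sqrt.2 (by
    calc L ^ 125 * L ^ 125 = L ^ 250 := by ring
      _ ≤ D := hDL)
  have hDs : D ≤ 4 * (s * s) := by
    have h1 : D < (s + 1) * (s + 1) := Nat.lt_succ_sqrt D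
    have h2 : 1 ≤ s := (hp 125).trans hsL
    nlinarith
  have hn' : 10 ^ 6 * (D * L ^ 590) ≤ Fintype.card V := by
    have h1 : 10 ^ 6 * (10 ^ 6 * L ^ 590) ≤ L ^ 600 :=
      (Nat.mul_le_mul_left _ (pw hL (show 590 < 591 by norm_num))).trans (pw hL (by norm_num))
    have h2 : D * (10 ^ 6 * (10 ^ 6 * L ^ 590)) ≤ 2 * Fintype.card V :=
      (Nat.mul_le_mul_left D (h1.trans hL2)).trans hn
    have h3 : D * (10 ^ 6 * (10 ^ 6 * L ^ 590)) = 10 ^ 12 * (D * L ^ 590) := by ring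
    omega
  -- monomial comparison
  have hm : ∀ {a b : ℕ}, a < b → 10 ^ 6 * (D * L ^ a) ≤ D * L ^ b := by
    intro a b h
    calc 10 ^ 6 * (D * L ^ a) = D * (10 ^ 6 * L ^ a) := by ring
      _ ≤ _ := Nat.mul_le_mul_left _ (pw hL h)
  have hLD : ∀ {a : ℕ}, a ≤ 240 → 10 ^ 6 * L ^ a ≤ D := fun {a} h =>
    (Nat.mul_le_mul_left _ (Nat.pow_le_pow_right hL1 h)).trans hD1
  have hsLD : ∀ {a : ℕ}, a < 125 → 10 ^ 6 * (s * L ^ a) ≤ D := by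
    intro a h
    calc 10 ^ 6 * (s * L ^ a) = s * (10 ^ 6 * L ^ a) := by ring
      _ ≤ s * L ^ 125 := Nat.mul_le_mul_left _ (pw hL h)
      _ ≤ s * s := Nat.mul_le_mul_left _ hsL
      _ ≤ D := hsD
  have hss : ∀ a, s * s * L ^ a ≤ D * L ^ a := fun a => Nat.mul_le_mul_right _ hsD
  have hss' : ∀ a, D * L ^ a ≤ 4 * (s * s * L ^ a) := fun a => by
    calc D * L ^ a ≤ (4 * (s * s)) * L ^ a := Nat.mul_le_mul_right _ hDs
      _ = _ := by ring
  have hDm : ∀ a, D ≤ D * L ^ a := fun a => Nat.le_mul_of_pos_right _ (hp a)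
  have hnD : ∀ {a : ℕ}, a ≤ 590 → 10 ^ 6 * (D * L ^ a) ≤ Fintype.card V := fun {a} h =>
    (Nat.mul_le_mul_left _ (Nat.mul_le_mul_left _ (Nat.pow_le_pow_right hL1 h))).trans hn'
  set e := D / 4 with he
  have he1 : D ≤ 4 * e + 3 := by omega
  have he2 : 4 * e ≤ D := by omega
  have heL : ∀ a, D * L ^ a ≤ 5 * (e * L ^ a) := by
    intro a
    have h0 := hLD (show 0 ≤ 240 by norm_num)
    have : D ≤ 5 * e := by simp at h0; omega
    calc D * L ^ a ≤ (5 * e) * L ^ a := Nat.mul_le_mul_right _ this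
      _ = _ := by ring
  have heD : ∀ a, e * L ^ a ≤ D * L ^ a := fun a => Nat.mul_le_mul_right _ (by omega)
  have hkq : k * (1 + (s * L ^ 8) * (2 * L ^ 5 + 2)) ≤ D + 4 * (D * L ^ 13) := by
    have h1 : L ^ 8 ≤ L ^ 13 := Nat.pow_le_pow_right hL1 (by norm_num)
    calc k * (1 + (s * L ^ 8) * (2 * L ^ 5 + 2)) ≤ s * (1 + (s * L ^ 8) * (2 * L ^ 5 + 2)) :=
          Nat.mul_le_mul_right _ hks
      _ = s + (s * s) * (2 * L ^ 13 + 2 * L ^ 8) := by ring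
      _ ≤ D + D * (4 * L ^ 13) := by
          refine Nat.add_le_add ?_ (Nat.mul_le_mul hsD (by omega))
          exact (Nat.le_mul_self s).trans hsD
      _ = _ := by ring
  have h0 := hLD (show 0 ≤ 240 by norm_num)
  have hD2 : 10 ^ 6 ≤ D := by simpa using h0
  have hL5 := pw hL (show 0 < 5 by norm_num)
  have hstep : StepP H (D * L ^ 19) (12 * L ^ 5) (D * L ^ 23) (3 * L ^ 5) := by
    refine dense_step (N := 16 * L ^ 22) (e := e) (ω := D * L ^ 60) (d := D / 2) hχ hE hrob
      ?_ ?_ ?_ ?_ ?_ ?_ ?_ ?_ ?_ ?_ ?_ ?_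
    · omega
    · linarith [hm (show 22 < 23 by norm_num), hDm 22]
    · exact hDm _
    · linarith [hnD (show 19 ≤ 590 by norm_num), hLD (show 27 ≤ 240 by norm_num), hDm 590,
        hnD (show 0 ≤ 590 by norm_num), hn']
    · linarith
    · linarith
    · have := hLD (show 5 ≤ 240 by norm_num)
      omega
    · linarith [hm (show 19 < 60 by norm_num), hm (show 23 < 60 by norm_num),
        hm (show 22 < 60 by norm_num), heD 22, hDm 60, hm (show 0 < 60 by norm_num)]
    · linarith [heL 22, hLD (show 30 ≤ 240 by norm_num), hDm 22]
    · linarith [heL 22, hDm 22]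
    · linarith [hnD (show 45 ≤ 590 by norm_num)]
    · linarith [hp 22]
  have hsz : s * L ^ 18 ≤ D / 2 := by
    have := hsLD (show 18 < 125 by norm_num)
    omega
  have hs1 : 1 ≤ s := (hp 125).trans hsL
  obtain ⟨Po⟩ := dense_ports hχ hE hrob (by omega) k (L ^ 24) (s * L ^ 8) e (s * L ^ 18) (D * L ^ 14)
    (D * L ^ 18) (D * L ^ 19) (D * L ^ 23) (3 * L ^ 5) (12 * L ^ 5) (hp 24) (by omega)
    hsz (Nat.mul_pos hs1 (hp 18))
    (by
      linarith [hkq, hm (show 13 < 60 by norm_num), heD 24, hm (show 24 < 60 by norm_num), hDm 60,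
        hm (show 0 < 60 by norm_num), hLD (show 24 ≤ 240 by norm_num), hss 50,
        hm (show 50 < 60 by norm_num), hsLD (show 32 < 125 by norm_num)])
    (by
      linarith [hkq, hm (show 13 < 14 by norm_num), hm (show 0 < 14 by norm_num),
        hLD (show 24 ≤ 240 by norm_num), hsLD (show 32 < 125 by norm_num),
        hsLD (show 37 < 125 by norm_num)])
    (by linarith [hnD (show 14 ≤ 590 by norm_num)]) (hDm _)
    (by
      linarith [hm (show 17 < 24 by norm_num), heL 24, hm (show 0 < 24 by norm_num),
        hsLD (show 32 < 125 by norm_num), hsLD (show 37 < 125 by norm_num)])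
    (by
      linarith [hm (show 17 < 50 by norm_num), hss' 50, hm (show 0 < 50 by norm_num),
        hsLD (show 32 < 125 by norm_num), hsLD (show 37 < 125 by norm_num)])
    (by
      have h1 : 4 * (2 * k * (12 * L ^ 5 + 1)) ≤ s * (8 * (12 * L ^ 5 + 1)) := by
        calc 4 * (2 * k * (12 * L ^ 5 + 1)) = k * (8 * (12 * L ^ 5 + 1)) := by ring
          _ ≤ _ := Nat.mul_le_mul_right _ hks
      refine h1.trans (Nat.mul_le_mul_left _ ?_)
      linarith [pw hL (show 5 < 8 by norm_num), pw hL (show 0 < 8 by norm_num)])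
    (by linarith [hss' 26, hm (show 19 < 26 by norm_num), hDm 19])
    (by linarith [hss' 26, hm (show 23 < 26 by norm_num), hDm 23])
    (by linarith)
    (by linarith [hkq, hm (show 13 < 19 by norm_num), hm (show 18 < 19 by norm_num),
      hm (show 0 < 19 by norm_num)])
  refine ⟨_, assembly hχ hE (w := D * L ^ 19) ?_ ?_ ?_ ?_ ?_ ?_ hstep Po ?_⟩
  · linarith [hm (show 22 < 23 by norm_num), hDm 22]
  · exact hDm _
  · linarith [hnD (show 19 ≤ 590 by norm_num)]
  · linarith
  · exact ⟨6 * L ^ 5, by ring⟩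
  · linarith
  · have h1 : k * k + 2 ≤ 2 * D := by omega
    calc (k * k + 2) * ((2 * (12 * L ^ 5) * (12 * L ^ 5) + 3 * (12 * L ^ 5)) * (12 * L ^ 5))
        ≤ 2 * D * ((2 * (12 * L ^ 5) * (12 * L ^ 5) + 3 * (12 * L ^ 5)) * (12 * L ^ 5)) :=
          Nat.mul_le_mul_right _ h1
      _ ≤ _ := by linarith [hm (show 15 < 18 by norm_num), hm (show 10 < 18 by norm_num), hDm 15, hDm 10]

end
end BS

set_option linter.unusedSectionVars false
namespace BS
open Finset
section
open Classical
variable {V : Type} [Fintype V]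


/-- radii for the local growth -/
def Tt : ℕ → ℕ
  | 0 => 1
  | i + 1 => Tt i + 32 * (i + 4) ^ 2

lemma Tt_le (i : ℕ) : Tt i ≤ 33 * (i + 4) ^ 3 := by
  induction i with
  | zero => simp [Tt]
  | succ i ih =>
    rw [Tt]
    nlinarith [sq_nonneg (i + 4)]

lemma Tt_pos (i : ℕ) : 1 ≤ Tt i := by
  induction i with
  | zero => simp [Tt]
  | succ i ih => rw [Tt]; omega

lemma Tt_mono {i j : ℕ} (h : i ≤ j) : Tt i ≤ Tt j := by
  induction h with
  | refl => exact le_rfl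
  | step _ ih => rw [Tt]; omega

/-- local expansion -/
def LExp (H : SimpleGraph V) (D : ℕ) : Prop :=
  ∀ (i : ℕ) (X : Finset V), D ≤ 4 * X.card → X.card ≤ 2 ^ i * D → 4 * X.card ≤ Fintype.card V →
    X.card ≤ 16 * (i + 4) ^ 2 * (nbr H X).card

lemma local_growth {H : SimpleGraph V} {D : ℕ} (hLE : LExp H D) (X : ℕ → Finset V) (ob : ℕ → ℕ)
    (j : ℕ) (hmono : ∀ t, (X t).card ≤ (X (t + 1)).card)
    (hX : ∀ t < Tt j, (X t).card + (nbr H (X t)).card ≤ (X (t + 1)).card + ob t)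
    (h1 : D ≤ 4 * (X 1).card)
    (hob : ∀ i < j, ∀ t < Tt (i + 1), 128 * (i + 4) ^ 2 * ob t ≤ 2 ^ i * D)
    (hn : 2 ^ j * D ≤ Fintype.card V) : 2 ^ j * D ≤ 4 * (X (Tt j)).card := by
  have key : ∀ i ≤ j, 2 ^ i * D ≤ 4 * (X (Tt i)).card := by
    intro i
    induction i with
    | zero => intro _; simpa [Tt] using h1
    | succ i ih =>
      intro hij
      have ih' := ih (by omega)
      set c := (i + 4) ^ 2 with hc
      have hc1 : 1 ≤ c := Nat.one_le_pow _ _ (by omega)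
      set E := 2 ^ i * D with hEd
      have hE2 : 2 ^ (i + 1) * D = 2 * E := by rw [hEd]; ring
      have hn2 : 2 * E ≤ Fintype.card V := by
        rw [← hE2]
        exact (Nat.mul_le_mul_right _ (Nat.pow_le_pow_right (by norm_num) hij)).trans hn
      have inner : ∀ s ≤ 32 * c, 2 * E ≤ 4 * (X (Tt i + s)).card ∨
          32 * c * E + s * E ≤ 128 * c * (X (Tt i + s)).card := by
        intro s
        induction s with
        | zero =>
          intro _
          right
          have := Nat.mul_le_mul_left (32 * c) ih'
          simp only [Nat.add_zero]
          linarith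
        | succ s ihs =>
          intro hs
          have hmo := hmono (Tt i + s)
          rcases ihs (by omega) with h | h
          · left
            rw [← Nat.add_assoc]
            omega
          · by_cases hbig : 2 * E ≤ 4 * (X (Tt i + s)).card
            · left
              rw [← Nat.add_assoc]
              omega
            · right
              have hlow : E ≤ 4 * (X (Tt i + s)).card := by
                have : 32 * c * E ≤ 32 * c * (4 * (X (Tt i + s)).card) := by linarith [Nat.zero_le (s * E)]
                exact Nat.le_of_mul_le_mul_left this (by omega)
              have hDE : D ≤ E := Nat.le_mul_of_pos_left _ (by positivity)
              have hex := hLE i (X (Tt i + s)) (by omega) (by omega) (by omega)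
              rw [← hc] at hex
              have htlt : Tt i + s < Tt (i + 1) := by rw [Tt, ← hc]; omega
              have ht2 : Tt i + s < Tt j := htlt.trans_le (Tt_mono hij)
              have hx := hX (Tt i + s) ht2
              have ho := hob i (by omega) (Tt i + s) htlt
              rw [← hc, ← hEd] at ho
              have hx2 := Nat.mul_le_mul_left (128 * c) hx
              rw [← Nat.add_assoc]
              nlinarith
      rw [hE2, Tt, ← hc]
      rcases inner (32 * c) le_rfl with h | h
      · exact h
      · have : 32 * c * (2 * E) ≤ 32 * c * (4 * (X (Tt i + 32 * c)).card) := by linarith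
        exact Nat.le_of_mul_le_mul_left this (by omega)
  exact key j le_rfl

lemma card_step {H : SimpleGraph V} {W : Finset V} {u : V} (hu : u ∉ W) (t : ℕ) :
    (Bl (av H W) {u} t).card + (nbr H (Bl (av H W) {u} t)).card ≤
      (Bl (av H W) {u} (t + 1)).card + (W ∩ nbr H (Bl (av H W) {u} t)).card := by
  rw [← Finset.card_union_of_disjoint (nbr_disj _ _)]
  refine le_trans (Finset.card_le_card ?_) (Finset.card_union_le _ _)
  have hd : Disjoint {u} W := by simpa using hu
  intro y hy
  have h1 := nbr_Bl_subset t hd hy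
  rcases mem_union.1 h1 with h | h
  · exact mem_union_left _ h
  · rcases mem_union.1 hy with h' | h'
    · exact absurd h (Finset.disjoint_left.1 (Bl_disj t hd) h')
    · exact mem_union_right _ (mem_inter.2 ⟨h, h'⟩)

lemma local_good {H : SimpleGraph V} {D : ℕ} (hLE : LExp H D) (hmin : ∀ v, D ≤ dg H univ v)
    {W : Finset V} {u : V} (hu : u ∉ W) (ob : ℕ → ℕ) (j R β : ℕ)
    (hob : ∀ t < Tt j, (W ∩ nbr H (Bl (av H W) {u} t)).card ≤ ob t)
    (h0 : 4 * ob 0 ≤ 3 * D)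
    (hob' : ∀ i < j, ∀ t < Tt (i + 1), 128 * (i + 4) ^ 2 * ob t ≤ 2 ^ i * D)
    (hn : 2 ^ j * D ≤ Fintype.card V) (hβ : 4 * β ≤ 2 ^ j * D) (hR : Tt j ≤ R) :
    Good H β R u W := by
  refine ⟨hu, ?_⟩
  have hgr := local_growth hLE (fun t => Bl (av H W) {u} t) ob j
    (fun t => Finset.card_le_card (Bl_mono le_rfl subset_rfl (Nat.le_succ t)))
    (fun t ht => (card_step hu t).trans (Nat.add_le_add_left (hob t ht) _)) ?_ hob' hn
  · have := Finset.card_le_card (Bl_mono (le_refl (av H W)) (subset_refl {u}) hR)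
    beta_reduce at hgr
    omega
  · have h1 := card_step (H := H) hu 0
    have h2 := hob 0 (Tt_pos j)
    have h3 : dg H univ u ≤ (nbr H (Bl (av H W) {u} 0)).card := by
      apply Finset.card_le_card
      intro y hy
      rw [mem_filter] at hy
      rw [Bl_zero, mem_nbr]
      refine ⟨?_, u, by simp, hy.2⟩
      rw [mem_singleton]; rintro rfl; exact hy.2.ne rfl
    have h4 := hmin u
    rw [Nat.zero_add] at h1
    omega

lemma Bl_card {H : SimpleGraph V} {Δ : ℕ} (hΔ : ∀ v, dg H univ v ≤ Δ) (t : ℕ) :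
    ∀ X : Finset V, (Bl H X t).card ≤ X.card * (Δ + 1) ^ t := by
  have one : ∀ X : Finset V, (Bl H X 1).card ≤ X.card * (Δ + 1) := by
    intro X
    have hsub : Bl H X 1 ⊆ X.biUnion (fun x => insert x (univ.filter (fun y => H.Adj x y))) := by
      intro y hy
      obtain ⟨x, hx, p, hp⟩ := mem_Bl.1 hy
      rw [mem_biUnion]
      refine ⟨x, hx, ?_⟩
      cases p with
      | nil => exact mem_insert_self _ _
      | cons h q =>
        have hq : q.length = 0 := by
          rw [SimpleGraph.Walk.length_cons] at hp; omega
        have := SimpleGraph.Walk.eq_of_length_eq_zero hq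
        subst this
        exact mem_insert_of_mem (by simpa using h)
    refine (Finset.card_le_card hsub).trans (Finset.card_biUnion_le_card_mul _ _ _ ?_)
    intro x _
    exact (Finset.card_insert_le _ _).trans (Nat.succ_le_succ (hΔ x))
  induction t with
  | zero => intro X; rw [Bl_zero]; simp
  | succ t ih =>
    intro X
    have hsub : Bl H X (t + 1) ⊆ Bl H (Bl H X 1) t := by
      intro y hy
      obtain ⟨x, hx, p, hp⟩ := mem_Bl.1 hy
      cases p with
      | nil => exact subset_Bl _ _ _ (subset_Bl _ _ _ hx)
      | cons h q =>
        rw [SimpleGraph.Walk.length_cons] at hp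
        refine mem_Bl.2 ⟨_, Bl_step (t := 0) (by rw [Bl_zero]; exact hx) h, q, by omega⟩
    calc (Bl H X (t + 1)).card ≤ (Bl H (Bl H X 1) t).card := Finset.card_le_card hsub
      _ ≤ (Bl H X 1).card * (Δ + 1) ^ t := ih _
      _ ≤ X.card * (Δ + 1) * (Δ + 1) ^ t := Nat.mul_le_mul_right _ (one X)
      _ = _ := by ring

lemma nbr_sub_Bl {H : SimpleGraph V} {W : Finset V} {u : V} (t : ℕ) :
    nbr H (Bl (av H W) {u} t) ⊆ Bl H {u} (t + 1) := by
  intro y hy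
  obtain ⟨_, x, hx, hxy⟩ := mem_nbr.1 hy
  exact Bl_step (Bl_mono (av_le H W) subset_rfl le_rfl hx) hxy

lemma sparse_step {H : SimpleGraph V} {χ : V → Bool} (hχ : TwoCol H χ) {D L M ρ : ℕ}
    (hE : Exp H D L M ρ) (hLE : LExp H D) (hmin : ∀ v, D ≤ dg H univ v) {Δ : ℕ}
    (hΔ : ∀ v, dg H univ v ≤ Δ) {w A β R d ω j : ℕ} (hrob : Rob H d ω) (hd2 : 2 ≤ d)
    (hβ : 2 * M * w ≤ β) (hβ' : D ≤ β) (h12 : 12 * w ≤ Fintype.card V)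
    (hA : 2 * (R + 2 * ρ) + 2 ≤ A) (hω : w * (Δ + 1) ^ (Tt j) + 1 + β ≤ ω)
    (hD : 8 ≤ D)
    (hob : ∀ i < j, ∀ t < Tt (i + 1), 128 * (i + 4) ^ 2 * (2 * (t + 3)) ≤ 2 ^ i * D)
    (hn : 2 ^ j * D ≤ Fintype.card V) (h4β : 4 * β ≤ 2 ^ j * D) (hR : Tt j ≤ R) :
    StepP H w A β R := by
  intro b W F hWF hb
  have hWc : W.card ≤ w := (Finset.card_le_card subset_union_left).trans hWF
  obtain ⟨S, hSB, hSd, y0, hy0, O, p, hso, hOW, hOA, hpA⟩ := step_rob hχ hE hrob hd2 hβ hβ' h12 hA hb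
    hWc (Bl H (W ∪ F) (Tt j)) (subset_union_left.trans (subset_Bl _ _ _)) (by
      have h1 := Bl_card hΔ (Tt j) (W ∪ F)
      have h2 := Nat.mul_le_mul_right ((Δ + 1) ^ Tt j) hWF
      omega)
  have hyB := Finset.disjoint_left.1 hSB hy0
  have hyW : y0 ∉ W ∪ F ∪ O := by
    intro h
    rcases mem_union.1 h with h | h
    · exact hyB (subset_Bl _ _ _ h)
    · exact hso.y_nmem h
  refine ⟨y0, O, p, hso, hOW, hOA, hpA, ?_⟩
  refine local_good hLE hmin hyW (fun t => 2 * (t + 3)) j R β ?_ (by omega) hob hn h4β hR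
  intro t ht
  have hsub : W ∪ O ⊆ W ∪ F ∪ O := by
    intro x hx
    simp only [mem_union] at hx ⊢
    tauto
  refine le_trans (Finset.card_le_card ?_) (hso.thin hOW hsub hyW t)
  intro x hx
  rw [mem_inter] at hx ⊢
  refine ⟨?_, hx.2⟩
  rcases mem_union.1 hx.1 with h | h
  · exfalso
    apply hyB
    have h1 := Bl_symm (nbr_sub_Bl t hx.2)
    exact Bl_mono le_rfl (by simpa using h) (show t + 1 ≤ Tt j by omega) h1
  · exact h

/-- The obstacle predicate for sparse ports. -/
def Thin (H : SimpleGraph V) (u : V) (r A q : ℕ) (S : Finset V) : Prop :=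
  u ∉ S ∧ S.card ≤ q * (A + 1) ∧
    ∀ t < r, (S ∩ nbr H (Bl (av H S) {u} t)).card ≤ q * (t + 1)

lemma thin_mono {H : SimpleGraph V} {u : V} {S W : Finset V} (huS : u ∉ S) (hSW : S ⊆ W) (t : ℕ) :
    S ∩ nbr H (Bl (av H W) {u} t) ⊆ S ∩ nbr H (Bl (av H S) {u} t) := by
  intro y hy
  rw [mem_inter] at hy ⊢
  refine ⟨hy.1, ?_⟩
  obtain ⟨_, x, hx, hxy⟩ := mem_nbr.1 hy.2
  refine mem_nbr.2 ⟨?_, x, Bl_mono (av_mono hSW) subset_rfl le_rfl hx, hxy⟩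
  intro h
  exact Finset.disjoint_left.1 (Bl_disj t (by simpa using huS)) h hy.1

lemma thin_step {H : SimpleGraph V} {u x : V} {r A q : ℕ} {S W : Finset V}
    (g : (av H W).Walk u x) (hS : Thin H u r A q S) (hu : u ∉ W) (hW : W ∩ Bl H {u} r = S)
    (hg : g.length = (av H W).dist u x) (hgA : g.length ≤ A) :
    Thin H u r A (q + 1) (S ∪ (g.support.toFinset ∩ Bl H {u} r).erase u) := by
  set G' := (g.support.toFinset ∩ Bl H {u} r).erase u with hG'
  have hgs : G' ⊆ g.support.toFinset := (Finset.erase_subset _ _).trans Finset.inter_subset_left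
  have huS' : u ∉ S ∪ G' := by
    rw [mem_union, not_or]
    exact ⟨hS.1, by rw [hG']; simp⟩
  refine ⟨huS', ?_, ?_⟩
  · refine (Finset.card_union_le _ _).trans ?_
    have a1 := Finset.card_le_card hgs
    have a2 := support_card_le g
    have a3 : (q + 1) * (A + 1) = q * (A + 1) + (A + 1) := by ring
    have := hS.2.1
    omega
  · intro t ht
    rw [Finset.union_inter_distrib_right]
    refine (Finset.card_union_le _ _).trans ?_
    have e1 := (Finset.card_le_card (thin_mono (H := H) hS.1
      (subset_union_left : S ⊆ S ∪ G') t)).trans (hS.2.2 t ht)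
    have e2 : (G' ∩ nbr H (Bl (av H (S ∪ G')) {u} t)).card ≤ t + 1 := by
      have hsub : G' ∩ nbr H (Bl (av H (S ∪ G')) {u} t) ⊆
          (Finset.Icc 1 (t + 1)).image (fun i => g.getVert i) := by
        intro y hy
        rw [mem_inter] at hy
        have hyg : y ∈ g.support := by simpa using hgs hy.1
        have hyu : y ≠ u := by
          rintro rfl
          rw [hG'] at hy
          simp at hy
        obtain ⟨_, z, hz, hzy⟩ := mem_nbr.1 hy.2
        obtain ⟨pz, hpz⟩ := mem_Bl_singleton.1 hz
        have hpS := walk_av pz huS'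
        have hpC : ∀ v ∈ pz.support, v ∈ Bl H {u} r := by
          intro v hv
          refine mem_Bl_singleton.2 ⟨(pz.takeUntil v hv).mapLe (av_le _ _), ?_⟩
          have := SimpleGraph.Walk.length_takeUntil_le_length pz hv
          rw [SimpleGraph.Walk.mapLe, SimpleGraph.Walk.length_map]
          omega
        have hpW : ∀ v ∈ pz.support, v ∉ W := by
          intro v hv hvW
          apply hpS v hv
          rw [mem_union]; left
          rw [← hW]
          exact mem_inter.2 ⟨hvW, hpC v hv⟩
        have hedge : ∀ e ∈ pz.edges, e ∈ (av H W).edgeSet := by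
          intro e he
          induction e using Sym2.ind with
          | _ v v' =>
            rw [SimpleGraph.mem_edgeSet]
            exact ⟨(pz.adj_of_mem_edges he).1, hpW _ (pz.fst_mem_support_of_mem_edges he),
              hpW _ (pz.snd_mem_support_of_mem_edges he)⟩
        have hyW := walk_av g hu y hyg
        have hadj : (av H W).Adj z y := ⟨hzy, hpW _ pz.end_mem_support, hyW⟩
        have hdist := SimpleGraph.dist_le ((pz.transfer _ hedge).concat hadj)
        rw [SimpleGraph.Walk.length_concat, SimpleGraph.Walk.length_transfer] at hdist
        have hgv := (geod_getVert g hg hyg).2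
        refine mem_image.2 ⟨(av H W).dist u y, ?_, hgv.symm⟩
        rw [Finset.mem_Icc]
        refine ⟨?_, by omega⟩
        by_contra h0
        have h0' : (av H W).dist u y = 0 := by omega
        rw [h0'] at hgv
        apply hyu
        rw [hgv]; simp
      refine (Finset.card_le_card hsub).trans (Finset.card_image_le.trans ?_)
      simp
    have a3 : (q + 1) * (t + 1) = q * (t + 1) + (t + 1) := by ring
    omega

lemma sparse_ports {H : SimpleGraph V} {χ : V → Bool} (hχ : TwoCol H χ) {D : ℕ}
    (hLE : LExp H D) (hmin : ∀ v, D ≤ dg H univ v) {Δ : ℕ}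
    (hΔ : ∀ v, dg H univ v ≤ Δ) {k w1 w A β R d ω j1 j : ℕ} (hrob : Rob H d ω) (hd : 1 ≤ d)
    (hj : j1 ≤ j)
    (hω : k * (Δ + 1) ^ (Tt j) * (Δ + 1) ^ (Tt j) ≤ ω)
    (htot : k * (Δ + 1) ^ (Tt j1) + w1 ≤ w)
    (h0 : 8 * k ≤ 3 * D)
    (hob1 : ∀ i < j, ∀ t < Tt (i + 1), 128 * (i + 4) ^ 2 * (2 * k * (t + 1)) ≤ 2 ^ i * D)
    (hob2 : ∀ i < j, j1 ≤ i → 128 * (i + 4) ^ 2 * (2 * k * (A + 1) + w1) ≤ 2 ^ i * D)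
    (hn : 2 ^ j * D ≤ Fintype.card V) (h4β : 4 * β ≤ 2 ^ j * D) (hR : Tt j ≤ R) :
    Nonempty (Ports H χ k w1 w A β R) := by
  have hne : Nonempty V := by
    obtain ⟨S, ⟨v, hv⟩, _⟩ := hrob ∅ (by simp)
    exact ⟨v⟩
  set r := Tt j1 with hr
  have hrj : r ≤ Tt j := Tt_mono hj
  obtain ⟨f, hf1, hf2⟩ := extract (V := V) (α := V) (fun a => χ a = true)
    (fun a => Bl H {a} (Tt j)) ((Δ + 1) ^ (Tt j)) k
    (fun a _ => (Bl_card hΔ _ _).trans (by simp)) (by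
      intro B hB
      obtain ⟨S, ⟨v, hv⟩, hS1, hS2⟩ := hrob (Bl H B (Tt j)) (by
        have h1 := Bl_card hΔ (Tt j) B
        have h2 := Nat.mul_le_mul_right ((Δ + 1) ^ Tt j) hB
        omega)
      obtain ⟨c, hc, hcc⟩ : ∃ c ∈ S, χ c = true := by
        by_cases h : χ v = true
        · exact ⟨v, hv, h⟩
        · have h1 := hS2 v hv
          obtain ⟨y, hy⟩ := Finset.card_pos.1 (show 0 < (S.filter (fun y => H.Adj v y)).card by omega)
          rw [mem_filter] at hy
          refine ⟨y, hy.1, ?_⟩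
          have h2 := hχ v y hy.2
          revert h h2
          cases χ v <;> cases χ y <;> simp
      refine ⟨c, hcc, ?_⟩
      rw [Finset.disjoint_left]
      intro x hx hxB
      refine Finset.disjoint_left.1 hS1 hc ?_
      exact Bl_mono le_rfl (by simpa using hxB) le_rfl (Bl_symm hx))
  have hcoresub : ∀ m, Bl H {f m} r ⊆ Bl H {f m} (Tt j) := fun m => Bl_mono le_rfl subset_rfl hrj
  have htotc : ((univ : Finset (Fin k)).biUnion (fun m => Bl H {f m} r)).card ≤
      k * (Δ + 1) ^ r := by
    have := Finset.card_biUnion_le_card_mul (univ : Finset (Fin k)) (fun m => Bl H {f m} r)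
      ((Δ + 1) ^ r) (fun m _ => (Bl_card hΔ _ _).trans (by simp))
    simpa using this
  refine ⟨{ u := fun m => f m, Core := fun m => Bl H {f m} r,
            P := fun m q S => Thin H (f m) r A q S,
            mem := fun m => subset_Bl _ _ _ (by simp),
            disj := fun m m' h => (hf2 m m.2 m' m'.2 (fun h' => h (Fin.ext h'))).mono
              (hcoresub m) (hcoresub m'),
            col := fun m => hf1 m m.2,
            tot := by omega,
            P0 := fun m => ⟨by simp, by simp, by simp⟩,
            P1 := ?_, P2 := ?_ }⟩
  · intro m q S W hS hq hu hWC hW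
    have hSW : S ⊆ W := by rw [← hWC]; exact Finset.inter_subset_left
    refine local_good hLE hmin hu (fun t => if t < r then 2 * k * (t + 1) else
      2 * k * (A + 1) + w1) j R β ?_ ?_ ?_ hn h4β hR
    · intro t ht
      split_ifs with htr
      · have e1 : W ∩ nbr H (Bl (av H W) {f m} t) ⊆ S ∩ nbr H (Bl (av H W) {f m} t) := by
          intro y hy
          rw [mem_inter] at hy ⊢
          refine ⟨?_, hy.2⟩
          rw [← hWC, mem_inter]
          exact ⟨hy.1, Bl_mono le_rfl subset_rfl (show t + 1 ≤ r by omega) (nbr_sub_Bl t hy.2)⟩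
        refine (Finset.card_le_card (e1.trans (thin_mono hS.1 hSW t))).trans ((hS.2.2 t htr).trans ?_)
        exact Nat.mul_le_mul_right _ hq
      · have e1 : W ∩ nbr H (Bl (av H W) {f m} t) ⊆
            S ∪ (W \ univ.biUnion (fun m : Fin k => Bl H {f m} r)) := by
          intro y hy
          rw [mem_inter] at hy
          by_cases hyc : y ∈ univ.biUnion (fun m : Fin k => Bl H {f m} r)
          · obtain ⟨m', _, hm'⟩ := mem_biUnion.1 hyc
            by_cases hmm : m' = m
            · subst hmm
              refine mem_union_left _ ?_
              rw [← hWC]; exact mem_inter.2 ⟨hy.1, hm'⟩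
            · exfalso
              have h1 := nbr_sub_Bl t hy.2
              have h2 := Bl_mono (le_refl H) (subset_refl {f m}) (show t + 1 ≤ Tt j by omega) h1
              exact Finset.disjoint_left.1 (hf2 m' m'.2 m m.2 (fun h' => hmm (Fin.ext h')))
                (hcoresub m' hm') h2
          · exact mem_union_right _ (mem_sdiff.2 ⟨hy.1, hyc⟩)
        refine (Finset.card_le_card e1).trans ((Finset.card_union_le _ _).trans ?_)
        exact Nat.add_le_add (hS.2.1.trans (Nat.mul_le_mul_right _ hq)) hW
    · have : 0 < r := Tt_pos j1
      simp only [this, if_true]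
      omega
    · intro i hi t ht
      split_ifs with htr
      · exact hob1 i hi t ht
      · refine hob2 i hi ?_
        by_contra hlt
        have := Tt_mono (show i + 1 ≤ j1 by omega)
        omega
  · intro m q S W x g hS hu hWC hg hgd hgA
    exact thin_step g hS hu hWC hgd hgA

end
end BS

set_option linter.unusedSectionVars false
namespace BS
open Finset
section
open Classical
variable {V : Type} [Fintype V]


lemma ob_aux (i : ℕ) : (i + 5) ^ 5 ≤ 4300 * 2 ^ i := by
  induction i with
  | zero => norm_num
  | succ i ih =>
    rcases Nat.lt_or_ge i 2 with h | h
    · interval_cases i <;> norm_num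
    · obtain ⟨m, rfl⟩ := Nat.exists_eq_add_of_le h
      have : (2 + m + 1 + 5) ^ 5 ≤ 2 * (2 + m + 5) ^ 5 := by
        ring_nf
        nlinarith [Nat.zero_le (m ^ 2), Nat.zero_le (m ^ 3), Nat.zero_le (m ^ 4), Nat.zero_le (m ^ 5)]
      rw [pow_succ 2 (2 + m)]
      omega

lemma ob_main {k D i t : ℕ} (hkD : 10 ^ 8 * k ≤ D) (ht : t < Tt (i + 1)) :
    128 * (i + 4) ^ 2 * (2 * k * (t + 3)) ≤ 2 ^ i * D := by
  have h1 := Tt_le (i + 1)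
  have h2 : t + 3 ≤ 35 * (i + 5) ^ 3 := by
    have : 1 ≤ (i + 5) ^ 3 := Nat.one_le_pow _ _ (by omega)
    have e : (i + 1 + 4) = i + 5 := by ring
    rw [e] at h1
    omega
  have h3 : (i + 4) ^ 2 ≤ (i + 5) ^ 2 := Nat.pow_le_pow_left (by omega) 2
  calc 128 * (i + 4) ^ 2 * (2 * k * (t + 3)) ≤ 128 * (i + 5) ^ 2 * (2 * k * (35 * (i + 5) ^ 3)) := by
        gcongr
    _ = 8960 * k * (i + 5) ^ 5 := by ring
    _ ≤ 8960 * k * (4300 * 2 ^ i) := Nat.mul_le_mul_left _ (ob_aux i)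
    _ ≤ 2 ^ i * (10 ^ 8 * k) := by nlinarith [Nat.zero_le (2 ^ i * k)]
    _ ≤ _ := Nat.mul_le_mul_left _ hkD

lemma ob_far {a i : ℕ} (ha : 10 ^ 6 ≤ a) (hi : a ^ 2 ≤ i) :
    128 * (i + 4) ^ 2 * 2 ^ (281 * a) ≤ 2 ^ i := by
  induction i, hi using Nat.le_induction with
  | base =>
    have h1 : a < 2 ^ a := Nat.lt_two_pow_self
    have h2 : a ^ 2 + 4 ≤ 2 * a ^ 2 := by nlinarith
    calc 128 * (a ^ 2 + 4) ^ 2 * 2 ^ (281 * a) ≤ 128 * (2 * a ^ 2) ^ 2 * 2 ^ (281 * a) := by gcongr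
      _ = 512 * a ^ 4 * 2 ^ (281 * a) := by ring
      _ ≤ 2 ^ 9 * (2 ^ a) ^ 4 * 2 ^ (281 * a) := by gcongr; norm_num
      _ = 2 ^ (9 + a * 4 + 281 * a) := by rw [pow_add, pow_add, pow_mul 2 a 4]
      _ ≤ 2 ^ (a ^ 2) := Nat.pow_le_pow_right (by norm_num) (by nlinarith)
  | succ i hi ih =>
    have : (i + 1 + 4) ^ 2 ≤ 2 * (i + 4) ^ 2 := by nlinarith
    calc 128 * (i + 1 + 4) ^ 2 * 2 ^ (281 * a) ≤ 128 * (2 * (i + 4) ^ 2) * 2 ^ (281 * a) := by gcongr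
      _ = 2 * (128 * (i + 4) ^ 2 * 2 ^ (281 * a)) := by ring
      _ ≤ 2 * 2 ^ i := by omega
      _ = _ := by ring

set_option maxHeartbeats 4000000 in
set_option exponentiation.threshold 1000 in
theorem sparse_main {H : SimpleGraph V} {χ : V → Bool} (hχ : TwoCol H χ) {k D L a : ℕ}
    (hk1 : 1 ≤ k) (hkk : k * k ≤ D) (hkD : 10 ^ 8 * k ≤ D) (ha : 10 ^ 6 ≤ a)
    (haL : a ^ 100 ≤ L) (hLa : L ≤ 2 ^ a) (hDL : D ≤ L ^ 250)
    (hn : D * 2 ^ L ≤ 2 * Fintype.card V) (hE : Exp H D L (L ^ 3) (L ^ 5)) (hLE : LExp H D)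
    (hmin : ∀ v, D ≤ dg H univ v) (hΔ : ∀ v, dg H univ v ≤ L ^ 600) :
    ∃ l, HasTK H k l := by
  have hL6 : 10 ^ 6 ≤ L := le_trans (by
    calc 10 ^ 6 ≤ a := ha
      _ = a ^ 1 := (pow_one a).symm
      _ ≤ a ^ 100 := Nat.pow_le_pow_right (by omega) (by norm_num)) haL
  have p2 : ∀ {x y : ℕ}, x ≤ y → 2 ^ x ≤ 2 ^ y := fun h => Nat.pow_le_pow_right (by norm_num) h
  have Lp : ∀ c : ℕ, L ^ c ≤ 2 ^ (c * a) := fun c => by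
    calc L ^ c ≤ (2 ^ a) ^ c := Nat.pow_le_pow_left hLa c
      _ = 2 ^ (c * a) := by rw [← pow_mul, mul_comm]
  have q1 := pw ha (show 1 < 2 by norm_num)
  have q2 := pw ha (show 2 < 7 by norm_num)
  have q7 := pw ha (show 7 < 8 by norm_num)
  have q8 := pw ha (show 8 < 9 by norm_num)
  have q9 := pw ha (show 9 < 10 by norm_num)
  have q10 := pw ha (show 10 < 11 by norm_num)
  have q11 := pw ha (show 11 < 12 by norm_num)
  have q12 := pw ha (show 12 < 36 by norm_num)
  have q36 := pw ha (show 36 < 37 by norm_num)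
  have q37 := pw ha (show 37 < 38 by norm_num)
  have q38 := pw ha (show 38 < 39 by norm_num)
  have q39 := pw ha (show 39 < 40 by norm_num)
  have q40 := pw ha (show 40 < 100 by norm_num)
  rw [pow_one] at q1
  have hkD' : k ≤ D := by omega
  have hk250 : k ≤ 2 ^ (250 * a) := hkD'.trans (hDL.trans (Lp 250))
  -- sizes of Tt
  have hT1 : Tt (a ^ 2) ≤ a ^ 7 := by
    refine (Tt_le _).trans ?_
    have h2 : a ^ 2 + 4 ≤ 2 * a ^ 2 := by omega
    calc 33 * (a ^ 2 + 4) ^ 3 ≤ 33 * (2 * a ^ 2) ^ 3 := by gcongr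
      _ = 264 * a ^ 6 := by ring
      _ ≤ a * a ^ 6 := by gcongr; omega
      _ = a ^ 7 := by ring
  have hT2 : Tt (a ^ 12) ≤ a ^ 37 := by
    refine (Tt_le _).trans ?_
    have h2 : a ^ 12 + 4 ≤ 2 * a ^ 12 := by omega
    calc 33 * (a ^ 12 + 4) ^ 3 ≤ 33 * (2 * a ^ 12) ^ 3 := by gcongr
      _ = 264 * a ^ 36 := by ring
      _ ≤ a * a ^ 36 := by gcongr; omega
      _ = a ^ 37 := by ring
  have hΔ1 : L ^ 600 + 1 ≤ 2 ^ (601 * a) := by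
    have h1 := Lp 600
    have h2 : 2 ^ (601 * a) = 2 ^ (600 * a) * 2 ^ a := by rw [← pow_add]; congr 1; ring
    have h3 : a < 2 ^ a := Nat.lt_two_pow_self
    have h4 : 1 ≤ 2 ^ (600 * a) := Nat.one_le_two_pow
    nlinarith
  have hP1 : (L ^ 600 + 1) ^ Tt (a ^ 2) ≤ 2 ^ (601 * a ^ 8) := by
    calc (L ^ 600 + 1) ^ Tt (a ^ 2) ≤ (2 ^ (601 * a)) ^ Tt (a ^ 2) := Nat.pow_le_pow_left hΔ1 _
      _ ≤ (2 ^ (601 * a)) ^ (a ^ 7) := Nat.pow_le_pow_right (by positivity) hT1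
      _ = 2 ^ (601 * a ^ 8) := by rw [← pow_mul]; congr 1; ring
  have hP2 : (L ^ 600 + 1) ^ Tt (a ^ 12) ≤ 2 ^ (601 * a ^ 38) := by
    calc (L ^ 600 + 1) ^ Tt (a ^ 12) ≤ (2 ^ (601 * a)) ^ Tt (a ^ 12) := Nat.pow_le_pow_left hΔ1 _
      _ ≤ (2 ^ (601 * a)) ^ (a ^ 37) := Nat.pow_le_pow_right (by positivity) hT2
      _ = 2 ^ (601 * a ^ 38) := by rw [← pow_mul]; congr 1; ring
  -- main parameters
  have hL5 : 10 ^ 6 * L ^ 4 ≤ L ^ 5 := pw hL6 (by norm_num)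
  have hL4 : 1 ≤ L ^ 4 := Nat.one_le_pow _ _ (by omega)
  have hLL4 : L ≤ L ^ 4 := Nat.le_self_pow (by norm_num) L
  have hnL : 2 ^ (L - 1) ≤ Fintype.card V := by
    have : 2 ^ L = 2 * 2 ^ (L - 1) := by
      rw [← pow_succ']; congr 1; omega
    rw [this] at hn
    have h1 : 1 ≤ D := by omega
    nlinarith [Nat.zero_le (2 ^ (L - 1))]
  have hn40 : 2 ^ (10 * a ^ 40) ≤ Fintype.card V := le_trans (p2 (by omega)) hnL
  set A := 12 * L ^ 5 with hA
  set w1 := L ^ 280 with hw1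
  set w := 2 ^ (a ^ 10) with hw
  set β := 2 ^ (a ^ 11) with hβ
  set ω := 2 ^ (a ^ 40) with hω
  set j := a ^ 12 with hj
  have hDβ : D ≤ β := hDL.trans ((Lp 250).trans (p2 (by omega)))
  have hMw : 2 * L ^ 3 * w ≤ β := by
    calc 2 * L ^ 3 * w ≤ 2 ^ 1 * 2 ^ (3 * a) * 2 ^ (a ^ 10) := by
          rw [pow_one]
          exact Nat.mul_le_mul_right _ (Nat.mul_le_mul_left _ (Lp 3))
      _ = 2 ^ (1 + 3 * a + a ^ 10) := by rw [pow_add, pow_add]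
      _ ≤ β := p2 (by omega)
  have h12w : 12 * w ≤ Fintype.card V := by
    calc 12 * w ≤ 2 ^ 4 * 2 ^ (a ^ 10) := by gcongr; norm_num
      _ = 2 ^ (4 + a ^ 10) := by rw [pow_add]
      _ ≤ _ := (p2 (by omega)).trans hn40
  have hjn : 2 ^ j * D ≤ Fintype.card V := by
    calc 2 ^ j * D ≤ 2 ^ (a ^ 12) * 2 ^ (250 * a) := by gcongr; exact hDL.trans (Lp 250)
      _ = 2 ^ (a ^ 12 + 250 * a) := by rw [pow_add]
      _ ≤ _ := (p2 (by omega)).trans hn40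
  have h4β : 4 * β ≤ 2 ^ j * D := by
    calc 4 * β = 2 ^ (2 + a ^ 11) := by rw [pow_add]; norm_num [hβ]
      _ ≤ 2 ^ j := p2 (by omega)
      _ ≤ 2 ^ j * D := Nat.le_mul_of_pos_right _ (by omega)
  have hTR : Tt j ≤ 3 * L ^ 5 := by omega
  have hrob : Rob H (D / 2 / 2) ω := by
    intro W hW
    refine rob_of (by omega) ?_ W ?_
    · calc 2 * (D / 2) * Fintype.card V ≤ D * Fintype.card V := by gcongr; omega
        _ = ∑ v : V, D := by simp [mul_comm]
        _ ≤ _ := Finset.sum_le_sum (fun v _ => hmin v)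
    · have h1 : ∑ v ∈ W, dg H univ v ≤ 2 ^ (a ^ 40) * 2 ^ (600 * a) := by
        calc ∑ v ∈ W, dg H univ v ≤ ∑ v ∈ W, L ^ 600 := Finset.sum_le_sum (fun v _ => hΔ v)
          _ = W.card * L ^ 600 := by simp
          _ ≤ _ := Nat.mul_le_mul hW (Lp 600)
      calc 2 * ∑ v ∈ W, dg H univ v ≤ 2 ^ 1 * (2 ^ (a ^ 40) * 2 ^ (600 * a)) := by omega
        _ = 2 ^ (1 + (a ^ 40 + 600 * a)) := by rw [pow_add, pow_add]
        _ < 2 ^ (10 * a ^ 40) := Nat.pow_lt_pow_right (by norm_num) (by omega)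
        _ ≤ Fintype.card V := hn40
        _ ≤ _ := Nat.le_mul_of_pos_left _ (by omega)
  have hS : StepP H w A β (3 * L ^ 5) := by
    refine sparse_step (j := j) (ω := ω) (d := D / 2 / 2) hχ hE hLE hmin hΔ hrob (by omega) hMw hDβ h12w (by omega) ?_ (by omega)
      ?_ hjn h4β hTR
    · have e1 : w * (L ^ 600 + 1) ^ Tt j ≤ 2 ^ (a ^ 10 + 601 * a ^ 38) := by
        rw [pow_add]; exact Nat.mul_le_mul_left _ hP2
      have e2 := e1.trans (p2 (show _ ≤ a ^ 39 by omega))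
      have e3 : β ≤ 2 ^ (a ^ 39) := p2 (by omega)
      have e4 : 2 ^ (a ^ 39 + 2) ≤ ω := p2 (by omega)
      have e5 : 1 ≤ 2 ^ (a ^ 39) := Nat.one_le_two_pow
      rw [pow_add] at e4
      omega
    · intro i hi t ht
      have := ob_main hkD ht
      refine le_trans (Nat.mul_le_mul_left _ ?_) this
      nlinarith
  have hw1' : 2 * k * (A + 1) + w1 ≤ 2 ^ (281 * a) := by
    have e1 : k ≤ L ^ 250 := hkD'.trans hDL
    have e2 : A + 1 ≤ L ^ 6 := by
      have : L ^ 6 = L * L ^ 5 := by ring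
      nlinarith
    have e3 : 2 * k * (A + 1) ≤ 2 * L ^ 250 * L ^ 6 := by gcongr
    have e4 : 2 * L ^ 250 * L ^ 6 = 2 * L ^ 256 := by ring
    have e5 := pw hL6 (show 256 < 280 by norm_num)
    have e6 := pw hL6 (show 280 < 281 by norm_num)
    have e7 := Lp 281
    omega
  obtain ⟨Po⟩ := sparse_ports (k := k) (w1 := w1) (w := w) (A := A) (β := β) (R := 3 * L ^ 5)
    (d := D / 2 / 2) (ω := ω) (j1 := a ^ 2) (j := j) hχ hLE hmin hΔ hrob (by omega) (by omega) (by
      calc k * (L ^ 600 + 1) ^ Tt j * (L ^ 600 + 1) ^ Tt j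
          ≤ 2 ^ (250 * a) * 2 ^ (601 * a ^ 38) * 2 ^ (601 * a ^ 38) := by gcongr
        _ = 2 ^ (250 * a + 601 * a ^ 38 + 601 * a ^ 38) := by rw [pow_add, pow_add]
        _ ≤ ω := p2 (by omega)) (by
      have e1 : k * (L ^ 600 + 1) ^ Tt (a ^ 2) ≤ 2 ^ (250 * a + 601 * a ^ 8) := by
        rw [pow_add]; exact Nat.mul_le_mul hk250 hP1
      have e2 := e1.trans (p2 (show _ ≤ a ^ 9 by omega))
      have e3 : w1 ≤ 2 ^ (a ^ 9) := (Lp 280).trans (p2 (by omega))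
      have e4 : 2 ^ (a ^ 9 + 1) ≤ w := p2 (by omega)
      rw [pow_add] at e4
      omega) (by omega) (by
      intro i hi t ht
      have := ob_main hkD ht
      refine le_trans (Nat.mul_le_mul_left _ ?_) this
      gcongr
      omega) (by
      intro i hi hi'
      calc 128 * (i + 4) ^ 2 * (2 * k * (A + 1) + w1) ≤ 128 * (i + 4) ^ 2 * 2 ^ (281 * a) :=
            Nat.mul_le_mul_left _ hw1'
        _ ≤ 2 ^ i := ob_far ha hi'
        _ ≤ _ := Nat.le_mul_of_pos_right _ (by omega)) hjn h4β hTR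
  refine ⟨_, assembly (k := k) hχ hE hMw hDβ h12w (by omega) ⟨6 * L ^ 5, by omega⟩ (by omega) hS Po ?_⟩
  have e2 : A ≤ L ^ 6 := by
    have : L ^ 6 = L * L ^ 5 := by ring
    nlinarith
  have e3 : 1 ≤ A := by omega
  have e4 : k * k + 2 ≤ 3 * L ^ 250 := by
    have := hkk.trans hDL
    have h1 : 1 ≤ k * k := Nat.mul_pos hk1 hk1
    omega
  have e5 : 2 * A * A + 3 * A ≤ 5 * A * A := by nlinarith
  calc (k * k + 2) * ((2 * A * A + 3 * A) * A) ≤ (3 * L ^ 250) * ((5 * A * A) * A) :=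
        Nat.mul_le_mul e4 (Nat.mul_le_mul_right _ e5)
    _ ≤ (3 * L ^ 250) * ((5 * L ^ 6 * L ^ 6) * L ^ 6) :=
        Nat.mul_le_mul_left _ (Nat.mul_le_mul (Nat.mul_le_mul (Nat.mul_le_mul_left _ e2) e2) e2)
    _ = 15 * L ^ 268 := by ring
    _ ≤ L ^ 280 := by
      have := pw hL6 (show 268 < 280 by norm_num)
      omega

end
end BS

set_option linter.unusedSectionVars false
namespace BS
open Finset
section
open Classical
variable {V : Type} [Fintype V]


/-- The weight used to select the expander. -/
noncomputable def ff (D : ℕ) (x : ℕ) : ℝ := 1 + 1 / (1 + Real.log (1 + (x : ℝ) / D))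

lemma ff_log_nonneg (D x : ℕ) : 0 ≤ Real.log (1 + (x : ℝ) / D) :=
  Real.log_nonneg (by have : (0 : ℝ) ≤ (x : ℝ) / D := by positivity
                      linarith)

lemma ff_ge (D x : ℕ) : 1 ≤ ff D x := by
  unfold ff
  have := ff_log_nonneg D x
  have : 0 ≤ 1 / (1 + Real.log (1 + (x : ℝ) / D)) := by positivity
  linarith

lemma ff_le (D x : ℕ) : ff D x ≤ 2 := by
  unfold ff
  have := ff_log_nonneg D x
  have : 1 / (1 + Real.log (1 + (x : ℝ) / D)) ≤ 1 := by
    rw [div_le_one (by linarith)]; linarith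
  linarith

lemma ff_anti (D : ℕ) {x y : ℕ} (h : x ≤ y) : ff D y ≤ ff D x := by
  unfold ff
  have h1 := ff_log_nonneg D x
  have h2 : Real.log (1 + (x : ℝ) / D) ≤ Real.log (1 + (y : ℝ) / D) := by
    apply Real.log_le_log
    · positivity
    · have : (x : ℝ) ≤ y := by exact_mod_cast h
      gcongr
  have : 1 / (1 + Real.log (1 + (y : ℝ) / D)) ≤ 1 / (1 + Real.log (1 + (x : ℝ) / D)) := by
    apply one_div_le_one_div_of_le <;> linarith
  linarith

lemma ff_diff {D m n : ℕ} {r B : ℝ} (hB : 0 ≤ B) (hr1 : 1 ≤ r)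
    (hr : r * (1 + (m : ℝ) / D) ≤ 1 + (n : ℝ) / D)
    (hnB : Real.log (1 + (n : ℝ) / D) ≤ B) :
    1 - 1 / r ≤ (1 + B) ^ 2 * (ff D m - ff D n) := by
  unfold ff
  set x := Real.log (1 + (m : ℝ) / D) with hx
  set y := Real.log (1 + (n : ℝ) / D) with hy
  have hx0 : 0 ≤ x := ff_log_nonneg D m
  have hxy : Real.log r + x ≤ y := by
    rw [hx, hy, ← Real.log_mul (by linarith) (by positivity)]
    apply Real.log_le_log _ hr
    positivity
  have hlr : 1 - 1 / r ≤ Real.log r := by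
    have := Real.one_sub_inv_le_log_of_pos (show 0 < r by linarith)
    rwa [one_div]
  have hl0 : 0 ≤ Real.log r := Real.log_nonneg hr1
  have e : (1 + 1 / (1 + x) - (1 + 1 / (1 + y))) = (y - x) / ((1 + x) * (1 + y)) := by
    have : 1 + x ≠ 0 := by linarith
    have : 1 + y ≠ 0 := by linarith
    field_simp
    ring
  rw [e]
  have hp : 0 < (1 + x) * (1 + y) := by
    apply mul_pos <;> linarith
  have hB2 : (1 + x) * (1 + y) ≤ (1 + B) ^ 2 := by nlinarith
  rw [← mul_div_assoc, le_div_iff₀ hp]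
  have h0 : 0 ≤ 1 - 1 / r := by
    have : 1 / r ≤ 1 := by rw [div_le_one (by linarith)]; exact hr1
    linarith
  nlinarith

lemma es_touch {H : SimpleGraph V} (X : Finset V) :
    es H univ ≤ es H (univ \ X) + es H (X ∪ nbr H X) := by
  have h1 : (univ : Finset V) = X ∪ (univ \ X) := by simp
  have h2 : es H univ = es H X + es H (univ \ X) + 2 * ∑ v ∈ X, dg H (univ \ X) v := by
    conv_lhs => rw [h1]
    exact es_union Finset.disjoint_sdiff
  have h3 := es_union (H := H) (nbr_disj H X)
  have h4 : ∀ v ∈ X, dg H (univ \ X) v ≤ dg H (nbr H X) v := by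
    intro v hv
    apply Finset.card_le_card
    intro y hy
    simp only [mem_filter, mem_sdiff, mem_univ, true_and, mem_nbr] at hy ⊢
    exact ⟨⟨hy.1, v, hv, hy.2⟩, hy.2⟩
  have h5 := Finset.sum_le_sum h4
  omega

section maxf
variable {H : SimpleGraph V} {D : ℕ}

/-- `H` maximises the weighted density among its subgraphs. -/
def MaxF (H : SimpleGraph V) (D : ℕ) : Prop :=
  ∀ T : Finset V, T.Nonempty → (es H T : ℝ) * ff D T.card * Fintype.card V ≤
    es H univ * ff D (Fintype.card V) * T.card

lemma MaxF.sdiff (h : MaxF H D) (X : Finset V) :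
    (es H (univ \ X) : ℝ) * Fintype.card V ≤ es H univ * (Fintype.card V - X.card) := by
  rcases (univ \ X).eq_empty_or_nonempty with h0 | h0
  · have hX : X.card ≤ Fintype.card V := Finset.card_le_univ X
    have : (X.card : ℝ) ≤ Fintype.card V := by exact_mod_cast hX
    rw [h0]
    simp only [es, Finset.sum_empty, Nat.cast_zero, zero_mul]
    apply mul_nonneg (by positivity)
    linarith
  · have h1 := h _ h0
    have hc : ((univ \ X).card : ℝ) = Fintype.card V - X.card := by
      rw [Finset.card_sdiff_of_subset (Finset.subset_univ X), Finset.card_univ,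
        Nat.cast_sub (Finset.card_le_univ X)]
    rw [← hc]
    have h2 := ff_anti D (Finset.card_le_univ (univ \ X))
    have h3 := ff_ge D (Fintype.card V)
    set a := (es H (univ \ X) : ℝ) * Fintype.card V with ha
    have ha0 : 0 ≤ a := by positivity
    have : a * ff D (Fintype.card V) ≤ (es H univ * ((univ \ X).card : ℝ)) * ff D (Fintype.card V) := by
      calc a * ff D (Fintype.card V) ≤ a * ff D (univ \ X).card := by gcongr
        _ ≤ _ := by rw [ha]; linarith
    exact le_of_mul_le_mul_right this (by linarith)

lemma MaxF.key (h : MaxF H D) (hpos : 0 < es H univ) (X : Finset V) (hX : X.Nonempty) :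
    (X.card : ℝ) * (ff D (X ∪ nbr H X).card - ff D (Fintype.card V)) ≤ 2 * (nbr H X).card := by
  have h1 := h.sdiff X
  have h2 := h (X ∪ nbr H X) (hX.mono Finset.subset_union_left)
  have h3 : (es H univ : ℝ) ≤ es H (univ \ X) + es H (X ∪ nbr H X) := by
    exact_mod_cast es_touch (H := H) X
  have hn : (0 : ℝ) < Fintype.card V := by
    have : 0 < Fintype.card V := Fintype.card_pos_iff.2 ⟨hX.choose⟩
    exact_mod_cast this
  have hE : (0 : ℝ) < es H univ := by exact_mod_cast hpos
  have hc : ((X ∪ nbr H X).card : ℝ) = X.card + (nbr H X).card := by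
    rw [Finset.card_union_of_disjoint (nbr_disj H X)]; push_cast; rfl
  set m := (X ∪ nbr H X).card
  set fm := ff D m
  set fn := ff D (Fintype.card V)
  have hfm : 1 ≤ fm := ff_ge D m
  have hfn : fn ≤ 2 := ff_le D _
  have h4 : (es H univ : ℝ) * X.card ≤ es H (X ∪ nbr H X) * Fintype.card V := by nlinarith
  have h5 : (es H univ : ℝ) * (X.card * fm) ≤ es H univ * (fn * m) := by nlinarith
  have h6 := le_of_mul_le_mul_left h5 hE
  rw [hc] at h6
  have : (0 : ℝ) ≤ (nbr H X).card := by positivity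
  nlinarith

lemma MaxF.min_deg (h : MaxF H D) (hes : 2 * D * Fintype.card V ≤ es H univ) (v : V) :
    D ≤ dg H univ v := by
  have h1 := h.sdiff {v}
  have h2 := es_erase (H := H) (mem_univ v)
  have h3 : univ \ {v} = univ.erase v := by ext; simp
  rw [h3] at h1
  have hn : (0 : ℝ) < Fintype.card V := by
    have : 0 < Fintype.card V := Fintype.card_pos_iff.2 ⟨v⟩
    exact_mod_cast this
  have h4 : (es H univ : ℝ) = es H (univ.erase v) + 2 * dg H univ v := by exact_mod_cast h2
  have h5 : (2 : ℝ) * D * Fintype.card V ≤ es H univ := by exact_mod_cast hes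
  simp only [card_singleton, Nat.cast_one] at h1
  have h6 : (D : ℝ) * Fintype.card V ≤ dg H univ v * Fintype.card V := by nlinarith
  exact_mod_cast le_of_mul_le_mul_right h6 hn

lemma log_two_pow_le (i : ℕ) : Real.log (2 ^ i) ≤ i := by
  rw [Real.log_pow]
  have := Real.log_two_lt_d9
  have : (0 : ℝ) ≤ i := by positivity
  nlinarith

lemma MaxF.exp (h : MaxF H D) (hD : 1 ≤ D) (hpos : 0 < es H univ) {L : ℕ} (hL : 100 ≤ L)
    (hn1 : Fintype.card V ≤ D * 2 ^ L) (hn2 : D ≤ Fintype.card V) :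
    Exp H D L (L ^ 3) (L ^ 5) := by
  have hDR : (0 : ℝ) < D := by exact_mod_cast hD
  refine ⟨Nat.one_le_pow _ _ (by omega), ?_, hn1, by omega, ?_⟩
  · have : L ^ 5 = L ^ 3 * L * L := by ring
    rw [this]
    calc 2 * L ^ 3 * L = L ^ 3 * L * 2 := by ring
      _ ≤ _ := Nat.mul_le_mul_left _ (by omega)
  · intro X hX
    rcases X.eq_empty_or_nonempty with h0 | h0
    · simp [h0]
    have hk := h.key hpos X h0
    set m := (X ∪ nbr H X).card with hm
    have hLR : (100 : ℝ) ≤ L := by exact_mod_cast hL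
    have hXR : 4 * (m : ℝ) ≤ 3 * Fintype.card V := by exact_mod_cast hX
    have hdf := ff_diff (D := D) (m := m) (n := Fintype.card V) (r := 8 / 7) (B := L + 1)
      (by linarith) (by norm_num) (by
        have h1 : (D : ℝ) ≤ Fintype.card V := by exact_mod_cast hn2
        have : (8 / 7 * (1 + (m : ℝ) / D)) * D ≤ (1 + (Fintype.card V : ℝ) / D) * D := by
          have e1 : (8 / 7 * (1 + (m : ℝ) / D)) * D = 8 / 7 * (D + m) := by field_simp
          have e2 : (1 + (Fintype.card V : ℝ) / D) * D = D + Fintype.card V := by field_simp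
          rw [e1, e2]; linarith
        exact le_of_mul_le_mul_right this hDR) (by
        refine le_trans (Real.log_le_log (by positivity) ?_) ((log_two_pow_le (L + 1)).trans (by push_cast; linarith))
        have h1 : (Fintype.card V : ℝ) / D ≤ 2 ^ L := by
          rw [div_le_iff₀ hDR]
          have : (Fintype.card V : ℝ) ≤ D * 2 ^ L := by exact_mod_cast hn1
          linarith
        have h2 : (1 : ℝ) ≤ 2 ^ L := one_le_pow₀ (by norm_num)
        rw [pow_succ]; linarith)
    have hx0 : (0 : ℝ) ≤ X.card := by positivity
    have hN0 : (0 : ℝ) ≤ (nbr H X).card := by positivity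
    set df := ff D m - ff D (Fintype.card V)
    have h1 : (X.card : ℝ) * (1 / 8) ≤ (1 + (L + 1 : ℝ)) ^ 2 * (2 * (nbr H X).card) := by
      calc (X.card : ℝ) * (1 / 8) ≤ X.card * ((1 + (L + 1 : ℝ)) ^ 2 * df) := by
            apply mul_le_mul_of_nonneg_left _ hx0
            norm_num at hdf ⊢; linarith
        _ = (1 + (L + 1 : ℝ)) ^ 2 * (X.card * df) := by ring
        _ ≤ _ := by gcongr
    have h2 : 16 * (1 + (L + 1 : ℝ)) ^ 2 ≤ (L : ℝ) ^ 3 := by nlinarith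
    have h3 : (X.card : ℝ) ≤ (L : ℝ) ^ 3 * (nbr H X).card := by nlinarith
    exact_mod_cast h3

lemma MaxF.lexp (h : MaxF H D) (hD : 1 ≤ D) (hpos : 0 < es H univ) : LExp H D := by
  have hDR : (0 : ℝ) < D := by exact_mod_cast hD
  intro i X h1 h2 h3
  rcases X.eq_empty_or_nonempty with h0 | h0
  · simp [h0]
  by_cases hN : X.card ≤ (nbr H X).card
  · nlinarith [Nat.one_le_pow 2 (i + 4) (by omega)]
  have hk := h.key hpos X h0
  have hc : (X ∪ nbr H X).card = X.card + (nbr H X).card :=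
    Finset.card_union_of_disjoint (nbr_disj H X)
  set m := (X ∪ nbr H X).card with hm
  have hf2 := ff_anti D (show 2 * m ≤ Fintype.card V by omega)
  have hm1 : (D : ℝ) ≤ 4 * m := by
    have : D ≤ 4 * m := by omega
    exact_mod_cast this
  have hm2 : (m : ℝ) ≤ 2 * (2 ^ i * D) := by
    have : m ≤ 2 * (2 ^ i * D) := by omega
    exact_mod_cast this
  have hdf := ff_diff (D := D) (m := m) (n := 2 * m) (r := 6 / 5) (B := i + 3)
      (by positivity) (by norm_num) (by
        have : (6 / 5 * (1 + (m : ℝ) / D)) * D ≤ (1 + ((2 * m : ℕ) : ℝ) / D) * D := by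
          have e1 : (6 / 5 * (1 + (m : ℝ) / D)) * D = 6 / 5 * (D + m) := by field_simp
          have e2 : (1 + ((2 * m : ℕ) : ℝ) / D) * D = D + (2 * m : ℕ) := by field_simp
          rw [e1, e2]; push_cast; linarith
        exact le_of_mul_le_mul_right this hDR) (by
        refine le_trans (Real.log_le_log (by positivity) ?_) ((log_two_pow_le (i + 3)).trans (by push_cast; linarith))
        have h1 : ((2 * m : ℕ) : ℝ) / D ≤ 4 * 2 ^ i := by
          rw [div_le_iff₀ hDR]
          push_cast; linarith
        have h2 : (1 : ℝ) ≤ 2 ^ i := one_le_pow₀ (by norm_num)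
        rw [pow_add, show (2 : ℝ) ^ 3 = 8 by norm_num]; linarith)
  have hx0 : (0 : ℝ) ≤ X.card := by positivity
  have hN0 : (0 : ℝ) ≤ (nbr H X).card := by positivity
  have hs0 : (0 : ℝ) ≤ (1 + (i + 3 : ℝ)) ^ 2 := by positivity
  have h5 : (X.card : ℝ) * (1 / 6) ≤ (1 + (i + 3 : ℝ)) ^ 2 * (2 * (nbr H X).card) := by
    calc (X.card : ℝ) * (1 / 6) ≤ X.card * ((1 + (i + 3 : ℝ)) ^ 2 * (ff D m - ff D (2 * m))) := by
          apply mul_le_mul_of_nonneg_left _ hx0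
          norm_num at hdf ⊢; linarith
      _ ≤ X.card * ((1 + (i + 3 : ℝ)) ^ 2 * (ff D m - ff D (Fintype.card V))) := by gcongr
      _ = (1 + (i + 3 : ℝ)) ^ 2 * (X.card * (ff D m - ff D (Fintype.card V))) := by ring
      _ ≤ _ := by gcongr
  have h6 : (X.card : ℝ) ≤ 16 * ((i : ℝ) + 4) ^ 2 * (nbr H X).card := by nlinarith
  exact_mod_cast h6

end maxf

end
end BS

set_option linter.unusedSectionVars false
namespace BS
open Finset
section
open Classical
variable {V : Type} [Fintype V]


lemma ev_pow (c : ℕ) : ∃ N, ∀ n ≥ N, 2 * n ^ c ≤ 2 ^ n := by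
  have h := tendsto_pow_const_div_const_pow_of_one_lt c (show (1 : ℝ) < 2 by norm_num)
  have h2 := (h.eventually (gt_mem_nhds (show (0 : ℝ) < 1 / 2 by norm_num)))
  obtain ⟨N, hN⟩ := Filter.eventually_atTop.1 h2
  refine ⟨N, fun n hn => ?_⟩
  have h3 := hN n hn
  have hp : (0 : ℝ) < 2 ^ n := by positivity
  rw [div_lt_iff₀ hp] at h3
  have : (2 : ℝ) * (n : ℝ) ^ c ≤ 2 ^ n := by linarith
  exact_mod_cast this

lemma exists_L0 : ∃ L0 : ℕ, ∀ L ≥ L0, 10 ^ 6 ≤ L ∧ L ^ 600 ≤ 2 ^ L ∧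
    ∃ a, 10 ^ 6 ≤ a ∧ a ^ 100 ≤ L ∧ L ≤ 2 ^ a := by
  obtain ⟨N1, h1⟩ := ev_pow 600
  obtain ⟨N2, h2⟩ := ev_pow 100
  have hN3 : ∃ N3 : ℕ, N2 ≤ N3 ∧ 10 ^ 6 ≤ N3 := ⟨N2 + 10 ^ 6, by omega, by omega⟩
  obtain ⟨N3, h3, h4⟩ := hN3
  refine ⟨N1 + 2 ^ N3, fun L hL => ?_⟩
  have h5 : N3 < 2 ^ N3 := Nat.lt_two_pow_self
  have h6 := h1 L (by omega)
  refine ⟨by omega, by omega, Nat.log 2 L + 1, ?_, ?_, ?_⟩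
  · have : N3 ≤ Nat.log 2 L := Nat.le_log_of_pow_le (by norm_num) (by omega)
    omega
  · have h7 : N3 ≤ Nat.log 2 L := Nat.le_log_of_pow_le (by norm_num) (by omega)
    have h8 := h2 (Nat.log 2 L + 1) (by omega)
    have h9 : 2 ^ Nat.log 2 L ≤ L := Nat.pow_log_le_self 2 (by omega)
    rw [pow_succ 2] at h8
    omega
  · exact (Nat.lt_pow_succ_log_self (by norm_num) L).le

set_option exponentiation.threshold 1000 in
theorem bip_main : ∃ C0 : ℕ, 1 ≤ C0 ∧ ∀ (U : Type) [Fintype U] (H : SimpleGraph U) (χ : U → Bool) (k D : ℕ),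
    TwoCol H χ → 1 ≤ k → C0 * k * k ≤ D → MaxF H D → 2 * D * Fintype.card U ≤ es H univ →
    (∀ v, dg H univ v ≤ 10 ^ 6 * D ^ 2) → 0 < Fintype.card U → ∃ l, HasTK H k l := by
  obtain ⟨L0, hL0⟩ := exists_L0
  have hPe : ∃ P : ℕ, 2 ^ (L0 + 1) = P ∧ 2 ≤ P := ⟨_, rfl, by
    rw [pow_succ]; have : 1 ≤ 2 ^ L0 := Nat.one_le_two_pow
    omega⟩
  obtain ⟨P, hP, hP2⟩ := hPe
  refine ⟨2 * P ^ 9 + 10 ^ 8, by omega, ?_⟩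
  intro U _ H χ k D hχ hk hD hM hes hΔ hU
  have hkk : k ≤ k * k := Nat.le_mul_self k
  have hkk1 : 1 ≤ k * k := by omega
  have hDe : 2 * P ^ 9 * (k * k) + 10 ^ 8 * (k * k) ≤ D := by
    rw [← Nat.add_mul, ← Nat.mul_assoc]; exact hD
  have hpos : 0 < es H univ := by
    have : 0 < 2 * D * Fintype.card U := Nat.mul_pos (by omega) hU
    omega
  have hmin := hM.min_deg hes
  obtain ⟨v⟩ := Fintype.card_pos_iff.1 hU
  have hDn : D ≤ Fintype.card U := (hmin v).trans ((Finset.card_le_univ _))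
  set n := Fintype.card U with hn
  have hD1 : 1 ≤ D := by omega
  have hlog1 : D * 2 ^ (Nat.log 2 (n / D)) ≤ n := by
    have : 2 ^ Nat.log 2 (n / D) ≤ n / D :=
      Nat.pow_log_le_self 2 (Nat.div_pos hDn hD1).ne'
    calc D * 2 ^ (Nat.log 2 (n / D)) ≤ D * (n / D) := Nat.mul_le_mul_left _ this
      _ ≤ n := Nat.mul_div_le n D
  have hlog2 : n ≤ D * 2 ^ (Nat.log 2 (n / D) + 1) := by
    have h1 : n / D < 2 ^ (Nat.log 2 (n / D) + 1) := Nat.lt_pow_succ_log_self (by norm_num) _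
    have h2 : n < D * (n / D + 1) := by
      have := Nat.lt_mul_div_succ n (show 0 < D by omega)
      exact this
    exact h2.le.trans (Nat.mul_le_mul_left _ h1)
  obtain ⟨L, hLdef⟩ : ∃ L, L = Nat.log 2 (n / D) + 1 := ⟨_, rfl⟩
  rw [← hLdef] at hlog2
  have hlog1' : D * 2 ^ L ≤ 2 * n := by
    rw [hLdef, pow_succ]
    linarith
  rcases Nat.lt_or_ge L L0 with hL | hL
  · -- few vertices: dependent random choice
    refine ⟨1, drc (P := P) hk hP2 univ ?_ ?_ ?_ ?_⟩
    · rw [Finset.card_univ]; omega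
    · rw [Finset.card_univ, ← hn]
      have h1 : 2 ^ L ≤ P := by rw [← hP]; exact Nat.pow_le_pow_right (by norm_num) (by omega)
      have h2 : n ≤ D * P := hlog2.trans (Nat.mul_le_mul_left _ h1)
      calc n * n ≤ D * P * n := Nat.mul_le_mul_right _ h2
        _ ≤ P * (2 * D * n) := by nlinarith [Nat.zero_le (D * P * n)]
        _ ≤ _ := Nat.mul_le_mul_left _ hes
    · rw [← hn]
      calc 2 * k * k * P ^ 9 = 2 * P ^ 9 * (k * k) := by ring
        _ ≤ n := by omega
    · rw [Finset.card_univ, ← hn]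
      have h1 : 2 * P ^ 9 * (k * k) ≤ n := by omega
      have h2 : 4 ≤ P ^ 55 := by
        calc 4 = 2 ^ 2 := by norm_num
          _ ≤ 2 ^ 55 := Nat.pow_le_pow_right (by norm_num) (by norm_num)
          _ ≤ P ^ 55 := Nat.pow_le_pow_left hP2 _
      have h3 : 1 ≤ k ^ 6 := Nat.one_le_pow _ _ hk
      calc 2 * (2 * k * P) ^ 8 = 128 * (k ^ 8 * P ^ 8) * (4 * 1) := by ring
        _ ≤ 128 * (k ^ 8 * P ^ 8) * (P ^ 55 * k ^ 6) :=
            Nat.mul_le_mul_left _ (Nat.mul_le_mul h2 h3)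
        _ = (2 * P ^ 9 * (k * k)) ^ 7 := by ring
        _ ≤ n ^ 7 := Nat.pow_le_pow_left h1 7
  · obtain ⟨hL6, hL600, a, ha6, haL, hLa⟩ := hL0 L hL
    have hE := hM.exp hD1 hpos (L := L) (by omega) hlog2 hDn
    rcases Nat.le_total (L ^ 250) D with hc | hc
    · exact dense_main hχ hk (by omega) hL6 hL600 hc hlog1' hE hes
    · refine sparse_main hχ hk (by omega) (by omega) ha6 haL hLa hc hlog1' hE (hM.lexp hD1 hpos)
        hmin ?_
      intro v
      have h1 : D ^ 2 ≤ (L ^ 250) ^ 2 := Nat.pow_le_pow_left hc 2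
      have h2 := pw hL6 (show 500 < 600 by norm_num)
      have h3 : (L ^ 250) ^ 2 = L ^ 500 := by rw [← pow_mul]
      have := hΔ v
      omega

end
end BS

set_option linter.unusedSectionVars false
namespace BS
open Finset
section
open Classical
variable {V : Type} [Fintype V]


lemma hasTK_hom {U W : Type} {G : SimpleGraph U} {G' : SimpleGraph W} (f : G →g G')
    (hf : Function.Injective f) {k l : ℕ} (h : HasTK G k l) : HasTK G' k l := by
  obtain ⟨S, b, hb, P, hP, hl, hd, -⟩ := h
  refine ⟨_, fun i => f (b i), hf.comp hb, fun i j h => (P i j h).map f, ?_, ?_, ?_, rfl⟩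
  · intro i j h
    exact SimpleGraph.Walk.map_isPath_of_injective hf (hP i j h)
  · intro i j h
    rw [SimpleGraph.Walk.length_map]; exact hl i j h
  · intro i j h i' j' h' hne v hv hv'
    rw [SimpleGraph.Walk.support_map, List.mem_map] at hv hv'
    obtain ⟨x, hx, rfl⟩ := hv
    obtain ⟨y, hy, hxy⟩ := hv'
    have := hf hxy
    subst this
    have h2 := hd i j h i' j' h' hne y hx hy
    exact ⟨h2.1.imp (congrArg f) (congrArg f), h2.2.imp (congrArg f) (congrArg f)⟩

lemma hasTK_comap {U : Type} {G : SimpleGraph V} (e : U ↪ V) {k l : ℕ}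
    (h : HasTK (G.comap e) k l) : HasTK G k l :=
  hasTK_hom (SimpleGraph.Hom.comap e G) e.injective h

lemma hasTK_mono {G G' : SimpleGraph V} (hle : G ≤ G') {k l : ℕ} (h : HasTK G k l) : HasTK G' k l :=
  hasTK_hom (SimpleGraph.Hom.ofLE hle) Function.injective_id h

lemma dg_comap {U : Type} [Fintype U] {G : SimpleGraph V} (e : U ↪ V) (T : Finset U) (v : U) :
    dg (G.comap e) T v = dg G (T.map e) (e v) := by
  unfold dg
  rw [Finset.filter_map, Finset.card_map]
  rfl

lemma es_comap {U : Type} [Fintype U] {G : SimpleGraph V} (e : U ↪ V) (T : Finset U) :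
    es (G.comap e) T = es G (T.map e) := by
  unfold es
  rw [Finset.sum_map]
  exact Finset.sum_congr rfl (fun v _ => dg_comap e T v)

lemma exists_sub (G : SimpleGraph V) (g : ℕ → ℝ) (hV : 0 < Fintype.card V) :
    ∃ (U : Type) (_ : Fintype U) (e : U ↪ V), 0 < Fintype.card U ∧
      (∀ T : Finset U, T.Nonempty → (es (G.comap e) T : ℝ) * g T.card * Fintype.card U ≤
        es (G.comap e) univ * g (Fintype.card U) * T.card) ∧
      (es G univ : ℝ) * g (Fintype.card V) * Fintype.card U ≤
        es (G.comap e) univ * g (Fintype.card U) * Fintype.card V := by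
  obtain ⟨v⟩ := Fintype.card_pos_iff.1 hV
  obtain ⟨S, hS, hmax⟩ := Finset.exists_max_image
    ((univ : Finset (Finset V)).filter (fun S => S.Nonempty))
    (fun S => (es G S : ℝ) * g S.card / S.card) ⟨{v}, by simp⟩
  rw [mem_filter] at hS
  have hSc : 0 < S.card := Finset.card_pos.2 hS.2
  have hSR : (0 : ℝ) < S.card := by exact_mod_cast hSc
  have key : ∀ T : Finset V, T.Nonempty → (es G T : ℝ) * g T.card * S.card ≤
      es G S * g S.card * T.card := by
    intro T hT
    have h1 := hmax T (by simp [hT])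
    have hTR : (0 : ℝ) < T.card := by exact_mod_cast Finset.card_pos.2 hT
    rwa [div_le_div_iff₀ hTR hSR] at h1
  have hu : (univ : Finset S).map (Function.Embedding.subtype _) = S := by
    ext x; simp
  have hcard : Fintype.card S = S.card := Fintype.card_coe S
  refine ⟨S, inferInstance, Function.Embedding.subtype _, by omega, ?_, ?_⟩
  · intro T hT
    rw [es_comap, es_comap, hu, hcard]
    have := key (T.map (Function.Embedding.subtype _)) (by simpa using hT)
    rwa [Finset.card_map] at this
  · rw [es_comap, hu, hcard]
    have := key univ ⟨v, mem_univ v⟩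
    rwa [Finset.card_univ] at this

/-- Keep only the edges crossing a bipartition. -/
def cut (G : SimpleGraph V) (χ : V → Bool) : SimpleGraph V where
  Adj x y := G.Adj x y ∧ χ x ≠ χ y
  symm := ⟨fun _ _ h => ⟨h.1.symm, h.2.symm⟩⟩
  loopless := ⟨fun _ h => h.1.ne rfl⟩

lemma half_count (x y : V) (hxy : x ≠ y) :
    2 * ((univ : Finset (V → Bool)).filter (fun χ => χ x ≠ χ y)).card =
      (univ : Finset (V → Bool)).card := by
  have h1 := Finset.card_filter_add_card_filter_not (s := (univ : Finset (V → Bool)))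
    (fun χ => χ x ≠ χ y)
  have h2 : ((univ : Finset (V → Bool)).filter (fun χ => χ x ≠ χ y)).card =
      ((univ : Finset (V → Bool)).filter (fun χ => ¬ (χ x ≠ χ y))).card := by
    refine Finset.card_bij' (fun χ _ => Function.update χ x (!χ x))
      (fun χ _ => Function.update χ x (!χ x)) ?_ ?_ ?_ ?_
    · intro χ h
      simp only [mem_filter, mem_univ, true_and] at h ⊢
      rw [Function.update_self, Function.update_of_ne hxy.symm]
      revert h; cases χ x <;> cases χ y <;> simp
    · intro χ h
      simp only [mem_filter, mem_univ, true_and] at h ⊢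
      rw [Function.update_self, Function.update_of_ne hxy.symm]
      revert h; cases χ x <;> cases χ y <;> simp
    · intro χ h; simp
    · intro χ h; simp
  omega

lemma es_eq (G : SimpleGraph V) :
    es G univ = ∑ v : V, ∑ y : V, if G.Adj v y then 1 else 0 := by
  unfold es dg
  refine Finset.sum_congr rfl (fun v _ => ?_)
  rw [Finset.card_filter]

lemma exists_cut (G : SimpleGraph V) : ∃ χ : V → Bool, es G univ ≤ 2 * es (cut G χ) univ := by
  have h : ∑ χ : V → Bool, es G univ ≤ ∑ χ : V → Bool, 2 * es (cut G χ) univ := by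
    rw [← Finset.mul_sum]
    simp only [es_eq]
    rw [Finset.sum_comm (s := (univ : Finset (V → Bool))), Finset.sum_comm (s := (univ : Finset (V → Bool))),
      Finset.mul_sum]
    refine Finset.sum_le_sum (fun v _ => ?_)
    rw [Finset.sum_comm (s := (univ : Finset (V → Bool))), Finset.sum_comm (s := (univ : Finset (V → Bool))),
      Finset.mul_sum]
    refine Finset.sum_le_sum (fun y _ => ?_)
    by_cases hvy : G.Adj v y
    · have h1 := half_count v y hvy.ne
      rw [Finset.card_filter] at h1
      simp only [hvy, if_true, cut, true_and]
      rw [h1]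
      simp
    · simp [hvy]
  obtain ⟨χ, -, hχ⟩ := Finset.exists_le_of_sum_le (Finset.univ_nonempty) h
  exact ⟨χ, hχ⟩

lemma doubling {G : SimpleGraph V} {Z : Finset V} {A : SimpleGraph Z} {m : Sym2 Z → V}
    (hm1 : ∀ e ∈ A.edgeSet, m e ∉ Z) (hm2 : ∀ x y, A.Adj x y → G.Adj x (m s(x, y)))
    (hinj : Set.InjOn m A.edgeSet) {k l : ℕ} (h : HasTK A k l) : HasTK G k (2 * l + 1) := by
  have dbl : ∀ (x y : Z) (p : A.Walk x y), p.IsPath → ∃ q : G.Walk x y, q.IsPath ∧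
      q.length = 2 * p.length ∧
      ∀ v ∈ q.support, (∃ z ∈ p.support, v = z) ∨ ∃ e ∈ p.edges, v = m e := by
    intro x y p
    induction p with
    | nil => intro _; exact ⟨SimpleGraph.Walk.nil, by simp, by simp, by simp⟩
    | @cons x y z hxy p ih =>
      intro hp
      rw [SimpleGraph.Walk.cons_isPath_iff] at hp
      obtain ⟨q, hq, hlen, hsup⟩ := ih hp.1
      have hadj2 : G.Adj (m s(x, y)) y := by
        have := hm2 y x hxy.symm
        rw [Sym2.eq_swap] at this
        exact this.symm
      have hmZ := hm1 _ ((SimpleGraph.mem_edgeSet A).2 hxy)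
      have hmq : m s(x, y) ∉ q.support := by
        intro hmem
        rcases hsup _ hmem with ⟨z', _, hz'⟩ | ⟨e, he, hee⟩
        · exact hmZ (hz' ▸ z'.2)
        · have := hinj ((SimpleGraph.mem_edgeSet A).2 hxy) (p.edges_subset_edgeSet he) hee
          rw [← this] at he
          exact hp.2 (p.fst_mem_support_of_mem_edges he)
      have hxq : (x : V) ∉ q.support := by
        intro hmem
        rcases hsup _ hmem with ⟨z', hz, hz'⟩ | ⟨e, he, hee⟩
        · exact hp.2 (Subtype.ext hz' ▸ hz)
        · exact hm1 e (p.edges_subset_edgeSet he) (hee ▸ x.2)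
      refine ⟨SimpleGraph.Walk.cons (hm2 x y hxy) (SimpleGraph.Walk.cons hadj2 q), ?_, ?_, ?_⟩
      · rw [SimpleGraph.Walk.cons_isPath_iff, SimpleGraph.Walk.cons_isPath_iff]
        refine ⟨⟨hq, hmq⟩, ?_⟩
        rw [SimpleGraph.Walk.support_cons, List.mem_cons]
        rintro (h | h)
        · exact hmZ (h ▸ x.2)
        · exact hxq h
      · simp only [SimpleGraph.Walk.length_cons, hlen]; ring
      · intro v hv
        simp only [SimpleGraph.Walk.support_cons, List.mem_cons, SimpleGraph.Walk.edges_cons] at hv ⊢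
        rcases hv with h | h | h
        · exact Or.inl ⟨x, Or.inl rfl, h⟩
        · exact Or.inr ⟨_, Or.inl rfl, h⟩
        · rcases hsup v h with ⟨z', hz, hz'⟩ | ⟨e, he, hee⟩
          · exact Or.inl ⟨z', Or.inr hz, hz'⟩
          · exact Or.inr ⟨e, Or.inr he, hee⟩
  obtain ⟨S, b, hb, P, hP, hl, hd, -⟩ := h
  choose Q hQ hQl hQs using fun i j (h : i < j) => dbl _ _ (P i j h) (hP i j h)
  refine ⟨_, fun i => (b i : V), fun i j hij => hb (Subtype.ext hij), Q, hQ, ?_, ?_, rfl⟩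
  · intro i j h
    rw [hQl, hl]; ring
  · intro i j h i' j' h' hne v hv hv'
    rcases hQs i j h v hv with ⟨z, hz, rfl⟩ | ⟨e, he, rfl⟩
    · rcases hQs i' j' h' _ hv' with ⟨z', hz', h1⟩ | ⟨e', he', h1⟩
      · have := Subtype.ext h1
        subst this
        have h2 := hd i j h i' j' h' hne z hz hz'
        exact ⟨h2.1.imp (congrArg _) (congrArg _), h2.2.imp (congrArg _) (congrArg _)⟩
      · exact absurd (h1 ▸ z.2) (hm1 e' ((P i' j' h').edges_subset_edgeSet he'))
    · rcases hQs i' j' h' _ hv' with ⟨z', hz', h1⟩ | ⟨e', he', h1⟩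
      · exact absurd (h1 ▸ z'.2) (hm1 e ((P i j h).edges_subset_edgeSet he))
      · exfalso
        have hee := hinj ((P i j h).edges_subset_edgeSet he) ((P i' j' h').edges_subset_edgeSet he') h1
        subst hee
        induction e using Sym2.ind with
        | _ x y =>
          have hadj : A.Adj x y := (P i j h).adj_of_mem_edges he
          have hx := hd i j h i' j' h' hne x ((P i j h).fst_mem_support_of_mem_edges he)
            ((P i' j' h').fst_mem_support_of_mem_edges he')
          have hy := hd i j h i' j' h' hne y ((P i j h).snd_mem_support_of_mem_edges he)
            ((P i' j' h').snd_mem_support_of_mem_edges he')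
          have hxy := hadj.ne
          have inj : ∀ {s t}, b s = b t → s = t := fun hst => hb hst
          apply hne
          rw [Prod.mk.injEq]
          rcases hx with ⟨hx1 | hx1, hx2 | hx2⟩ <;> rcases hy with ⟨hy1 | hy1, hy2 | hy2⟩ <;>
            first
            | exact absurd (hx1.trans hy1.symm) hxy
            | exact absurd (hx2.trans hy2.symm) hxy
            | exact ⟨inj (hx1.symm.trans hx2), inj (hy1.symm.trans hy2)⟩
            | exact ⟨inj (hy1.symm.trans hy2), inj (hx1.symm.trans hx2)⟩
            | (have e1 := inj (hx1.symm.trans hx2)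
               have e2 := inj (hy1.symm.trans hy2)
               subst e1; subst e2
               exact absurd h' (lt_asymm h))

lemma hasTK_clique {U : Type} {A : SimpleGraph U} {k : ℕ} (b : Fin k → U) (hb : Function.Injective b)
    (h : ∀ i j, i ≠ j → A.Adj (b i) (b j)) : HasTK A k 0 := by
  refine ⟨_, b, hb, fun i j hij => (h i j hij.ne).toWalk, ?_, ?_, ?_, rfl⟩
  · intro i j hij
    exact SimpleGraph.Walk.IsPath.of_adj _
  · intro i j hij; simp
  · intro i j hij i' j' hij' _ v hv hv'
    simp at hv hv'
    exact ⟨hv, hv'⟩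

end
end BS

set_option linter.unusedSectionVars false
namespace BS
open Finset
section
open Classical
variable {V : Type} [Fintype V]


lemma es_edges {U : Type} [Fintype U] (A : SimpleGraph U) : es A univ = 2 * A.edgeFinset.card := by
  rw [← SimpleGraph.sum_degrees_eq_twice_card_edges]
  unfold es dg
  refine Finset.sum_congr rfl (fun v _ => ?_)
  rw [← SimpleGraph.card_neighborFinset_eq_degree]
  congr 1
  ext y; simp

lemma es_ge {U : Type} [Fintype U] (A : SimpleGraph U) (F : Finset (Sym2 U))
    (h : ∀ e ∈ F, e ∈ A.edgeSet) : 2 * F.card ≤ es A univ := by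
  rw [es_edges]
  refine Nat.mul_le_mul_left 2 (Finset.card_le_card ?_)
  intro e he
  rw [SimpleGraph.mem_edgeFinset]
  exact h e he

lemma hub (G : SimpleGraph V) (k : ℕ) (Z : Finset V) (hne : Nonempty V) :
    ∃ A : SimpleGraph Z, (∀ l, HasTK A k l → HasTK G k (2 * l + 1)) ∧
      (HasTK A k 0 ∨
        2 * ((univ : Finset V).filter (fun v => v ∉ Z ∧ k ≤ dg G Z v)).card ≤ es A univ) := by
  set VZ := (univ : Finset V).filter (fun v => v ∉ Z ∧ k ≤ dg G Z v) with hVZ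
  -- valid systems of middle vertices
  let Ok : Finset (Sym2 Z) → Prop := fun F => ∃ m : Sym2 Z → V,
    (∀ e ∈ F, ¬ e.IsDiag) ∧ (∀ e ∈ F, m e ∈ VZ) ∧ (∀ e ∈ F, ∀ x ∈ e, G.Adj (x : V) (m e)) ∧
      Set.InjOn m F
  obtain ⟨F, hF, hFmax⟩ := Finset.exists_max_image
    ((univ : Finset (Finset (Sym2 Z))).filter Ok) Finset.card (by
      obtain ⟨v⟩ := hne
      exact ⟨∅, by rw [mem_filter]; exact ⟨mem_univ _, fun _ => v, by simp, by simp, by simp, by simp⟩⟩)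
  rw [mem_filter] at hF
  obtain ⟨-, m, hF1, hF2, hF3, hF4⟩ := hF
  have hedge : (SimpleGraph.fromEdgeSet (F : Set (Sym2 Z))).edgeSet = F := by
    rw [SimpleGraph.edgeSet_fromEdgeSet]
    ext e
    simp only [Set.mem_sdiff, Finset.mem_coe]
    constructor
    · exact fun h => h.1
    · exact fun h => ⟨h, hF1 e h⟩
  refine ⟨SimpleGraph.fromEdgeSet (F : Set (Sym2 Z)), ?_, ?_⟩
  · intro l hl
    refine doubling (m := m) ?_ ?_ ?_ hl
    · intro e he
      rw [hedge] at he
      have := hF2 e he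
      rw [hVZ, mem_filter] at this
      exact this.2.1
    · intro x y hxy
      rw [SimpleGraph.fromEdgeSet_adj] at hxy
      exact hF3 _ hxy.1 x (by simp)
    · rw [hedge]; exact hF4
  · by_cases hall : VZ.card ≤ F.card
    · right
      refine (Nat.mul_le_mul_left 2 hall).trans (es_ge _ F ?_)
      intro e he
      rw [hedge]
      exact he
    · left
      have h1 : (F.image m).card < VZ.card := lt_of_le_of_lt Finset.card_image_le (by omega)
      obtain ⟨v, hv, hvF⟩ := Finset.exists_mem_notMem_of_card_lt_card h1
      have hv' := hv
      rw [hVZ, mem_filter] at hv'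
      obtain ⟨-, hvZ, hvk⟩ := hv'
      have hclique : ∀ x y : Z, x ≠ y → G.Adj v x → G.Adj v y → s(x, y) ∈ F := by
        intro x y hxy hx hy
        by_contra hnot
        have hupd : ∀ e ∈ F, Function.update m s(x, y) v e = m e := by
          intro e he
          refine Function.update_of_ne ?_ _ _
          rintro rfl
          exact hnot he
        have hok : Ok (insert s(x, y) F) := by
          refine ⟨Function.update m s(x, y) v, ?_, ?_, ?_, ?_⟩
          · intro e he
            rcases mem_insert.1 he with rfl | he
            · simpa using hxy
            · exact hF1 e he
          · intro e he
            rcases mem_insert.1 he with rfl | he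
            · rw [Function.update_self]; exact hv
            · rw [hupd e he]; exact hF2 e he
          · intro e he z hz
            rcases mem_insert.1 he with rfl | he
            · rw [Function.update_self]
              rcases Sym2.mem_iff.1 hz with rfl | rfl
              · exact hx.symm
              · exact hy.symm
            · rw [hupd e he]; exact hF3 e he z hz
          · intro e he e' he' hee
            rw [Finset.mem_coe] at he he'
            rcases mem_insert.1 he with rfl | he <;> rcases mem_insert.1 he' with rfl | he'
            · rfl
            · rw [Function.update_self, hupd e' he'] at hee
              exact absurd (mem_image.2 ⟨e', he', hee.symm⟩) hvF
            · rw [Function.update_self, hupd e he] at hee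
              exact absurd (mem_image.2 ⟨e, he, hee⟩) hvF
            · rw [hupd e he,
                hupd e' he'] at hee
              exact hF4 he he' hee
        have := hFmax _ (mem_filter.2 ⟨mem_univ _, hok⟩)
        rw [Finset.card_insert_of_notMem hnot] at this
        omega
      unfold dg at hvk
      obtain ⟨T, hT, hTk⟩ := Finset.exists_subset_card_eq hvk
      have hTZ : ∀ x ∈ T, x ∈ Z ∧ G.Adj v x := fun x hx => mem_filter.1 (hT hx)
      let b0 := (T.equivFinOfCardEq hTk).symm
      refine hasTK_clique (fun i => (⟨(b0 i : V), (hTZ _ (b0 i).2).1⟩ : Z)) ?_ ?_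
      · intro i j hij
        exact b0.injective (Subtype.ext (Subtype.mk.inj hij))
      · intro i j hij
        have hne : (⟨(b0 i : V), (hTZ _ (b0 i).2).1⟩ : Z) ≠ ⟨(b0 j : V), (hTZ _ (b0 j).2).1⟩ := by
          intro h
          exact hij (b0.injective (Subtype.ext (Subtype.mk.inj h)))
        rw [SimpleGraph.fromEdgeSet_adj]
        exact ⟨hclique _ _ hne (hTZ _ (b0 i).2).2 (hTZ _ (b0 j).2).2, hne⟩

end
end BS

set_option linter.unusedSectionVars false
namespace BS
open Finset
section
open Classical
variable {V : Type} [Fintype V]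


lemma es_empty (G : SimpleGraph V) : es G ∅ = 0 := by simp [es]

/-- The case where few edges touch the vertices of large degree. -/
lemma low_case {C0 : ℕ} (hC0 : ∀ (U : Type) [Fintype U] (H : SimpleGraph U) (χ : U → Bool) (k D : ℕ),
      TwoCol H χ → 1 ≤ k → C0 * k * k ≤ D → MaxF H D → 2 * D * Fintype.card U ≤ es H univ →
      (∀ v, dg H univ v ≤ 10 ^ 6 * D ^ 2) → 0 < Fintype.card U → ∃ l, HasTK H k l)
    {G : SimpleGraph V} {k d : ℕ} (hk : 1 ≤ k) (hkd : 64 * C0 * k * k ≤ d) (hd : 16 ≤ d)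
    (hV : 0 < Fintype.card V) (hE : d * Fintype.card V ≤ es G univ)
    (Z : Finset V) (hZ : ∀ v ∉ Z, dg G univ v ≤ 64 * d ^ 2)
    (hlow : 4 * ∑ v ∈ Z, dg G univ v < d * Fintype.card V) : ∃ l, HasTK G k l := by
  have hu : (univ : Finset V) = Z ∪ (univ \ Z) := by simp
  have h1 : es G univ = es G Z + es G (univ \ Z) + 2 * ∑ v ∈ Z, dg G (univ \ Z) v := by
    conv_lhs => rw [hu]
    exact es_union Finset.disjoint_sdiff
  have h2 : ∑ v ∈ Z, dg G univ v = es G Z + ∑ v ∈ Z, dg G (univ \ Z) v := by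
    unfold es
    rw [← Finset.sum_add_distrib]
    refine Finset.sum_congr rfl (fun v _ => ?_)
    rw [← dg_union Finset.disjoint_sdiff, ← hu]
  have h3 : d * Fintype.card V ≤ 2 * es G (univ \ Z) := by omega
  let e2 : (univ \ Z : Finset V) ↪ V := Function.Embedding.subtype _
  have hmap : (univ : Finset (univ \ Z : Finset V)).map e2 = univ \ Z := by
    ext x; simp [e2]
  have hes2 : es (G.comap e2) univ = es G (univ \ Z) := by rw [es_comap, hmap]
  obtain ⟨χ, hχ⟩ := exists_cut (G.comap e2)
  have hc2 : Fintype.card (univ \ Z : Finset V) ≤ Fintype.card V :=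
    Fintype.card_le_of_embedding e2
  have hdV : 0 < d * Fintype.card V := Nat.mul_pos (by omega) hV
  have hpos2 : 0 < Fintype.card (univ \ Z : Finset V) := by
    rw [Fintype.card_coe]
    rcases Finset.eq_empty_or_nonempty (univ \ Z) with h | h
    · rw [h, es_empty] at h3
      omega
    · exact Finset.card_pos.2 h
  obtain ⟨U, iU, e3, hU, hmax, hge⟩ := exists_sub (cut (G.comap e2) χ) (ff (d / 16)) hpos2
  set H := (cut (G.comap e2) χ).comap e3 with hH
  have hesH : d * Fintype.card U ≤ 8 * es H univ := by
    have f1 := ff_ge (d / 16) (Fintype.card (univ \ Z : Finset V))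
    have f2 := ff_le (d / 16) (Fintype.card U)
    have g1 : (d : ℝ) * Fintype.card (univ \ Z : Finset V) ≤ 4 * es (cut (G.comap e2) χ) univ := by
      have := Nat.mul_le_mul_left d hc2
      have : d * Fintype.card (univ \ Z : Finset V) ≤ 4 * es (cut (G.comap e2) χ) univ := by omega
      exact_mod_cast this
    have p2 : (0 : ℝ) < Fintype.card (univ \ Z : Finset V) := by exact_mod_cast hpos2
    have p3 : (0 : ℝ) < Fintype.card U := by exact_mod_cast hU
    set c : ℝ := (es (cut (G.comap e2) χ) univ : ℝ)
    set n2 : ℝ := (Fintype.card (univ \ Z : Finset V) : ℝ)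
    have hc0 : 0 ≤ c := by positivity
    have hh0 : (0 : ℝ) ≤ es H univ := by positivity
    have s1 : c * Fintype.card U ≤ 2 * es H univ * n2 := by
      calc c * Fintype.card U ≤ c * ff (d / 16) (Fintype.card (univ \ Z : Finset V)) * Fintype.card U := by
            apply mul_le_mul_of_nonneg_right _ p3.le
            nlinarith
        _ ≤ es H univ * ff (d / 16) (Fintype.card U) * n2 := hge
        _ ≤ es H univ * 2 * n2 := by gcongr
        _ = _ := by ring
    have s2 : ((d : ℝ) * Fintype.card U) * n2 ≤ (8 * es H univ) * n2 := by nlinarith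
    have s3 := le_of_mul_le_mul_right s2 p2
    exact_mod_cast s3
  obtain ⟨l, hl⟩ := hC0 U H (fun x => χ (e3 x)) k (d / 16) (fun x y hxy => hxy.2) hk (by
      rw [Nat.le_div_iff_mul_le (by norm_num)]
      nlinarith [Nat.zero_le (C0 * k * k)]) hmax (by
      have : 16 * (d / 16) * Fintype.card U ≤ d * Fintype.card U := by
        apply Nat.mul_le_mul_right; omega
      nlinarith) (by
      intro v
      have t1 : dg H univ v ≤ dg (cut (G.comap e2) χ) univ (e3 v) := by
        rw [hH, dg_comap]; exact dg_mono (Finset.subset_univ _) _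
      have t2 : dg (cut (G.comap e2) χ) univ (e3 v) ≤ dg (G.comap e2) univ (e3 v) := by
        apply Finset.card_le_card
        intro y hy
        rw [mem_filter] at hy ⊢
        exact ⟨hy.1, hy.2.1⟩
      have t3 : dg (G.comap e2) univ (e3 v) ≤ dg G univ (e2 (e3 v)) := by
        rw [dg_comap]; exact dg_mono (Finset.subset_univ _) _
      have t4 := hZ (e2 (e3 v)) (by
        have := (e3 v).2
        rw [mem_sdiff] at this
        exact this.2)
      have t5 : d ≤ 31 * (d / 16) := by omega
      have t6 : d ^ 2 ≤ (31 * (d / 16)) ^ 2 := Nat.pow_le_pow_left t5 2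
      have t7 : (31 * (d / 16)) ^ 2 = 961 * (d / 16) ^ 2 := by ring
      omega) hU
  refine ⟨l, hasTK_comap e2 (hasTK_mono ?_ (hasTK_comap e3 hl))⟩
  intro x y hxy
  exact hxy.1

theorem main_tk : ∃ C : ℕ, 1 ≤ C ∧ ∀ (N : ℕ) (V : Type) [Fintype V] (G : SimpleGraph V) (k : ℕ),
    Fintype.card V ≤ N → 1 ≤ k → 0 < Fintype.card V → C * k * k * Fintype.card V ≤ es G univ →
    ∃ l, HasTK G k l := by
  obtain ⟨C0, hC01, hC0⟩ := bip_main
  refine ⟨64 * C0, by omega, ?_⟩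
  intro N
  induction N with
  | zero => intro V _ G k h1 _ h2; omega
  | succ N ih =>
    intro V _ G' k hN hk hV hE'
    obtain ⟨U, iU, e, hU, hmax, hge⟩ := exists_sub G' (fun _ => 1) hV
    have hUV : Fintype.card U ≤ Fintype.card V := Fintype.card_le_of_embedding e
    set G := G'.comap e with hG
    set n := Fintype.card U with hn
    suffices h : ∃ l, HasTK G k l by
      obtain ⟨l, hl⟩ := h
      exact ⟨l, hasTK_comap e hl⟩
    have hmax' : ∀ T : Finset U, es G T * n ≤ es G univ * T.card := by
      intro T
      rcases T.eq_empty_or_nonempty with h | h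
      · rw [h, es_empty]; simp
      · have := hmax T h
        simp only [mul_one] at this
        exact_mod_cast this
    have hE : 64 * C0 * k * k * n ≤ es G univ := by
      simp only [mul_one] at hge
      have h1 : es G' univ * n ≤ es G univ * Fintype.card V := by exact_mod_cast hge
      have h2 : (64 * C0 * k * k * n) * Fintype.card V ≤ es G univ * Fintype.card V := by
        refine le_trans ?_ h1
        calc (64 * C0 * k * k * n) * Fintype.card V = (64 * C0 * k * k * Fintype.card V) * n := by ring
          _ ≤ _ := Nat.mul_le_mul_right _ hE'
      exact Nat.le_of_mul_le_mul_right h2 hV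
    obtain ⟨d, hd⟩ : ∃ d, d = es G univ / n := ⟨_, rfl⟩
    have hd1 : 64 * C0 * k * k ≤ d := by
      rw [hd, Nat.le_div_iff_mul_le hU]; exact hE
    have hdn : d * n ≤ es G univ := by rw [hd]; exact Nat.div_mul_le_self _ _
    have hdn2 : es G univ < (d + 1) * n := by
      rw [hd, mul_comm]; exact Nat.lt_mul_div_succ _ hU
    have hkk : k ≤ k * k := Nat.le_mul_self k
    have h64 : 64 * k ≤ d := by
      have : k * k ≤ C0 * (k * k) := Nat.le_mul_of_pos_left _ hC01
      have e1 : 64 * C0 * k * k = 64 * (C0 * (k * k)) := by ring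
      omega
    have hT : ∀ T : Finset U, es G T ≤ 2 * d * T.card := by
      intro T
      have h1 : es G T * n ≤ ((d + 1) * T.card) * n := by
        calc es G T * n ≤ es G univ * T.card := hmax' T
          _ ≤ ((d + 1) * n) * T.card := Nat.mul_le_mul_right _ hdn2.le
          _ = _ := by ring
      refine (Nat.le_of_mul_le_mul_right h1 hU).trans (Nat.mul_le_mul_right _ (by omega))
    set Z := (univ : Finset U).filter (fun v => 64 * d ^ 2 ≤ dg G univ v) with hZ
    by_cases hlow : 4 * ∑ v ∈ Z, dg G univ v < d * n
    · refine low_case hC0 hk hd1 (by omega) hU hdn Z ?_ hlow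
      intro v hv
      by_contra hc
      exact hv (by rw [hZ, mem_filter]; exact ⟨mem_univ _, by omega⟩)
    · have hZ1 : 64 * d ^ 2 * Z.card ≤ es G univ := by
        calc 64 * d ^ 2 * Z.card = ∑ v ∈ Z, 64 * d ^ 2 := by simp [mul_comm]
          _ ≤ ∑ v ∈ Z, dg G univ v := Finset.sum_le_sum (fun v hv => (mem_filter.1 hv).2)
          _ ≤ es G univ := Finset.sum_le_sum_of_subset (Finset.subset_univ Z)
      have hZ2 : 32 * d * Z.card ≤ n := by
        have h1 : (32 * d * Z.card) * (2 * d) ≤ n * (2 * d) := by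
          calc (32 * d * Z.card) * (2 * d) = 64 * d ^ 2 * Z.card := by ring
            _ ≤ es G univ := hZ1
            _ ≤ (d + 1) * n := hdn2.le
            _ ≤ (2 * d) * n := Nat.mul_le_mul_right _ (by omega)
            _ = _ := by ring
        exact Nat.le_of_mul_le_mul_right h1 (by omega)
      obtain ⟨A, hA1, hA2⟩ := hub G k Z (Fintype.card_pos_iff.1 hU)
      rcases hA2 with h0 | hA2
      · exact ⟨_, hA1 0 h0⟩
      set VZ := (univ : Finset U).filter (fun v => v ∉ Z ∧ k ≤ dg G Z v) with hVZ
      have hsum : ∑ v ∈ Z, dg G univ v ≤ es G (Z ∪ VZ) + k * n := by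
        rw [dg_comm]
        calc ∑ v : U, dg G Z v ≤ ∑ v : U, ((if v ∈ Z ∪ VZ then dg G (Z ∪ VZ) v else 0) + k) := by
              refine Finset.sum_le_sum (fun v _ => ?_)
              split_ifs with hv
              · have := dg_mono (H := G) (Finset.subset_union_left (s₁ := Z) (s₂ := VZ)) v
                omega
              · by_contra hc
                apply hv
                by_cases hvZ : v ∈ Z
                · exact mem_union_left _ hvZ
                · exact mem_union_right _ (mem_filter.2 ⟨mem_univ _, hvZ, by omega⟩)
          _ = es G (Z ∪ VZ) + k * n := by
              have hf : (univ : Finset U).filter (fun v => v ∈ Z ∪ VZ) = Z ∪ VZ := by ext; simp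
              rw [Finset.sum_add_distrib, ← Finset.sum_filter, hf]
              simp [es, mul_comm, hn]
      have h5 := hT (Z ∪ VZ)
      have h6 : (Z ∪ VZ).card ≤ Z.card + VZ.card := Finset.card_union_le _ _
      have h7 := Nat.mul_le_mul_left (2 * d) h6
      have hVZn : n ≤ 16 * VZ.card := by
        have a1 : 64 * k * n ≤ d * n := Nat.mul_le_mul_right _ h64
        have a2 : n ≤ d * n := Nat.le_mul_of_pos_left _ (by omega)
        have a3 : d * n ≤ 4 * (2 * d * (Z.card + VZ.card) + k * n) := by omega
        have a4 : d * n ≤ d * (16 * VZ.card) := by nlinarith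
        exact Nat.le_of_mul_le_mul_left a4 (by omega)
      have hA3 : 4 * d * Z.card ≤ es A univ := by nlinarith
      have hZpos : 0 < Z.card := by
        rcases Z.eq_empty_or_nonempty with h | h
        · rw [h] at hlow
          have : 0 < d * n := Nat.mul_pos (by omega) hU
          simp at hlow
          omega
        · exact Finset.card_pos.2 h
      have hcZ : Fintype.card Z = Z.card := Fintype.card_coe Z
      have hZd : 32 * Z.card ≤ 32 * d * Z.card := Nat.mul_le_mul_right _ (by omega)
      obtain ⟨l, hl⟩ := ih Z A k (by omega) hk (by omega) (by
        rw [hcZ]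
        refine le_trans (Nat.mul_le_mul_right _ ?_) hA3
        omega)
      exact ⟨_, hA1 l hl⟩

end
end BS


namespace BS

lemma avgDeg_es {V : Type} [Fintype V] (G : SimpleGraph V) :
    avgDeg G = (es G Finset.univ : ℝ) / Fintype.card V := by
  unfold avgDeg
  rw [Nat.card_eq_fintype_card, finsum_eq_sum_of_fintype]
  congr 1
  unfold es dg
  push_cast
  refine Finset.sum_congr rfl (fun v _ => ?_)
  congr 1
  rw [← Set.ncard_coe_finset]
  congr 1
  ext y
  simp

lemma copies {V : Type} {G : SimpleGraph V} {t k l : ℕ} (h : HasTK G (t * k) l) :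
    ∃ S : Fin t → Set V, (∀ s, IsTK G k l (S s)) ∧ (∀ s s', s ≠ s' → Disjoint (S s) (S s')) := by
  obtain ⟨-, b, hb, P, hP, hl, hd, -⟩ := h
  let ix : Fin t → Fin k → Fin (t * k) := fun s i => finProdFinEquiv (s, i)
  have hinj : ∀ s i s' i', ix s i = ix s' i' → s = s' ∧ i = i' := by
    intro s i s' i' h
    have := finProdFinEquiv.injective h
    rwa [Prod.mk.injEq] at this
  have hlt : ∀ s i j, i < j → ix s i < ix s j := by
    intro s i j h
    rw [Fin.lt_def]
    simp only [ix, finProdFinEquiv_apply_val]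
    have : (i : ℕ) < j := h
    omega
  refine ⟨fun s => {v | ∃ (i j : Fin k) (h : i < j), v ∈ (P _ _ (hlt s i j h)).support}, ?_, ?_⟩
  · intro s
    refine ⟨fun i => b (ix s i), ?_, fun i j h => P _ _ (hlt s i j h), fun i j h => hP _ _ _,
      fun i j h => hl _ _ _, ?_, rfl⟩
    · intro i j hij
      exact (hinj _ _ _ _ (hb hij)).2
    · intro i j h i' j' h' hne v hv hv'
      refine hd _ _ _ _ _ _ ?_ v hv hv'
      intro heq
      rw [Prod.mk.injEq] at heq
      exact hne (by rw [(hinj _ _ _ _ heq.1).2, (hinj _ _ _ _ heq.2).2])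
  · intro s s' hne
    rw [Set.disjoint_left]
    rintro v ⟨i, j, h, hv⟩ ⟨i', j', h', hv'⟩
    have h1 := hd _ _ _ _ _ _ (by
      intro heq
      rw [Prod.mk.injEq] at heq
      exact hne (hinj _ _ _ _ heq.1).1) v hv hv'
    rcases h1 with ⟨h2 | h2, h3 | h3⟩ <;> exact hne (hinj _ _ _ _ (hb (h2.symm.trans h3))).1

end BS

theorem statement_1 :
    ∃ C : Real, 0 < C ∧
      ∀ t k : Nat, 1 ≤ t → 1 ≤ k →
        ∀ (V : Type) [Fintype V] (G : SimpleGraph V),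
          C * ((t : Real) * (k : Real)) ^ 2 ≤ avgDeg G →
          ∃ (l : Nat) (S : Fin t → Set V),
            (∀ s, IsTK G k l (S s)) ∧
            (∀ s s', s ≠ s' → Disjoint (S s) (S s')) := by
  obtain ⟨C, hC1, hC⟩ := BS.main_tk
  have hCR : (1 : ℝ) ≤ C := by exact_mod_cast hC1
  refine ⟨C, by linarith, ?_⟩
  intro t k ht hk V _ G hG
  rw [BS.avgDeg_es] at hG
  have htR : (1 : ℝ) ≤ t := by exact_mod_cast ht
  have hkR : (1 : ℝ) ≤ k := by exact_mod_cast hk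
  have hpos : (0 : ℝ) < C * ((t : ℝ) * k) ^ 2 := by positivity
  have hV : 0 < Fintype.card V := by
    by_contra h0
    have h1 : Fintype.card V = 0 := by omega
    rw [h1] at hG
    simp at hG
    linarith
  have hVR : (0 : ℝ) < Fintype.card V := by exact_mod_cast hV
  rw [le_div_iff₀ hVR] at hG
  have hE : C * (t * k) * (t * k) * Fintype.card V ≤ BS.es G Finset.univ := by
    have : (C : ℝ) * (t * k) * (t * k) * Fintype.card V ≤ BS.es G Finset.univ := by
      refine le_trans (le_of_eq ?_) hG
      ring
    exact_mod_cast this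
  obtain ⟨l, hl⟩ := hC _ V G (t * k) le_rfl (Nat.mul_pos ht hk) hV hE
  obtain ⟨S, hS⟩ := BS.copies hl
  exact ⟨l, S, hS⟩
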